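/- Let G be a finitely generated subgroup of PL₊(I). Then G is non-soluble if and only if Brin's group B embeds in G (i.e., G contains a subgroup isomorphic to B). -/

import Mathlib

open Set

namespace PLPaper

/-- We model `PL₊(I)` inside the group of bijections of `ℝ` with *opposite*
composition, so that the group acts on `ℝ` on the right:
`x · (g * h) = (x · g) · h`. -/
abbrev PermR : Type := (Equiv.Perm ℝ)ᵐᵒᵖ

/-- The (right) action of `g` on the point `x`. -/
def ap (g : PermR) (x : ℝ) : ℝ := g.unop x

/-- `g` is affine on a neighbourhood of `x`. -/
def IsLocallyAffineAt (g : PermR) (x : ℝ) : Prop :=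
  ∃ m b : ℝ, ∀ᶠ y in nhds x, ap g y = m * y + b

/-- The breakpoints of `g`: points of `(0,1)` where `g` is not locally affine
(equivalently, for a PL map, where the derivative fails to exist). -/
def Breakpoints (g : PermR) : Set ℝ :=
  {x ∈ Ioo (0:ℝ) 1 | ¬ IsLocallyAffineAt g x}

/-- `g` is an orientation-preserving piecewise-linear homeomorphism of `[0,1]`
(extended by the identity to all of `ℝ`), with finitely many breakpoints. -/
def IsPL (g : PermR) : Prop :=
  StrictMono (ap g) ∧ (∀ x ∉ Ioo (0:ℝ) 1, ap g x = x) ∧ (Breakpoints g).Finite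

/-- The support of `g`. -/
def Supp (g : PermR) : Set ℝ := {x | ap g x ≠ x}

/-- `(a,b)` is an orbital of `g`, i.e. a connected component of `Supp g`. -/
def IsOrbital (g : PermR) (a b : ℝ) : Prop :=
  a < b ∧ Ioo a b ⊆ Supp g ∧ a ∉ Supp g ∧ b ∉ Supp g

/-- The support of a subgroup `G`. -/
def GSupp (G : Subgroup PermR) : Set ℝ := ⋃ g ∈ (G : Set PermR), Supp g

/-- `(a,b)` is an orbital of the group `G`, i.e. a connected component of its support. -/
def IsGroupOrbital (G : Subgroup PermR) (a b : ℝ) : Prop :=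
  a < b ∧ Ioo a b ⊆ GSupp G ∧ a ∉ GSupp G ∧ b ∉ GSupp G

/-- The pair `g, h` carries a transition chain: orbitals `(a,b)` of `g` and
`(c,d)` of `h` with `a < c < b < d`. -/
def ElemsTransitionChain (g h : PermR) : Prop :=
  ∃ a b c d : ℝ, IsOrbital g a b ∧ IsOrbital h c d ∧ a < c ∧ c < b ∧ b < d

/-- The pair `g, h` carries a one-sided overlap: orbitals `(a,b)` of `g` and
`(a,c)` of `h`, or `(a,b)` of `g` and `(c,b)` of `h`, where `a < c < b`. -/
def ElemsOneSidedOverlap (g h : PermR) : Prop :=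
  ∃ a b c : ℝ, a < c ∧ c < b ∧
    ((IsOrbital g a b ∧ IsOrbital h a c) ∨ (IsOrbital g a b ∧ IsOrbital h c b))

def AdmitsTransitionChain (G : Subgroup PermR) : Prop :=
  ∃ g ∈ G, ∃ h ∈ G, ElemsTransitionChain g h

def AdmitsOneSidedOverlap (G : Subgroup PermR) : Prop :=
  ∃ g ∈ G, ∃ h ∈ G, ElemsOneSidedOverlap g h

/-- `G` admits a bad overlap: orbitals `A` of `f ∈ G` and `B` of `g ∈ G` which
intersect, are distinct, and neither closure is contained in the other orbital. -/
def AdmitsBadOverlap (G : Subgroup PermR) : Prop :=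
  ∃ f ∈ G, ∃ g ∈ G, ∃ a b c d : ℝ, IsOrbital f a b ∧ IsOrbital g c d ∧
    (Ioo a b ∩ Ioo c d).Nonempty ∧ Ioo a b ≠ Ioo c d ∧
    ¬ Icc a b ⊆ Ioo c d ∧ ¬ Icc c d ⊆ Ioo a b

/-- A tower: a set of signed orbitals `((a,b), g)` with pairwise nested orbitals,
where equal orbitals force equal signatures. -/
def IsTower (T : Set ((ℝ × ℝ) × PermR)) : Prop :=
  (∀ p ∈ T, IsOrbital p.2 p.1.1 p.1.2) ∧
  (∀ p ∈ T, ∀ q ∈ T,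
      Ioo p.1.1 p.1.2 ⊆ Ioo q.1.1 q.1.2 ∨ Ioo q.1.1 q.1.2 ⊆ Ioo p.1.1 p.1.2) ∧
  (∀ p ∈ T, ∀ q ∈ T, p.1 = q.1 → p.2 = q.2)

/-- `G` admits the tower `T` if `T` is a tower all of whose signatures lie in `G`. -/
def AdmitsTower (G : Subgroup PermR) (T : Set ((ℝ × ℝ) × PermR)) : Prop :=
  IsTower T ∧ ∀ p ∈ T, p.2 ∈ G

def AdmitsInfiniteTower (G : Subgroup PermR) : Prop :=
  ∃ T : Set ((ℝ × ℝ) × PermR), AdmitsTower G T ∧ T.Infinite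

/-- The set of breakpoints of the elements of a set `S`. -/
def BreakSet (S : Set PermR) : Set ℝ := ⋃ g ∈ S, Breakpoints g

/-- The derived length of a group: the least `n` with `derivedSeries G n = ⊥`. -/
noncomputable def derivedLength (G : Type*) [Group G] : ℕ :=
  sInf {n : ℕ | derivedSeries G n = ⊥}

/-- Generators of Brin's group `B`: the `w i` for `i : ℤ` (as `Sum.inl i`)
and the letter `s` (as `Sum.inr ()`). -/
abbrev BrinGen : Type := ℤ ⊕ Unit

def bw (i : ℤ) : FreeGroup BrinGen := FreeGroup.of (Sum.inl i)

def bs : FreeGroup BrinGen := FreeGroup.of (Sum.inr ())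

/-- Conjugation `g^h = h⁻¹ g h`. -/
def fgConj (g h : FreeGroup BrinGen) : FreeGroup BrinGen := h⁻¹ * g * h

/-- Commutator `[g,h] = g⁻¹ h⁻¹ g h`. -/
def fgComm (g h : FreeGroup BrinGen) : FreeGroup BrinGen := g⁻¹ * h⁻¹ * g * h

/-- The relators of Brin's group `B`:
`w_i^s = w_{i+1}` and `[w_i^{w_k^m}, w_j] = 1` for `i < k`, `j < k`, `m ≠ 0`. -/
def BrinRels : Set (FreeGroup BrinGen) :=
  {r | ∃ i : ℤ, r = fgConj (bw i) bs * (bw (i + 1))⁻¹} ∪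
  {r | ∃ i j k m : ℤ, i < k ∧ j < k ∧ m ≠ 0 ∧
        r = fgComm (fgConj (bw i) (bw k ^ m)) (bw j)}

/-- Brin's group `B`, by its presentation. -/
abbrev BrinB : Type := PresentedGroup BrinRels

end PLPaper

open Set
open scoped commutatorElement
namespace PLPaper

/-- Iterated commutator subgroups inside the ambient group. -/
def DS {Γ : Type*} [Group Γ] (T : Subgroup Γ) : ℕ → Subgroup Γ
  | 0 => T
  | n + 1 => ⁅DS T n, DS T n⁆

/-- The commutation relations of Brin's group. -/
def BRel {Γ : Type*} [Group Γ] (w : ℤ → Γ) : Prop :=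
  ∀ i j k m : ℤ, i < k → j < k → m ≠ 0 → Commute ((w k ^ m)⁻¹ * w i * w k ^ m) (w j)

section DSlemmas
variable {Γ : Type*} [Group Γ]

theorem DS_le_self (T : Subgroup Γ) (n : ℕ) : DS T n ≤ T := by
  induction n with
  | zero => exact le_rfl
  | succ n ih =>
    refine Subgroup.commutator_le.2 fun a ha b hb => ?_
    exact T.mul_mem (T.mul_mem (T.mul_mem (ih ha) (ih hb)) (T.inv_mem (ih ha))) (T.inv_mem (ih hb))

theorem DS_succ_le (T : Subgroup Γ) (n : ℕ) : DS T (n+1) ≤ DS T n := by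
  refine Subgroup.commutator_le.2 fun a ha b hb => ?_
  exact mul_mem (mul_mem (mul_mem ha hb) (inv_mem ha)) (inv_mem hb)

theorem DS_anti (T : Subgroup Γ) {m n : ℕ} (h : m ≤ n) : DS T n ≤ DS T m := by
  induction h with
  | refl => exact le_rfl
  | step _ ih => exact (DS_succ_le T _).trans ih

theorem DS_mono {S T : Subgroup Γ} (h : S ≤ T) (n : ℕ) : DS S n ≤ DS T n := by
  induction n with
  | zero => exact h
  | succ n ih => exact Subgroup.commutator_mono ih ih

theorem DS_add (T : Subgroup Γ) (m n : ℕ) : DS (DS T m) n = DS T (m + n) := by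
  induction n with
  | zero => rfl
  | succ n ih => show ⁅DS (DS T m) n, DS (DS T m) n⁆ = ⁅DS T (m+n), DS T (m+n)⁆; rw [ih]

theorem DS_map {Γ' : Type*} [Group Γ'] (f : Γ →* Γ') (T : Subgroup Γ) (n : ℕ) :
    (DS T n).map f = DS (T.map f) n := by
  induction n with
  | zero => rfl
  | succ n ih =>
    show (⁅DS T n, DS T n⁆ : Subgroup Γ).map f = _
    rw [Subgroup.map_commutator, ih]; rfl

theorem DS_conj {T : Subgroup Γ} {h : Γ} (hT : ∀ x ∈ T, h⁻¹ * x * h ∈ T) (n : ℕ) :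
    ∀ x ∈ DS T n, h⁻¹ * x * h ∈ DS T n := by
  intro x hx
  have h1 : (DS T n).map (MulAut.conj h⁻¹).toMonoidHom ≤ DS T n := by
    rw [DS_map]
    apply DS_mono
    rintro _ ⟨y, hy, rfl⟩
    simpa [MulAut.conj_apply] using hT y hy
  have := h1 ⟨x, hx, rfl⟩
  simpa [MulAut.conj_apply] using this

theorem DS_derivedSeries (G : Subgroup Γ) (n : ℕ) :
    (derivedSeries ↥G n).map G.subtype = DS G n := by
  induction n with
  | zero => simp [DS, ← MonoidHom.range_eq_map]
  | succ n ih => rw [derivedSeries_succ, Subgroup.map_commutator, ih]; rfl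

theorem solvable_of_DS (G : Subgroup Γ) (n : ℕ) (h : DS G n = ⊥) : IsSolvable ↥G := by
  refine ⟨⟨n, ?_⟩⟩
  have := DS_derivedSeries G n
  rw [h] at this
  exact (Subgroup.map_eq_bot_iff_of_injective _ G.subtype_injective).1 this

theorem BRel_x_mem {w : ℤ → Γ} (hw : BRel w) (T : Subgroup Γ) (hT : ∀ i ≤ 0, w i ∈ T) (n : ℕ) :
    ∀ i : ℤ, i ≤ -2 * n → (w (i-1))⁻¹ * ((w i)⁻¹ * w (i-1) * w i) ∈ DS T n := by
  induction n with
  | zero =>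
    intro i hi
    have h1 := hT i (by simpa using hi)
    have h2 := hT (i-1) (by have : i ≤ 0 := by simpa using hi
                            linarith)
    exact T.mul_mem (T.inv_mem h2) (T.mul_mem (T.mul_mem (T.inv_mem h1) h2) h1)
  | succ n ih =>
    intro j hj
    push_cast at hj
    have e1 := ih (j+1) (by linarith)
    have e2 := ih (j+2) (by linarith)
    rw [show j + 1 - 1 = j by ring] at e1
    rw [show j + 2 - 1 = j + 1 by ring] at e2
    have hp := hT (j-1) (by nlinarith [(Nat.cast_nonneg n : (0:ℤ) ≤ n)])
    have c1 := hw j j (j+1) 1 (by linarith) (by linarith) one_ne_zero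
    have c1p := hw j (j-1) (j+1) 1 (by linarith) (by linarith) one_ne_zero
    have c3 := hw j j (j+1) 2 (by linarith) (by linarith) two_ne_zero
    have c3p := hw j (j-1) (j+1) 2 (by linarith) (by linarith) two_ne_zero
    have cBa := hw (j+1) j (j+2) 1 (by linarith) (by linarith) one_ne_zero
    have cBc := hw (j+1) (j+1) (j+2) 1 (by linarith) (by linarith) one_ne_zero
    rw [zpow_one] at c1 c1p cBa cBc
    generalize w (j-1) = p at *
    generalize w j = a at *
    generalize w (j+1) = c at *
    generalize w (j+2) = d at *
    set b1 := c⁻¹ * a * c with hb1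
    set b3 := (c ^ (2:ℤ))⁻¹ * a * c ^ (2:ℤ) with hb3
    set B := d⁻¹ * c * d with hB
    have cBb1 : Commute B b1 := (cBc.inv_right.mul_right cBa).mul_right cBc
    have hy : ⁅(a⁻¹ * b1)⁻¹, c⁻¹ * B⁆ = a * (b1⁻¹ * b1⁻¹ * b3) := by
      have t1 : (c⁻¹ * B) * (a⁻¹ * b1) * (c⁻¹ * B)⁻¹ = b1⁻¹ * b3 := by
        have : B * (a⁻¹ * b1) = (a⁻¹ * b1) * B := (cBa.inv_right.mul_right cBb1).eq
        calc (c⁻¹ * B) * (a⁻¹ * b1) * (c⁻¹ * B)⁻¹ = c⁻¹ * (B * (a⁻¹ * b1)) * B⁻¹ * c := by group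
          _ = c⁻¹ * (a⁻¹ * b1) * c := by rw [this]; group
          _ = b1⁻¹ * b3 := by rw [hb1, hb3, zpow_two]; group
      calc ⁅(a⁻¹ * b1)⁻¹, c⁻¹ * B⁆ = (a⁻¹ * b1)⁻¹ * ((c⁻¹ * B) * (a⁻¹ * b1) * (c⁻¹ * B)⁻¹) := by
            rw [commutatorElement_def]; group
        _ = b1⁻¹ * a * (b1⁻¹ * b3) := by rw [t1]; group
        _ = a * b1⁻¹ * (b1⁻¹ * b3) := by rw [c1.inv_left.eq]
        _ = _ := by group
    have hmem : a * (b1⁻¹ * b1⁻¹ * b3) ∈ DS T (n+1) := by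
      rw [← hy]
      exact Subgroup.commutator_mem_commutator (inv_mem e1) e2
    set tl := b1⁻¹ * b1⁻¹ * b3
    have ctp : Commute tl p := (c1p.inv_left.mul_left c1p.inv_left).mul_left c3p
    have cta : Commute tl a := (c1.inv_left.mul_left c1.inv_left).mul_left c3
    have hconj := DS_conj (T := T) (h := p)
      (fun x hx => T.mul_mem (T.mul_mem (T.inv_mem hp) hx) hp) (n+1) _ (inv_mem hmem)
    have := mul_mem hconj hmem
    have e : p⁻¹ * (a * tl)⁻¹ * p * (a * tl) = p⁻¹ * (a⁻¹ * p * a) := by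
      have : tl⁻¹ * (a⁻¹ * p * a) = (a⁻¹ * p * a) * tl⁻¹ :=
        (((cta.inv_right.mul_right ctp).mul_right cta).inv_left).eq
      calc p⁻¹ * (a * tl)⁻¹ * p * (a * tl) = p⁻¹ * (tl⁻¹ * (a⁻¹ * p * a)) * tl := by group
        _ = _ := by rw [this]; group
    rw [← e]; exact this

end DSlemmas
end PLPaper

open Set
open scoped commutatorElement
namespace PLPaper

section Crit
variable {B Γ : Type*} [Group B] [Group Γ]

/-- `Nle W n` is generated by the `W j` with `j ≤ n`. -/
def Nle (W : ℤ → B) (n : ℤ) : Subgroup B := Subgroup.closure (W '' Iic n)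

theorem Nle_mem (W : ℤ → B) {n j : ℤ} (h : j ≤ n) : W j ∈ Nle W n :=
  Subgroup.subset_closure ⟨j, h, rfl⟩

theorem commute_closure_right {x : Γ} {T : Set Γ} (h : ∀ t ∈ T, Commute x t) :
    ∀ y ∈ Subgroup.closure T, Commute x y := by
  intro y hy
  induction hy using Subgroup.closure_induction with
  | mem t ht => exact h t ht
  | one => exact Commute.one_right _
  | mul a b _ _ ha hb => exact ha.mul_right hb
  | inv a _ ha => exact ha.inv_right

theorem commute_closure_closure {S T : Set Γ} (h : ∀ s ∈ S, ∀ t ∈ T, Commute s t) :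
    ∀ x ∈ Subgroup.closure S, ∀ y ∈ Subgroup.closure T, Commute x y := by
  intro x hx y hy
  refine (commute_closure_right (T := S) (x := y) ?_ x hx).symm
  intro s hs
  exact (commute_closure_right (h s hs) y hy).symm

theorem BRel_Nle {W : ℤ → B} (hW : BRel W) {n : ℤ} {K : ℤ} (hK : n < K) {m : ℤ} (hm : m ≠ 0)
    {a b : B} (ha : a ∈ Nle W n) (hb : b ∈ Nle W n) :
    Commute ((W K ^ m)⁻¹ * a * W K ^ m) b := by
  have key : ∀ j ≤ n, ∀ x ∈ Nle W n, Commute ((W K ^ m)⁻¹ * x * W K ^ m) (W j) := by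
    intro j hj x hx
    induction hx using Subgroup.closure_induction with
    | mem t ht =>
      obtain ⟨i, hi, rfl⟩ := ht
      exact hW i j K m (lt_of_le_of_lt hi hK) (lt_of_le_of_lt hj hK) hm
    | one => simp
    | mul u v _ _ hu hv =>
      have := hu.mul_left hv
      rwa [show (W K ^ m)⁻¹ * u * W K ^ m * ((W K ^ m)⁻¹ * v * W K ^ m)
        = (W K ^ m)⁻¹ * (u * v) * W K ^ m by group] at this
    | inv u _ hu =>
      have := hu.inv_left
      rwa [show ((W K ^ m)⁻¹ * u * W K ^ m)⁻¹ = (W K ^ m)⁻¹ * u⁻¹ * W K ^ m by group] at this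
  refine commute_closure_right ?_ b hb
  rintro _ ⟨j, hj, rfl⟩
  exact key j hj a ha

/-- conjugates of `N0` by powers -/
def PF (N0 : Subgroup B) (w : B) (F : Set ℤ) : Subgroup B :=
  Subgroup.closure {x | ∃ m ∈ F, ∃ a ∈ N0, x = (w ^ m)⁻¹ * a * w ^ m}

theorem PF_mono (N0 : Subgroup B) (w : B) {F F' : Set ℤ} (h : F ⊆ F') : PF N0 w F ≤ PF N0 w F' :=
  Subgroup.closure_mono (by rintro x ⟨m, hm, a, ha, e⟩; exact ⟨m, h hm, a, ha, e⟩)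

theorem conj_comm {w a b : B} {m m' : ℤ}
    (h : Commute ((w ^ (m - m'))⁻¹ * a * w ^ (m - m')) b) :
    Commute ((w ^ m)⁻¹ * a * w ^ m) ((w ^ m')⁻¹ * b * w ^ m') := by
  have e : (w ^ m)⁻¹ * a * w ^ m
      = (w ^ m')⁻¹ * ((w ^ (m - m'))⁻¹ * a * w ^ (m - m')) * w ^ m' := by
    rw [zpow_sub]; group
  rw [e]
  generalize (w ^ (m - m'))⁻¹ * a * w ^ (m - m') = c at *
  show _ * _ = _ * _
  calc _ = (w ^ m')⁻¹ * (c * b) * w ^ m' := by group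
    _ = (w ^ m')⁻¹ * (b * c) * w ^ m' := by rw [h.eq]
    _ = _ := by group

theorem inj_Q (φ : B →* Γ) {W : ℤ → B} (hW : BRel W)
    (hnc : ∀ i, ¬ Commute (φ (W i)) (φ (W (i+1)))) (d : ℕ) :
    ∀ n : ℤ, ∀ x ∈ Subgroup.closure (W '' Ioc (n - d) n),
      (∀ j ≤ n, Commute (φ x) (φ (W j))) → x = 1 := by
  induction d with
  | zero => intro n x hx _; simpa using hx
  | succ d ih =>
    intro n x hx hcx
    set N0 := Subgroup.closure (W '' Ioc (n - 1 - d) (n - 1)) with hN0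
    have hN0le : N0 ≤ Nle W (n-1) := Subgroup.closure_mono (image_mono fun j hj => hj.2)
    set w := W n with hw
    have hlt : n - 1 < n := by linarith
    have hcomm : ∀ m : ℤ, m ≠ 0 → ∀ a ∈ Nle W (n-1), ∀ b ∈ Nle W (n-1),
        Commute ((w ^ m)⁻¹ * a * w ^ m) b := by
      intro m hm a ha b hb; rw [hw]; exact BRel_Nle hW hlt hm ha hb
    -- decomposition
    have hdec : ∃ (F : Finset ℤ) (p : B) (e : ℤ), p ∈ PF N0 w F ∧ x = p * w ^ e := by
      clear hcx
      have hgen : ∀ y ∈ W '' Ioc (n - (d+1:ℕ)) n, y ∈ N0 ∨ y = w := by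
        rintro _ ⟨j, hj, rfl⟩
        rcases eq_or_lt_of_le hj.2 with h | h
        · right; rw [h]
        · left; refine Subgroup.subset_closure ⟨j, ⟨?_, by linarith [Int.le_sub_one_of_lt h]⟩, rfl⟩
          have := hj.1; push_cast at this; linarith
      have hmulN0 : ∀ z : B, (∃ (F : Finset ℤ) (p : B) (e : ℤ), p ∈ PF N0 w F ∧ z = p * w ^ e) →
          ∀ a ∈ N0, ∃ (F : Finset ℤ) (p : B) (e : ℤ), p ∈ PF N0 w F ∧ z * a = p * w ^ e := by
        rintro z ⟨F, p, e, hp, rfl⟩ a ha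
        refine ⟨insert (-e) F, p * ((w ^ (-e))⁻¹ * a * w ^ (-e)), e, mul_mem ?_ ?_, ?_⟩
        · exact PF_mono N0 w (by simp) hp
        · exact Subgroup.subset_closure ⟨-e, by simp, a, ha, rfl⟩
        · group
      induction hx using Subgroup.closure_induction_right with
      | one => exact ⟨∅, 1, 0, one_mem _, by simp⟩
      | mul_right z hz y hy h =>
        rcases hgen y hy with h1 | rfl
        · exact hmulN0 z (h) y h1
        · obtain ⟨F, p, e, hp, rfl⟩ := h
          exact ⟨F, p, e + 1, hp, by rw [zpow_add_one]; group⟩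
      | mul_inv_cancel z hz y hy h =>
        rcases hgen y hy with h1 | rfl
        · exact hmulN0 z (h) y⁻¹ (inv_mem h1)
        · obtain ⟨F, p, e, hp, rfl⟩ := h
          exact ⟨F, p, e - 1, hp, by rw [zpow_sub_one]; group⟩
    obtain ⟨F, p, e, hp, rfl⟩ := hdec
    have hnorm : PF N0 w F ≤ Subgroup.normalizer (Nle W (n-1)) := by
      refine (Subgroup.closure_le _).2 ?_
      rintro _ ⟨m, _, a, ha, rfl⟩
      by_cases hm : m = 0
      · subst hm; simpa using Subgroup.le_normalizer (hN0le ha)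
      · refine Subgroup.mem_normalizer_iff.2 fun b => ?_
        have hc : ∀ b ∈ Nle W (n-1), Commute ((w ^ m)⁻¹ * a * w ^ m) b :=
          fun b hb => hcomm m hm a (hN0le ha) b hb
        constructor
        · intro hb; rw [(hc b hb).eq]; simpa [mul_assoc] using hb
        · intro hb
          have := hc _ hb
          have h2 := (this.inv_left).eq
          set q := (w ^ m)⁻¹ * a * w ^ m
          have h3 : b = q * b * q⁻¹ := by
            calc b = q⁻¹ * (q * b * q⁻¹) * q := by group
              _ = _ := by rw [h2]; group
          rw [h3]; exact hb
    by_cases he : e = 0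
    · subst he
      simp only [zpow_zero, mul_one] at hcx ⊢
      clear hnorm hx
      induction F using Finset.induction_on generalizing p with
      | empty =>
        have : PF N0 w ((∅ : Finset ℤ) : Set ℤ) = ⊥ := by
          simp [PF]
        rw [this] at hp; exact hp
      | insert m F hmF ihF =>
        have hrc : ∀ r ∈ PF N0 w F, ∀ b ∈ Nle W (n-1), Commute r ((w ^ m)⁻¹ * b * w ^ m) := by
          intro r hr b hb
          refine (commute_closure_right ?_ r hr).symm
          rintro _ ⟨m', hm', a, ha, rfl⟩
          exact conj_comm (hcomm _ (sub_ne_zero.2 (by rintro rfl; exact hmF hm')) b hb a (hN0le ha))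
        have hd : ∃ a ∈ N0, ∃ r ∈ PF N0 w F, p = ((w ^ m)⁻¹ * a * w ^ m) * r := by
          clear hcx ihF
          induction hp using Subgroup.closure_induction with
          | mem t ht =>
            obtain ⟨m', hm', a, ha, rfl⟩ := ht
            rcases Finset.mem_insert.1 hm' with h | h
            · subst h; exact ⟨a, ha, 1, one_mem _, by simp⟩
            · exact ⟨1, one_mem _, _, Subgroup.subset_closure ⟨m', h, a, ha, rfl⟩, by simp⟩
          | one => exact ⟨1, one_mem _, 1, one_mem _, by simp⟩
          | mul u v _ _ hu hv =>
            obtain ⟨a, ha, r, hr, rfl⟩ := hu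
            obtain ⟨a', ha', r', hr', rfl⟩ := hv
            refine ⟨a * a', mul_mem ha ha', r * r', mul_mem hr hr', ?_⟩
            have := (hrc r hr a' (hN0le ha')).eq
            calc _ = (w ^ m)⁻¹ * a * w ^ m * (r * ((w ^ m)⁻¹ * a' * w ^ m)) * r' := by group
              _ = _ := by rw [this]; group
          | inv u _ hu =>
            obtain ⟨a, ha, r, hr, rfl⟩ := hu
            refine ⟨a⁻¹, inv_mem ha, r⁻¹, inv_mem hr, ?_⟩
            have := (hrc r⁻¹ (inv_mem hr) a⁻¹ (hN0le (inv_mem ha))).eq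
            rw [← this]; group
        obtain ⟨a, ha, r, hr, rfl⟩ := hd
        have ha1 : a = 1 := by
          refine ih (n-1) a ha fun j hj => ?_
          have hWj := Nle_mem W hj
          have hc1 : Commute (φ ((w ^ m)⁻¹ * a * w ^ m * r)) (φ ((w ^ m)⁻¹ * W j * w ^ m)) := by
            rw [map_mul φ _ (w ^ m), map_mul φ _ (W j), map_inv, map_zpow]
            have c1 := hcx n le_rfl
            have c2 := hcx j (by linarith)
            exact (((c1.zpow_right m).inv_right).mul_right c2).mul_right (c1.zpow_right m)
          have hc2 := (hrc r hr _ hWj).map φ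
          have hc3 : Commute (φ ((w ^ m)⁻¹ * a * w ^ m)) (φ ((w ^ m)⁻¹ * W j * w ^ m)) := by
            rw [map_mul φ _ r] at hc1
            have := hc1.mul_left hc2.inv_left
            simpa using this
          simp only [map_mul, map_inv] at hc3
          generalize φ (w ^ m) = v at hc3
          generalize φ (W j) = y at *
          generalize φ a = z at *
          have := hc3.eq
          show z * y = y * z
          calc z * y = v * (v⁻¹ * z * v * (v⁻¹ * y * v)) * v⁻¹ := by group
            _ = _ := by rw [this]; group
        subst ha1
        have : (w ^ m)⁻¹ * 1 * w ^ m * r = r := by group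
        rw [this] at hcx ⊢
        exact ihF r hr hcx
    · exfalso
      have hab : ∀ a ∈ Nle W (n-1), ∀ b ∈ Nle W (n-1), Commute (φ a) (φ b) := by
        intro a ha b hb
        have hpa : p⁻¹ * a * p ∈ Nle W (n-1) :=
          (Subgroup.mem_normalizer_iff''.1 (hnorm hp) a).1 ha
        have h1 := (hcomm e he _ hpa b hb).map φ
        have h2 : Commute (φ (p * w ^ e)) (φ a) := by
          have : ∀ y ∈ Subgroup.closure ((fun j => φ (W j)) '' Iic (n-1)),
              Commute (φ (p * w ^ e)) y := by
            intro y hy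
            refine commute_closure_right ?_ y hy
            rintro _ ⟨j, hj, rfl⟩
            exact hcx j (by have : j ≤ n - 1 := hj
                            linarith)
          refine this _ ?_
          have h3 : φ a ∈ (Nle W (n-1)).map φ := ⟨a, ha, rfl⟩
          rw [Nle, MonoidHom.map_closure, image_image] at h3
          exact h3
        have h3 : φ ((w ^ e)⁻¹ * (p⁻¹ * a * p) * w ^ e) = φ a := by
          have : (w ^ e)⁻¹ * (p⁻¹ * a * p) * w ^ e = (p * w ^ e)⁻¹ * (a * (p * w ^ e)) := by group
          rw [this, map_mul, map_mul, ← h2.eq, map_inv]; group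
        rwa [h3] at h1
      have := hab _ (Nle_mem W (show n - 2 ≤ n - 1 by linarith)) _ (Nle_mem W le_rfl)
      have h5 := hnc (n-2)
      rw [show n - 2 + 1 = n - 1 by ring] at h5
      exact h5 this

theorem mem_closure_range {W : ℤ → B} {y : B} (hy : y ∈ Subgroup.closure (range W)) :
    ∃ n : ℕ, y ∈ Subgroup.closure (W '' Ioc (-(n:ℤ)) n) := by
  have mono : ∀ a b : ℕ, a ≤ b → Subgroup.closure (W '' Ioc (-(a:ℤ)) a) ≤
      Subgroup.closure (W '' Ioc (-(b:ℤ)) b) := fun a b h =>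
    Subgroup.closure_mono (image_mono (Ioc_subset_Ioc (by omega) (by omega)))
  induction hy using Subgroup.closure_induction with
  | mem t ht =>
    obtain ⟨j, rfl⟩ := ht
    exact ⟨j.natAbs + 1, Subgroup.subset_closure ⟨j, ⟨by omega, by omega⟩, rfl⟩⟩
  | one => exact ⟨0, one_mem _⟩
  | mul a b _ _ ha hb =>
    obtain ⟨n, hn⟩ := ha
    obtain ⟨m, hm⟩ := hb
    exact ⟨max n m, mul_mem (mono _ _ (le_max_left _ _) hn) (mono _ _ (le_max_right _ _) hm)⟩
  | inv a _ ha => obtain ⟨n, hn⟩ := ha; exact ⟨n, inv_mem hn⟩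

theorem conj_zpow_shift {W : ℤ → B} {s : B} (hs : ∀ i, s⁻¹ * W i * s = W (i+1)) (k i : ℤ) :
    (s ^ k)⁻¹ * W i * s ^ k = W (i + k) := by
  induction k with
  | zero => simp
  | succ k ih =>
    rw [← add_assoc, ← hs, ← ih, zpow_add_one]; group
  | pred k ih =>
    have h1 : W (i + -↑k) = s⁻¹ * W (i + (-↑k - 1)) * s := by rw [hs]; congr 1; ring
    rw [h1] at ih
    calc (s ^ (-(k:ℤ) - 1))⁻¹ * W i * s ^ (-(k:ℤ) - 1)
        = s * ((s ^ (-(k:ℤ)))⁻¹ * W i * s ^ (-(k:ℤ))) * s⁻¹ := by rw [zpow_sub_one]; group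
      _ = _ := by rw [ih]; group

theorem inj_crit (φ : B →* Γ) {W : ℤ → B} {s : B} (hs : ∀ i, s⁻¹ * W i * s = W (i+1))
    (hgen : Subgroup.closure (range W ∪ {s}) = ⊤) (hW : BRel W)
    (h01 : ¬ Commute (φ (W 0)) (φ (W 1))) : Function.Injective φ := by
  have hnc : ∀ i, ¬ Commute (φ (W i)) (φ (W (i+1))) := by
    intro i hc
    apply h01
    have e0 : W 0 = s ^ i * W i * (s ^ i)⁻¹ := by
      have := conj_zpow_shift hs i 0; rw [zero_add] at this; rw [← this]; group
    have e1 : W 1 = s ^ i * W (i+1) * (s ^ i)⁻¹ := by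
      have := conj_zpow_shift hs i 1; rw [add_comm 1 i] at this; rw [← this]; group
    rw [e0, e1]
    simp only [map_mul, map_inv]
    generalize φ (s ^ i) = v
    have := hc.eq
    show _ * _ = _ * _
    calc _ = v * (φ (W i) * φ (W (i+1))) * v⁻¹ := by group
      _ = _ := by rw [this]; group
  have hconj : ∀ k : ℤ, ∀ y ∈ Subgroup.closure (range W),
      (s ^ k)⁻¹ * y * s ^ k ∈ Subgroup.closure (range W) := by
    intro k y hy
    induction hy using Subgroup.closure_induction with
    | mem t ht =>
      obtain ⟨j, rfl⟩ := ht
      rw [conj_zpow_shift hs]; exact Subgroup.subset_closure ⟨_, rfl⟩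
    | one => simp [one_mem]
    | mul a b _ _ ha hb => convert mul_mem ha hb using 1; group
    | inv a _ ha => convert inv_mem ha using 1; group
  have hform : ∀ x : B, ∃ k : ℤ, ∃ y ∈ Subgroup.closure (range W), x = s ^ k * y := by
    intro x
    have hx : x ∈ Subgroup.closure (range W ∪ {s}) := by rw [hgen]; trivial
    induction hx using Subgroup.closure_induction with
    | mem t ht =>
      rcases ht with ht | ht
      · exact ⟨0, t, Subgroup.subset_closure ht, by simp⟩
      · rw [mem_singleton_iff] at ht; exact ⟨1, 1, one_mem _, by simp [ht]⟩
    | one => exact ⟨0, 1, one_mem _, by simp⟩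
    | mul a b _ _ ha hb =>
      obtain ⟨k, y, hy, rfl⟩ := ha
      obtain ⟨l, z, hz, rfl⟩ := hb
      refine ⟨k + l, ((s ^ l)⁻¹ * y * s ^ l) * z, mul_mem (hconj l y hy) hz, ?_⟩
      rw [zpow_add]; group
    | inv a _ ha =>
      obtain ⟨k, y, hy, rfl⟩ := ha
      refine ⟨-k, _, hconj (-k) _ (inv_mem hy), ?_⟩
      group
  rw [injective_iff_map_eq_one]
  intro x hx
  obtain ⟨k, y, hy, rfl⟩ := hform x
  obtain ⟨n, hn⟩ := mem_closure_range hy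
  by_cases hk : k = 0
  · subst hk
    simp only [zpow_zero, one_mul] at hx ⊢
    refine inj_Q φ hW hnc (2*n) n y ?_ fun j _ => by rw [hx]; exact Commute.one_left _
    convert hn using 4
    push_cast; ring
  · exfalso
    have hyN : y ∈ Nle W n := Subgroup.closure_mono (image_mono fun j hj => hj.2) hn
    have hsk : φ (s ^ k) = (φ y)⁻¹ := by
      rw [map_mul] at hx; exact eq_inv_of_mul_eq_one_left hx
    have hsh : ∀ i, φ (W (i + k)) = φ (y * W i * y⁻¹) := by
      intro i
      rw [← conj_zpow_shift hs k i, map_mul, map_mul, map_inv, hsk]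
      simp
    have hK : ∃ K : ℤ, n < K ∧ ∃ c ∈ Nle W n, φ (W K) = φ c := by
      rcases lt_or_gt_of_ne hk with h | h
      · refine ⟨n - k, by linarith, y⁻¹ * W n * y,
          mul_mem (mul_mem (inv_mem hyN) (Nle_mem W le_rfl)) hyN, ?_⟩
        have := hsh (n - k)
        rw [sub_add_cancel] at this
        rw [map_mul, map_mul, this]; simp; group
      · exact ⟨n + k, by linarith, _, mul_mem (mul_mem hyN (Nle_mem W le_rfl)) (inv_mem hyN), hsh n⟩
    obtain ⟨K, hK, c, hc, hcK⟩ := hK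
    have hab : ∀ a ∈ Nle W n, ∀ b ∈ Nle W n, Commute (φ a) (φ b) := by
      intro a ha b hb
      have h1 := (BRel_Nle hW hK one_ne_zero
        (mul_mem (mul_mem hc ha) (inv_mem hc)) hb).map φ
      rw [zpow_one] at h1
      have : φ ((W K)⁻¹ * (c * a * c⁻¹) * W K) = φ a := by
        simp only [map_mul, map_inv, hcK]; group
      rwa [this] at h1
    have := hab _ (Nle_mem W (show (n:ℤ) - 1 ≤ n by linarith)) _ (Nle_mem W le_rfl)
    have h5 := hnc (n-1)
    rw [sub_add_cancel] at h5
    exact h5 this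
end Crit

/-! model for the group -/
section Model

/-- the model permutation -/
noncomputable def mfun (k e : ℤ) (f : ℤ → ℤ) : ℤ → ℤ :=
  open Classical in if ∀ j > k, f j = 0 then Function.update f k (f k + e) else f

theorem mfun_pos {k e : ℤ} {f : ℤ → ℤ} (h : ∀ j > k, f j = 0) :
    mfun k e f = Function.update f k (f k + e) := if_pos h

theorem mfun_neg {k e : ℤ} {f : ℤ → ℤ} (h : ¬ ∀ j > k, f j = 0) : mfun k e f = f := if_neg h

theorem mfun_add (k e e' : ℤ) (f : ℤ → ℤ) : mfun k e (mfun k e' f) = mfun k (e' + e) f := by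
  by_cases h : ∀ j > k, f j = 0
  · rw [mfun_pos h, mfun_pos h, mfun_pos]
    · simp [add_assoc]
    · intro j hj
      rw [Function.update_of_ne (ne_of_gt hj)]; exact h j hj
  · rw [mfun_neg h, mfun_neg h, mfun_neg h]

theorem mfun_zero (k : ℤ) (f : ℤ → ℤ) : mfun k 0 f = f := by
  by_cases h : ∀ j > k, f j = 0
  · rw [mfun_pos h]; simp
  · rw [mfun_neg h]

noncomputable def mw (k : ℤ) : Equiv.Perm (ℤ → ℤ) where
  toFun := mfun k 1
  invFun := mfun k (-1)
  left_inv f := by rw [mfun_add]; simp [mfun_zero]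
  right_inv f := by rw [mfun_add]; simp [mfun_zero]

theorem mw_zpow (k m : ℤ) (f : ℤ → ℤ) : (mw k ^ m) f = mfun k m f := by
  induction m with
  | zero => simp [mfun_zero]
  | succ m ih =>
    rw [add_comm, zpow_one_add, Equiv.Perm.mul_apply, ih]
    show mfun k 1 _ = _
    rw [mfun_add, add_comm]
  | pred m ih =>
    rw [sub_eq_neg_add, zpow_add, Equiv.Perm.mul_apply, ih, zpow_neg_one]
    show mfun k (-1) _ = _
    rw [mfun_add, add_comm]

def ms : Equiv.Perm (ℤ → ℤ) where
  toFun f := fun j => f (j + 1)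
  invFun f := fun j => f (j - 1)
  left_inv f := by funext j; simp
  right_inv f := by funext j; simp

theorem ms_shift (i : ℤ) : ms⁻¹ * mw i * ms = mw (i+1) := by
  ext1 f
  show ms.symm (mfun i 1 (ms f)) = mfun (i+1) 1 f
  by_cases h : ∀ j > i + 1, f j = 0
  · rw [mfun_pos h, mfun_pos]
    · funext j
      show Function.update (ms f) i (ms f i + 1) (j - 1) = _
      by_cases hj : j = i + 1
      · subst hj; simp [ms]
      · rw [Function.update_of_ne hj, Function.update_of_ne (by omega)]
        simp [ms]
    · intro j hj; exact h _ (by omega)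
  · rw [mfun_neg h, mfun_neg]
    · simp
    · intro h'; apply h; intro j hj
      have := h' (j-1) (by omega)
      simpa [ms] using this

theorem mw_BRel : BRel mw := by
  intro i j k m hi hj hm
  apply Equiv.Perm.Disjoint.commute
  intro f
  by_cases h : ∀ l > j, f l = 0
  · left
    have hk : ∀ l > k, f l = 0 := fun l hl => h l (by omega)
    have e : mfun i 1 (mfun k m f) = mfun k m f := by
      apply mfun_neg
      intro h'
      have := h' k hi
      rw [mfun_pos hk] at this
      simp [h k hj] at this
      exact hm this
    show (mw k ^ m)⁻¹ (mw i ((mw k ^ m) f)) = f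
    rw [mw_zpow]
    show (mw k ^ m)⁻¹ (mfun i 1 _) = f
    rw [e, ← mw_zpow]; simp
  · right; exact mfun_neg h

theorem mw_nc (i : ℤ) : ¬ Commute (mw i) (mw (i+1)) := by
  intro h
  have h1 : (mw i * mw (i+1)) 0 i = (mw (i+1) * mw i) 0 i := by rw [h.eq]
  have e1 : (mw i * mw (i+1)) 0 i = 0 := by
    show mfun i 1 (mfun (i+1) 1 0) i = 0
    rw [mfun_neg, mfun_pos (by simp)]
    · simp
    · rw [mfun_pos (by simp)]
      intro h'
      have := h' (i+1) (by simp)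
      simp at this
  have e2 : (mw (i+1) * mw i) 0 i = 1 := by
    show mfun (i+1) 1 (mfun i 1 0) i = 1
    rw [mfun_pos (k := i) (by simp), mfun_pos]
    · simp
    · intro j hj
      rw [Function.update_of_ne (by omega)]; rfl
  rw [e1, e2] at h1
  exact zero_ne_one h1

end Model

/-- generators of `BrinB` -/
def BW (i : ℤ) : BrinB := PresentedGroup.of (Sum.inl i)
def BS : BrinB := PresentedGroup.of (Sum.inr ())

theorem BS_shift (i : ℤ) : BS⁻¹ * BW i * BS = BW (i+1) := by
  have : PresentedGroup.mk BrinRels (fgConj (bw i) bs * (bw (i + 1))⁻¹) = 1 :=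
    PresentedGroup.one_of_mem (Or.inl ⟨i, rfl⟩)
  rw [map_mul, map_inv, mul_inv_eq_one] at this
  simp only [fgConj, map_mul, map_inv] at this
  exact this

theorem BW_BRel : BRel BW := by
  intro i j k m hi hj hm
  have : PresentedGroup.mk BrinRels (fgComm (fgConj (bw i) (bw k ^ m)) (bw j)) = 1 :=
    PresentedGroup.one_of_mem (Or.inr ⟨i, j, k, m, hi, hj, hm, rfl⟩)
  simp only [fgComm, fgConj, map_mul, map_inv, map_zpow] at this
  change ((BW k ^ m)⁻¹ * BW i * BW k ^ m)⁻¹ * (BW j)⁻¹ * ((BW k ^ m)⁻¹ * BW i * BW k ^ m) * BW j = 1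
    at this
  generalize (BW k ^ m)⁻¹ * BW i * BW k ^ m = x at *
  show x * BW j = BW j * x
  calc x * BW j = BW j * x * (x⁻¹ * (BW j)⁻¹ * x * BW j) := by group
    _ = _ := by rw [this, mul_one]

theorem BW_gen : Subgroup.closure (range BW ∪ {BS}) = ⊤ := by
  rw [← PresentedGroup.closure_range_of BrinRels]
  congr 1
  ext x
  simp only [mem_union, mem_range, mem_singleton_iff, Sum.exists]
  constructor
  · rintro (⟨i, rfl⟩ | rfl)
    · exact Or.inl ⟨i, rfl⟩
    · exact Or.inr ⟨(), rfl⟩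
  · rintro (⟨i, rfl⟩ | ⟨⟨⟩, rfl⟩)
    · exact Or.inl ⟨i, rfl⟩
    · exact Or.inr rfl

/-- universal property -/
theorem exists_hom {Γ : Type*} [Group Γ] {w : ℤ → Γ} {s : Γ} (hs : ∀ i, s⁻¹ * w i * s = w (i+1))
    (hw : BRel w) : ∃ φ : BrinB →* Γ, (∀ i, φ (BW i) = w i) ∧ φ BS = s := by
  have h : ∀ r ∈ BrinRels, FreeGroup.lift (Sum.elim w fun _ => s) r = 1 := by
    rintro r (⟨i, rfl⟩ | ⟨i, j, k, m, hi, hj, hm, rfl⟩)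
    · simp [fgConj, bw, bs, ← hs]
    · simp only [fgComm, fgConj, bw, map_mul, map_inv, map_zpow, FreeGroup.lift_apply_of,
        Sum.elim_inl]
      have := (hw i j k m hi hj hm).eq
      generalize (w k ^ m)⁻¹ * w i * w k ^ m = x at *
      rw [show x⁻¹ * (w j)⁻¹ * x * w j = x⁻¹ * (w j)⁻¹ * (x * w j) by group, this]; group
  exact ⟨PresentedGroup.toGroup h, fun i => by simp [BW], by simp [BS]⟩

theorem exists_embed {Γ : Type*} [Group Γ] {w : ℤ → Γ} {s : Γ} (hs : ∀ i, s⁻¹ * w i * s = w (i+1))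
    (hw : BRel w) (hnc : ¬ Commute (w 0) (w 1)) :
    ∃ φ : BrinB →* Γ, Function.Injective φ := by
  obtain ⟨φ, h1, _⟩ := exists_hom hs hw
  exact ⟨φ, inj_crit φ BS_shift BW_gen BW_BRel (by rw [h1, h1]; exact hnc)⟩

theorem DS_top {Γ : Type*} [Group Γ] (n : ℕ) : DS (⊤ : Subgroup Γ) n = derivedSeries Γ n := by
  induction n with
  | zero => rfl
  | succ n ih => rw [derivedSeries_succ, ← ih]; rfl

theorem Brin_not_solvable : ¬ IsSolvable BrinB := by
  rintro ⟨⟨n, hn⟩⟩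
  rw [← DS_top] at hn
  have h := BRel_x_mem BW_BRel ⊤ (fun _ _ => trivial) n (-2 * n) le_rfl
  rw [hn, Subgroup.mem_bot] at h
  obtain ⟨φ, h1, _⟩ := exists_hom ms_shift mw_BRel
  have h2 := congrArg φ h
  simp only [map_mul, map_inv, h1, map_one] at h2
  have h3 := mw_nc (-2 * n - 1)
  rw [sub_add_cancel] at h3
  apply h3
  generalize mw (-2 * n - 1) = a at *
  generalize mw (-2 * n) = b at *
  show a * b = b * a
  calc a * b = b * a * (a⁻¹ * (b⁻¹ * a * b)) := by group
    _ = _ := by rw [h2, mul_one]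

end PLPaper

open Set
open scoped commutatorElement
namespace PLPaper

theorem ap_one (x : ℝ) : ap 1 x = x := rfl
theorem ap_mul (g h : PermR) (x : ℝ) : ap (g * h) x = ap h (ap g x) := rfl
theorem ap_inv_ap (g : PermR) (x : ℝ) : ap g⁻¹ (ap g x) = x := by
  rw [← ap_mul, mul_inv_cancel, ap_one]
theorem ap_ap_inv (g : PermR) (x : ℝ) : ap g (ap g⁻¹ x) = x := by
  rw [← ap_mul, inv_mul_cancel, ap_one]
theorem ap_ext {g h : PermR} (H : ∀ x, ap g x = ap h x) : g = h := by
  apply MulOpposite.unop_injective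
  ext x; exact H x
theorem ap_inj (g : PermR) {x y : ℝ} (h : ap g x = ap g y) : x = y := by
  have := congrArg (ap g⁻¹) h; rwa [ap_inv_ap, ap_inv_ap] at this
theorem ap_inv_eq {g : PermR} {x y : ℝ} : ap g⁻¹ x = y ↔ x = ap g y := by
  constructor
  · rintro rfl; rw [ap_ap_inv]
  · rintro rfl; rw [ap_inv_ap]
theorem ap_inv_fix {g : PermR} {x : ℝ} (h : ap g x = x) : ap g⁻¹ x = x := by
  rw [ap_inv_eq, h]
theorem ap_conj (h g : PermR) (x : ℝ) : ap (h⁻¹ * g * h) (ap h x) = ap h (ap g x) := by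
  rw [ap_mul, ap_mul, ap_inv_ap]

theorem nSupp {g : PermR} {x : ℝ} : x ∉ Supp g ↔ ap g x = x := by simp [Supp]

section single
variable {x : PermR}

theorem IsPL.lt (hx : IsPL x) {a b : ℝ} : ap x a < ap x b ↔ a < b := hx.1.lt_iff_lt
theorem IsPL.le (hx : IsPL x) {a b : ℝ} : ap x a ≤ ap x b ↔ a ≤ b := hx.1.le_iff_le

theorem IsPL.cont (hx : IsPL x) : Continuous (ap x) :=
  hx.1.monotone.continuous_of_surjective fun y => ⟨ap x⁻¹ y, ap_ap_inv x y⟩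

theorem IsPL.fix_of_le (hx : IsPL x) {y : ℝ} (h : y ≤ 0) : ap x y = y :=
  hx.2.1 y fun h' => absurd h'.1 (not_lt.2 h)
theorem IsPL.fix_of_ge (hx : IsPL x) {y : ℝ} (h : 1 ≤ y) : ap x y = y :=
  hx.2.1 y fun h' => absurd h'.2 (not_lt.2 h)
theorem IsPL.moved (hx : IsPL x) {y : ℝ} (h : ap x y ≠ y) : 0 < y ∧ y < 1 := by
  by_contra hc
  exact h (hx.2.1 y hc)

theorem affine_germ_unique {m b m' b' p : ℝ}
    (h : ∀ᶠ y in nhds p, m * y + b = m' * y + b') : m = m' ∧ b = b' := by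
  obtain ⟨ε, hε, hU⟩ := Metric.eventually_nhds_iff.1 h
  have h1 := hU (y := p) (by simpa using hε)
  have h2 := hU (y := p + ε/2) (by rw [Real.dist_eq]; rw [add_sub_cancel_left, abs_of_pos (by linarith)]; linarith)
  have h3 : (m - m') * (ε/2) = 0 := by nlinarith
  have h4 : m - m' = 0 := by
    rcases mul_eq_zero.1 h3 with h | h
    · exact h
    · linarith
  have h5 : m = m' := by linarith
  subst h5
  exact ⟨rfl, by linarith⟩

theorem affOn_open {u v : ℝ} (huv : u < v) (h : ∀ y ∈ Ioo u v, IsLocallyAffineAt x y) :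
    ∃ m c : ℝ, ∀ y ∈ Ioo u v, ap x y = m * y + c := by
  set P : ℝ → ℝ → Prop := fun y z => ∃ m b : ℝ, (∀ᶠ t in nhds y, ap x t = m * t + b) ∧
    (∀ᶠ t in nhds z, ap x t = m * t + b) with hP
  have hc : ∀ y ∈ Ioo u v, ∀ z ∈ Ioo u v, P y z := by
    intro y hy z hz
    refine (isPreconnected_Ioo (a := u) (b := v)).induction₂ P ?_ ?_ ?_ hy hz
    · intro p hp
      obtain ⟨m, b, hmb⟩ := h p hp
      refine Filter.Eventually.filter_mono nhdsWithin_le_nhds ?_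
      exact hmb.eventually_nhds.mono fun q hq => ⟨m, b, hmb, hq⟩
    · rintro p q r _ _ _ ⟨m, b, h1, h2⟩ ⟨m', b', h3, h4⟩
      obtain ⟨rfl, rfl⟩ := affine_germ_unique (p := q) (by
        filter_upwards [h2, h3] with t e1 e2; rw [← e1, ← e2] : ∀ᶠ y in nhds q, m * y + b = m' * y + b')
      exact ⟨m, b, h1, h4⟩
    · rintro p q _ _ ⟨m, b, h1, h2⟩; exact ⟨m, b, h2, h1⟩
  have hmid : (u + v)/2 ∈ Ioo u v := ⟨by linarith, by linarith⟩
  obtain ⟨m, b, hmb⟩ := h _ hmid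
  refine ⟨m, b, fun y hy => ?_⟩
  obtain ⟨m', b', h1, h2⟩ := hc _ hmid y hy
  obtain ⟨rfl, rfl⟩ := affine_germ_unique (p := (u+v)/2) (by
        filter_upwards [hmb, h1] with t e1 e2; rw [← e1, ← e2] :
          ∀ᶠ y in nhds ((u+v)/2), m * y + b = m' * y + b')
  exact h2.self_of_nhds

/-- affine on closed intervals without breakpoints inside -/
theorem IsPL.affOn (hx : IsPL x) {u v : ℝ} (huv : u < v)
    (h : ∀ y ∈ Ioo u v, IsLocallyAffineAt x y) :
    ∃ m > 0, ∃ c : ℝ, ∀ y ∈ Icc u v, ap x y = m * y + c := by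
  obtain ⟨m, c, hmc⟩ := affOn_open huv h
  have hcl : ∀ y ∈ Icc u v, ap x y = m * y + c := by
    have hs : closure (Ioo u v) ⊆ {y | ap x y = m * y + c} :=
      closure_minimal hmc (isClosed_eq hx.cont (by fun_prop))
    rw [closure_Ioo huv.ne] at hs
    exact hs
  refine ⟨m, ?_, c, hcl⟩
  have h1 := hcl u ⟨le_rfl, huv.le⟩
  have h2 := hcl v ⟨huv.le, le_rfl⟩
  have h3 := hx.lt.2 huv
  rw [h1, h2] at h3
  by_contra hm
  nlinarith

theorem IsPL.rightAff (hx : IsPL x) (y : ℝ) :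
    ∃ e > y, ∃ m > 0, ∀ z ∈ Icc y e, ap x z = ap x y + m * (z - y) := by
  rcases lt_or_ge y 0 with h0 | h0
  · exact ⟨0, h0, 1, one_pos, fun z hz => by
      rw [hx.fix_of_le hz.2, hx.fix_of_le h0.le]; ring⟩
  rcases le_or_gt 1 y with h1 | h1
  · exact ⟨y + 1, by linarith, 1, one_pos, fun z hz => by
      rw [hx.fix_of_ge (h1.trans hz.1), hx.fix_of_ge h1]; ring⟩
  have hev : ∀ᶠ z in nhdsWithin y (Ioi y), z ∉ Breakpoints x := by
    have : ∀ᶠ z in nhdsWithin y {y}ᶜ, z ∉ Breakpoints x := by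
      have hf : (Breakpoints x \ {y}).Finite := hx.2.2.subset sdiff_subset
      have : ∀ᶠ z in nhds y, z ∉ Breakpoints x \ {y} :=
        hf.isClosed.isOpen_compl.mem_nhds (by simp)
      filter_upwards [mem_nhdsWithin_of_mem_nhds this, self_mem_nhdsWithin] with z hz hz' h
      exact hz ⟨h, hz'⟩
    exact this.filter_mono (nhdsWithin_mono _ fun z hz => ne_of_gt hz)
  obtain ⟨e, he, hU⟩ := (mem_nhdsGT_iff_exists_Ioo_subset (a := y)).1 hev
  obtain ⟨m, hm, c, hmc⟩ := hx.affOn (u := y) (v := min e 1) (lt_min he h1) (by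
    intro z hz
    by_contra hc
    exact hU ⟨hz.1, hz.2.trans_le (min_le_left _ _)⟩
      ⟨⟨h0.trans_lt hz.1, hz.2.trans_le (min_le_right _ _)⟩, hc⟩)
  refine ⟨min e 1, lt_min he h1, m, hm, fun z hz => ?_⟩
  rw [hmc z hz, hmc y ⟨le_rfl, (lt_min he h1).le⟩]; ring

theorem IsPL.leftAff (hx : IsPL x) (y : ℝ) :
    ∃ e < y, ∃ m > 0, ∀ z ∈ Icc e y, ap x z = ap x y + m * (z - y) := by
  rcases lt_or_ge 1 y with h0 | h0
  · exact ⟨1, h0, 1, one_pos, fun z hz => by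
      rw [hx.fix_of_ge hz.1, hx.fix_of_ge h0.le]; ring⟩
  rcases le_or_gt y 0 with h1 | h1
  · exact ⟨y - 1, by linarith, 1, one_pos, fun z hz => by
      rw [hx.fix_of_le (hz.2.trans h1), hx.fix_of_le h1]; ring⟩
  have hev : ∀ᶠ z in nhdsWithin y (Iio y), z ∉ Breakpoints x := by
    have : ∀ᶠ z in nhdsWithin y {y}ᶜ, z ∉ Breakpoints x := by
      have hf : (Breakpoints x \ {y}).Finite := hx.2.2.subset sdiff_subset
      have : ∀ᶠ z in nhds y, z ∉ Breakpoints x \ {y} :=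
        hf.isClosed.isOpen_compl.mem_nhds (by simp)
      filter_upwards [mem_nhdsWithin_of_mem_nhds this, self_mem_nhdsWithin] with z hz hz' h
      exact hz ⟨h, hz'⟩
    exact this.filter_mono (nhdsWithin_mono _ fun z hz => ne_of_lt hz)
  obtain ⟨e, he, hU⟩ := (mem_nhdsLT_iff_exists_Ioo_subset (a := y)).1 hev
  obtain ⟨m, hm, c, hmc⟩ := hx.affOn (u := max e 0) (v := y) (max_lt he h1) (by
    intro z hz
    by_contra hc
    exact hU ⟨(le_max_left _ _).trans_lt hz.1, hz.2⟩
      ⟨⟨(le_max_right _ _).trans_lt hz.1, hz.2.trans_le h0⟩, hc⟩)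
  refine ⟨max e 0, max_lt he h1, m, hm, fun z hz => ?_⟩
  rw [hmc z hz, hmc y ⟨(max_lt he h1).le, le_rfl⟩]; ring

/-- trivial right germ -/
def RT (x : PermR) (y : ℝ) : Prop := ∃ e > y, ∀ z ∈ Icc y e, ap x z = z
/-- trivial left germ -/
def LT (x : PermR) (y : ℝ) : Prop := ∃ e < y, ∀ z ∈ Icc e y, ap x z = z

theorem RT.fix {y : ℝ} (h : RT x y) : ap x y = y := by
  obtain ⟨e, he, h⟩ := h; exact h y ⟨le_rfl, he.le⟩
theorem LT.fix {y : ℝ} (h : LT x y) : ap x y = y := by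
  obtain ⟨e, he, h⟩ := h; exact h y ⟨he.le, le_rfl⟩

theorem IsPL.right_moved (hx : IsPL x) {y : ℝ} (hf : ap x y = y) (h : ¬ RT x y) :
    ∃ e > y, ∀ z ∈ Ioc y e, ap x z ≠ z := by
  obtain ⟨e, he, m, hm, H⟩ := hx.rightAff y
  refine ⟨e, he, fun z hz hzz => h ⟨e, he, fun t ht => ?_⟩⟩
  have := H z ⟨hz.1.le, hz.2⟩
  rw [hzz, hf] at this
  have h1 : m = 1 := by
    have : (m - 1) * (z - y) = 0 := by linarith
    rcases mul_eq_zero.1 this with h | h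
    · linarith
    · linarith [hz.1]
  rw [H t ht, hf, h1]; ring

theorem IsPL.left_moved (hx : IsPL x) {y : ℝ} (hf : ap x y = y) (h : ¬ LT x y) :
    ∃ e < y, ∀ z ∈ Ico e y, ap x z ≠ z := by
  obtain ⟨e, he, m, hm, H⟩ := hx.leftAff y
  refine ⟨e, he, fun z hz hzz => h ⟨e, he, fun t ht => ?_⟩⟩
  have := H z ⟨hz.1, hz.2.le⟩
  rw [hzz, hf] at this
  have h1 : m = 1 := by
    have : (m - 1) * (z - y) = 0 := by linarith
    rcases mul_eq_zero.1 this with h | h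
    · linarith
    · linarith [hz.2]
  rw [H t ht, hf, h1]; ring

theorem IsPL.exists_orbital (hx : IsPL x) {z : ℝ} (hz : ap x z ≠ z) :
    ∃ a b, IsOrbital x a b ∧ a < z ∧ z < b := by
  have hcl : IsClosed {t | ap x t = t} := isClosed_eq hx.cont continuous_id
  obtain ⟨hz0, hz1⟩ := hx.moved hz
  set A := {t | ap x t = t} ∩ Iic z
  set B := {t | ap x t = t} ∩ Ici z
  have hA : sSup A ∈ A := (hcl.inter isClosed_Iic).csSup_mem ⟨0, hx.fix_of_le le_rfl, hz0.le⟩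
    ⟨z, fun t ht => ht.2⟩
  have hB : sInf B ∈ B := (hcl.inter isClosed_Ici).csInf_mem ⟨1, hx.fix_of_ge le_rfl, hz1.le⟩
    ⟨z, fun t ht => ht.2⟩
  have ha : sSup A < z := lt_of_le_of_ne hA.2 fun h => hz (h ▸ hA.1)
  have hb : z < sInf B := lt_of_le_of_ne hB.2 fun h => hz (h ▸ hB.1)
  refine ⟨sSup A, sInf B, ⟨ha.trans hb, ?_, nSupp.2 hA.1, nSupp.2 hB.1⟩, ha, hb⟩
  intro t ht htt
  rcases le_total t z with h | h
  · exact absurd (le_csSup ⟨z, fun t ht => ht.2⟩ (⟨htt, h⟩ : t ∈ A)) (not_le.2 ht.1)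
  · exact absurd (csInf_le ⟨z, fun t ht => ht.2⟩ (⟨htt, h⟩ : t ∈ B)) (not_le.2 ht.2)

theorem IsOrbital.fixl {a b : ℝ} (h : IsOrbital x a b) : ap x a = a := nSupp.1 h.2.2.1
theorem IsOrbital.fixr {a b : ℝ} (h : IsOrbital x a b) : ap x b = b := nSupp.1 h.2.2.2
theorem IsOrbital.ne {a b z : ℝ} (h : IsOrbital x a b) (h1 : a < z) (h2 : z < b) : ap x z ≠ z :=
  h.2.1 ⟨h1, h2⟩

theorem orb_unique {a b c d z : ℝ} (h : IsOrbital x a b) (h' : IsOrbital x c d)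
    (h1 : a < z) (h2 : z < b) (h3 : c < z) (h4 : z < d) : a = c ∧ b = d := by
  constructor
  · rcases lt_trichotomy a c with h5 | h5 | h5
    · exact absurd h'.fixl (h.ne h5 (h3.trans h2))
    · exact h5
    · exact absurd h.fixl (h'.ne h5 (h1.trans h4))
  · rcases lt_trichotomy b d with h5 | h5 | h5
    · exact absurd h.fixr (h'.ne (h3.trans h2) h5)
    · exact h5
    · exact absurd h'.fixr (h.ne (h1.trans h4) h5)

theorem IsPL.right_orbital (hx : IsPL x) {y : ℝ} (hf : ap x y = y) (h : ¬ RT x y) :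
    ∃ e, IsOrbital x y e := by
  obtain ⟨e, he, H⟩ := hx.right_moved hf h
  obtain ⟨a, b, hab, h1, h2⟩ := hx.exists_orbital (H e ⟨he, le_rfl⟩)
  have : a = y := by
    rcases lt_trichotomy a y with h5 | h5 | h5
    · exact absurd hf (hab.ne h5 (he.trans h2))
    · exact h5
    · exact absurd hab.fixl (H a ⟨h5, h1.le⟩)
  subst this
  exact ⟨b, hab⟩

theorem IsPL.left_orbital (hx : IsPL x) {y : ℝ} (hf : ap x y = y) (h : ¬ LT x y) :
    ∃ e, IsOrbital x e y := by
  obtain ⟨e, he, H⟩ := hx.left_moved hf h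
  obtain ⟨a, b, hab, h1, h2⟩ := hx.exists_orbital (H e ⟨le_rfl, he⟩)
  have : b = y := by
    rcases lt_trichotomy b y with h5 | h5 | h5
    · exact absurd hab.fixr (H b ⟨h2.le, h5⟩)
    · exact h5
    · exact absurd hf (hab.ne (h1.trans he) h5)
  subst this
  exact ⟨a, hab⟩

theorem IsOrbital.not_RT {a b : ℝ} (h : IsOrbital x a b) : ¬ RT x a := by
  rintro ⟨e, he, H⟩
  have h1 : a < min e ((a+b)/2) := lt_min he (by linarith [h.1])
  have h2 : min e ((a+b)/2) < b := (min_le_right _ _).trans_lt (by linarith [h.1])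
  exact h.ne h1 h2 (H _ ⟨h1.le, min_le_left _ _⟩)

theorem IsOrbital.not_LT {a b : ℝ} (h : IsOrbital x a b) : ¬ LT x b := by
  rintro ⟨e, he, H⟩
  have h1 : max e ((a+b)/2) < b := max_lt he (by linarith [h.1])
  have h2 : a < max e ((a+b)/2) := lt_of_lt_of_le (by linarith [h.1]) (le_max_right _ _)
  exact h.ne h2 h1 (H _ ⟨le_max_left _ _, h1.le⟩)

theorem IsOrbital.conj {a b : ℝ} (h : IsOrbital x a b) {g : PermR} (hg : IsPL g) :
    IsOrbital (g⁻¹ * x * g) (ap g a) (ap g b) := by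
  refine ⟨hg.lt.2 h.1, ?_, ?_, ?_⟩
  · intro z hz
    have e : z = ap g (ap g⁻¹ z) := (ap_ap_inv g z).symm
    rw [e] at hz ⊢
    show ap _ _ ≠ _
    rw [ap_conj]
    exact fun h' => h.ne (hg.lt.1 hz.1) (hg.lt.1 hz.2) (ap_inj g h')
  · rw [nSupp, ap_conj, h.fixl]
  · rw [nSupp, ap_conj, h.fixr]

/-- last point left of `z` with trivial left germ -/
theorem IsPL.lastTriv (hx : IsPL x) {z : ℝ} (hz : ap x z ≠ z) :
    ∃ L, 0 ≤ L ∧ L < z ∧ LT x L ∧ ¬ RT x L ∧ ∀ y, L < y → y ≤ z → ¬ LT x y := by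
  obtain ⟨hz0, hz1⟩ := hx.moved hz
  set A := {y | y ≤ z ∧ LT x y} with hA
  have h0 : (0:ℝ) ∈ A := ⟨hz0.le, -1, by norm_num, fun t ht => hx.fix_of_le ht.2⟩
  have hbd : BddAbove A := ⟨z, fun t ht => ht.1⟩
  set L := sSup A
  have hLz : L ≤ z := csSup_le ⟨0, h0⟩ fun t ht => ht.1
  have hLT : LT x L := by
    obtain ⟨e, he, m, hm, H⟩ := hx.leftAff L
    obtain ⟨y, hy, hey⟩ := exists_lt_of_lt_csSup ⟨0, h0⟩ he
    obtain ⟨e', he', H'⟩ := hy.2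
    have hyL : y ≤ L := le_csSup hbd hy
    have f1 : max e e' < y := max_lt hey he'
    have g1 := H y ⟨hey.le, hyL⟩
    have g2 := H (max e e') ⟨le_max_left _ _, f1.le.trans hyL⟩
    rw [H' y ⟨he'.le, le_rfl⟩] at g1
    rw [H' _ ⟨le_max_right _ _, f1.le⟩] at g2
    have hm1 : m = 1 := by
      have : (m - 1) * (y - max e e') = 0 := by linarith
      rcases mul_eq_zero.1 this with h | h
      · linarith
      · linarith
    subst hm1
    refine ⟨e, he, fun t ht => ?_⟩
    rw [H t ht]; linarith
  have hlt : L < z := lt_of_le_of_ne hLz fun h => hz (h ▸ hLT.fix)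
  refine ⟨L, le_csSup hbd h0, hlt, hLT, ?_, ?_⟩
  · rintro ⟨e, he, H⟩
    have f : L < min e z := lt_min he hlt
    have : min e z ∈ A := ⟨min_le_right _ _, L, f, fun t ht => H t ⟨ht.1, ht.2.trans (min_le_left _ _)⟩⟩
    exact absurd (le_csSup hbd this) (not_le.2 f)
  · intro y h1 h2 h3
    exact absurd (le_csSup hbd ⟨h2, h3⟩) (not_le.2 h1)

theorem break_of_LT_not_RT {L : ℝ} (h0 : 0 < L) (h1 : L < 1) (hl : LT x L)
    (hr : ¬ RT x L) : L ∈ Breakpoints x := by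
  refine ⟨⟨h0, h1⟩, ?_⟩
  rintro ⟨m, b, h⟩
  obtain ⟨ε, hε, hU⟩ := Metric.eventually_nhds_iff.1 h
  obtain ⟨e, he, H⟩ := hl
  set t := max e (L - ε/2)
  have ht : t < L := max_lt he (by linarith)
  have htd : dist t L < ε := by
    rw [Real.dist_eq, abs_sub_lt_iff]
    exact ⟨by linarith, by linarith [le_max_right e (L - ε/2)]⟩
  have g1 := hU htd
  have g2 := hU (y := L) (by simpa using hε)
  rw [H t ⟨le_max_left _ _, ht.le⟩] at g1
  rw [H L ⟨he.le, le_rfl⟩] at g2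
  have hm1 : m = 1 := by
    have : (m - 1) * (L - t) = 0 := by linarith
    rcases mul_eq_zero.1 this with h | h
    · linarith
    · linarith
  apply hr
  refine ⟨L + ε/2, by linarith, fun z hz => ?_⟩
  rw [hU (y := z) (by rw [Real.dist_eq, abs_sub_lt_iff]; constructor <;> linarith [hz.1, hz.2]), hm1]
  subst hm1; linarith

/-- finiteness of nontrivial fixed germs -/
theorem IsPL.finite_bd (hx : IsPL x) :
    {y | ap x y = y ∧ (¬ RT x y ∨ ¬ LT x y)}.Finite := by
  set A := {y | ap x y = y ∧ (¬ RT x y ∨ ¬ LT x y)} with hA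
  have hsub : A ⊆ Icc 0 1 := by
    intro y hy
    refine ⟨le_of_not_gt fun h => ?_, le_of_not_gt fun h => ?_⟩
    · rcases hy.2 with h' | h'
      · exact h' ⟨0, h, fun t ht => hx.fix_of_le ht.2⟩
      · exact h' ⟨y - 1, by linarith, fun t ht => hx.fix_of_le (ht.2.trans h.le)⟩
    · rcases hy.2 with h' | h'
      · exact h' ⟨y+1, by linarith, fun t ht => hx.fix_of_ge (h.le.trans ht.1)⟩
      · exact h' ⟨1, h, fun t ht => hx.fix_of_ge ht.1⟩
  have key : (A ∩ Icc 0 1).Finite := by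
    refine isCompact_Icc.induction_on (p := fun s => (A ∩ s).Finite) (by simp) ?_ ?_ ?_
    · intro s t hst ht; exact ht.subset (inter_subset_inter_right _ hst)
    · intro s t hs ht; rw [inter_union_distrib_left]; exact hs.union ht
    · intro p _
      obtain ⟨e, he, m, hm, H⟩ := hx.rightAff p
      obtain ⟨e', he', m', hm', H'⟩ := hx.leftAff p
      refine ⟨Ioo e' e, mem_nhdsWithin_of_mem_nhds (Ioo_mem_nhds he' he), ?_⟩
      have s1 : (A ∩ Ioo p e).Subsingleton := by
        by_contra hns
        rw [not_subsingleton_iff] at hns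
        obtain ⟨u, hu, v, hv, huv⟩ := hns
        have g1 := H u ⟨hu.2.1.le, hu.2.2.le⟩
        have g2 := H v ⟨hv.2.1.le, hv.2.2.le⟩
        rw [hu.1.1] at g1
        rw [hv.1.1] at g2
        have hm1 : m = 1 := by
          have : (m - 1) * (u - v) = 0 := by linarith
          rcases mul_eq_zero.1 this with h | h
          · linarith
          · exact absurd (by linarith) huv
        subst hm1
        have hid : ∀ t ∈ Icc p e, ap x t = t := fun t ht => by rw [H t ht]; linarith
        rcases hu.1.2 with h | h
        · exact h ⟨e, hu.2.2, fun t ht => hid t ⟨hu.2.1.le.trans ht.1, ht.2⟩⟩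
        · exact h ⟨p, hu.2.1, fun t ht => hid t ⟨ht.1, ht.2.trans hu.2.2.le⟩⟩
      have s2 : (A ∩ Ioo e' p).Subsingleton := by
        by_contra hns
        rw [not_subsingleton_iff] at hns
        obtain ⟨u, hu, v, hv, huv⟩ := hns
        have g1 := H' u ⟨hu.2.1.le, hu.2.2.le⟩
        have g2 := H' v ⟨hv.2.1.le, hv.2.2.le⟩
        rw [hu.1.1] at g1
        rw [hv.1.1] at g2
        have hm1 : m' = 1 := by
          have : (m' - 1) * (u - v) = 0 := by linarith
          rcases mul_eq_zero.1 this with h | h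
          · linarith
          · exact absurd (by linarith) huv
        subst hm1
        have hid : ∀ t ∈ Icc e' p, ap x t = t := fun t ht => by rw [H' t ht]; linarith
        rcases hu.1.2 with h | h
        · exact h ⟨p, hu.2.2, fun t ht => hid t ⟨hu.2.1.le.trans ht.1, ht.2⟩⟩
        · exact h ⟨e', hu.2.1, fun t ht => hid t ⟨ht.1, ht.2.trans hu.2.2.le⟩⟩
      refine ((s1.finite.union s2.finite).union (finite_singleton p)).subset ?_
      intro t ht
      rcases lt_trichotomy t p with h | h | h
      · exact Or.inl (Or.inr ⟨ht.1, ht.2.1, h⟩)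
      · exact Or.inr h
      · exact Or.inl (Or.inl ⟨ht.1, h, ht.2.2⟩)
  exact key.subset fun y hy => ⟨hy, hsub hy⟩

end single

section groupbasics

theorem RT_comm {k1 k2 : PermR} (h1 : IsPL k1) (h2 : IsPL k2) {a : ℝ} (f1 : ap k1 a = a)
    (f2 : ap k2 a = a) : RT (k1 * k2 * k1⁻¹ * k2⁻¹) a := by
  obtain ⟨e1, he1, m1, hm1, H1⟩ := h1.rightAff a
  obtain ⟨e2, he2, m2, hm2, H2⟩ := h2.rightAff a
  rw [f1] at H1
  rw [f2] at H2
  have d1 : 0 < e1 - a := by linarith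
  have d2 : 0 < e2 - a := by linarith
  set δ := min (min (e1 - a) (e2 - a)) (min ((e1 - a)/m2) ((e2-a)/m1)) with hδ
  have hδ0 : 0 < δ := lt_min (lt_min d1 d2) (lt_min (by positivity) (by positivity))
  refine ⟨a + δ, by linarith, fun z hz => ?_⟩
  have q1 : δ ≤ e1 - a := (min_le_left _ _).trans (min_le_left _ _)
  have q2 : δ ≤ e2 - a := (min_le_left _ _).trans (min_le_right _ _)
  have q3 : δ * m2 ≤ e1 - a := (le_div_iff₀ hm2).1 ((min_le_right _ _).trans (min_le_left _ _))
  have q4 : δ * m1 ≤ e2 - a := (le_div_iff₀ hm1).1 ((min_le_right _ _).trans (min_le_right _ _))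
  have hz1 : 0 ≤ z - a := by linarith [hz.1]
  have hz2 : z - a ≤ δ := by linarith [hz.2]
  have A1 := H1 z ⟨hz.1, by linarith⟩
  have A2 := H2 z ⟨hz.1, by linarith⟩
  have B1 := H1 (ap k2 z) ⟨by rw [A2]; nlinarith, by rw [A2]; nlinarith⟩
  have B2 := H2 (ap k1 z) ⟨by rw [A1]; nlinarith, by rw [A1]; nlinarith⟩
  have : ap k2 (ap k1 z) = ap k1 (ap k2 z) := by rw [B1, B2, A1, A2]; ring
  rw [ap_mul, ap_mul, ap_mul, this, ap_inv_ap, ap_inv_ap]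

theorem LT_comm {k1 k2 : PermR} (h1 : IsPL k1) (h2 : IsPL k2) {a : ℝ} (f1 : ap k1 a = a)
    (f2 : ap k2 a = a) : LT (k1 * k2 * k1⁻¹ * k2⁻¹) a := by
  obtain ⟨e1, he1, m1, hm1, H1⟩ := h1.leftAff a
  obtain ⟨e2, he2, m2, hm2, H2⟩ := h2.leftAff a
  rw [f1] at H1
  rw [f2] at H2
  have d1 : 0 < a - e1 := by linarith
  have d2 : 0 < a - e2 := by linarith
  set δ := min (min (a - e1) (a - e2)) (min ((a - e1)/m2) ((a - e2)/m1)) with hδ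
  have hδ0 : 0 < δ := lt_min (lt_min d1 d2) (lt_min (by positivity) (by positivity))
  refine ⟨a - δ, by linarith, fun z hz => ?_⟩
  have q1 : δ ≤ a - e1 := (min_le_left _ _).trans (min_le_left _ _)
  have q2 : δ ≤ a - e2 := (min_le_left _ _).trans (min_le_right _ _)
  have q3 : δ * m2 ≤ a - e1 := (le_div_iff₀ hm2).1 ((min_le_right _ _).trans (min_le_left _ _))
  have q4 : δ * m1 ≤ a - e2 := (le_div_iff₀ hm1).1 ((min_le_right _ _).trans (min_le_right _ _))
  have hz1 : 0 ≤ a - z := by linarith [hz.2]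
  have hz2 : a - z ≤ δ := by linarith [hz.1]
  have A1 := H1 z ⟨by linarith, hz.2⟩
  have A2 := H2 z ⟨by linarith, hz.2⟩
  have B1 := H1 (ap k2 z) ⟨by rw [A2]; nlinarith, by rw [A2]; nlinarith⟩
  have B2 := H2 (ap k1 z) ⟨by rw [A1]; nlinarith, by rw [A1]; nlinarith⟩
  have : ap k2 (ap k1 z) = ap k1 (ap k2 z) := by rw [B1, B2, A1, A2]; ring
  rw [ap_mul, ap_mul, ap_mul, this, ap_inv_ap, ap_inv_ap]

theorem RT.mul {x y : PermR} {a : ℝ} (hx : RT x a) (hy : RT y a) : RT (x * y) a := by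
  obtain ⟨e, he, H⟩ := hx
  obtain ⟨e', he', H'⟩ := hy
  refine ⟨min e e', lt_min he he', fun z hz => ?_⟩
  rw [ap_mul, H z ⟨hz.1, hz.2.trans (min_le_left _ _)⟩, H' z ⟨hz.1, hz.2.trans (min_le_right _ _)⟩]
theorem LT.mul {x y : PermR} {a : ℝ} (hx : LT x a) (hy : LT y a) : LT (x * y) a := by
  obtain ⟨e, he, H⟩ := hx
  obtain ⟨e', he', H'⟩ := hy
  refine ⟨max e e', max_lt he he', fun z hz => ?_⟩
  rw [ap_mul, H z ⟨(le_max_left _ _).trans hz.1, hz.2⟩, H' z ⟨(le_max_right _ _).trans hz.1, hz.2⟩]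
theorem RT.inv {x : PermR} {a : ℝ} (hx : RT x a) : RT x⁻¹ a := by
  obtain ⟨e, he, H⟩ := hx
  exact ⟨e, he, fun z hz => ap_inv_fix (H z hz)⟩
theorem LT.inv {x : PermR} {a : ℝ} (hx : LT x a) : LT x⁻¹ a := by
  obtain ⟨e, he, H⟩ := hx
  exact ⟨e, he, fun z hz => ap_inv_fix (H z hz)⟩

def RTs (a : ℝ) : Subgroup PermR where
  carrier := {x | RT x a}
  one_mem' := ⟨a+1, by linarith, fun _ _ => rfl⟩
  mul_mem' hx hy := hx.mul hy
  inv_mem' hx := hx.inv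
def LTs (a : ℝ) : Subgroup PermR where
  carrier := {x | LT x a}
  one_mem' := ⟨a-1, by linarith, fun _ _ => rfl⟩
  mul_mem' hx hy := hx.mul hy
  inv_mem' hx := hx.inv

theorem RT_of_comm {K : Subgroup PermR} (hK : ∀ k ∈ K, IsPL k) {a : ℝ}
    (hf : ∀ k ∈ K, ap k a = a) {x : PermR} (hx : x ∈ (⁅K, K⁆ : Subgroup PermR)) : RT x a := by
  have : (⁅K, K⁆ : Subgroup PermR) ≤ RTs a :=
    Subgroup.commutator_le.2 fun u hu v hv => RT_comm (hK u hu) (hK v hv) (hf u hu) (hf v hv)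
  exact this hx
theorem LT_of_comm {K : Subgroup PermR} (hK : ∀ k ∈ K, IsPL k) {a : ℝ}
    (hf : ∀ k ∈ K, ap k a = a) {x : PermR} (hx : x ∈ (⁅K, K⁆ : Subgroup PermR)) : LT x a := by
  have : (⁅K, K⁆ : Subgroup PermR) ≤ LTs a :=
    Subgroup.commutator_le.2 fun u hu v hv => LT_comm (hK u hu) (hK v hv) (hf u hu) (hf v hv)
  exact this hx

theorem INF {H : Subgroup PermR} (hH : ∀ k ∈ H, IsPL k) {a b z y : ℝ}
    (hm : ∀ t, a < t → t < b → ∃ h ∈ H, ap h t ≠ t) (hb : z < b)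
    (hz : ∀ h ∈ H, a ≤ ap h z) (hy : a < y) : ∃ h ∈ H, ap h z < y := by
  by_contra! hc
  set A := {t | ∃ h ∈ H, t = ap h z}
  have hne : A.Nonempty := ⟨z, 1, one_mem _, rfl⟩
  have hbd : BddBelow A := ⟨a, by rintro _ ⟨h, hh, rfl⟩; exact hz h hh⟩
  have h1 : y ≤ sInf A := le_csInf hne (by rintro _ ⟨h, hh, rfl⟩; exact hc h hh)
  have h2 : sInf A ≤ z := csInf_le hbd ⟨1, one_mem _, rfl⟩
  obtain ⟨h, hh, hne'⟩ := hm (sInf A) (by linarith) (by linarith)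
  have : ∃ h ∈ H, ap h (sInf A) < sInf A := by
    rcases lt_or_gt_of_ne hne' with h3 | h3
    · exact ⟨h, hh, h3⟩
    · refine ⟨h⁻¹, inv_mem hh, ?_⟩
      rw [← (hH h hh).lt, ap_ap_inv]; exact h3
  obtain ⟨h, hh, hlt⟩ := this
  have h4 : sInf A < ap h⁻¹ (sInf A) := by rw [← (hH h hh).lt, ap_ap_inv]; exact hlt
  obtain ⟨_, ⟨g, hg, rfl⟩, h5⟩ := exists_lt_of_csInf_lt hne h4
  have h6 : ap (g * h) z < sInf A := by
    rw [ap_mul, ← (hH _ (inv_mem hh)).lt, ap_inv_ap]; exact h5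
  exact absurd (csInf_le hbd ⟨g * h, mul_mem hg hh, rfl⟩) (not_le.2 h6)

theorem SUP {H : Subgroup PermR} (hH : ∀ k ∈ H, IsPL k) {a b z y : ℝ}
    (hm : ∀ t, a < t → t < b → ∃ h ∈ H, ap h t ≠ t) (ha : a < z)
    (hz : ∀ h ∈ H, ap h z ≤ b) (hy : y < b) : ∃ h ∈ H, y < ap h z := by
  by_contra! hc
  set A := {t | ∃ h ∈ H, t = ap h z}
  have hne : A.Nonempty := ⟨z, 1, one_mem _, rfl⟩
  have hbd : BddAbove A := ⟨b, by rintro _ ⟨h, hh, rfl⟩; exact hz h hh⟩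
  have h1 : sSup A ≤ y := csSup_le hne (by rintro _ ⟨h, hh, rfl⟩; exact hc h hh)
  have h2 : z ≤ sSup A := le_csSup hbd ⟨1, one_mem _, rfl⟩
  obtain ⟨h, hh, hne'⟩ := hm (sSup A) (by linarith) (by linarith)
  have : ∃ h ∈ H, sSup A < ap h (sSup A) := by
    rcases lt_or_gt_of_ne hne' with h3 | h3
    · refine ⟨h⁻¹, inv_mem hh, ?_⟩
      rw [← (hH h hh).lt, ap_ap_inv]; exact h3
    · exact ⟨h, hh, h3⟩
  obtain ⟨h, hh, hlt⟩ := this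
  have h4 : ap h⁻¹ (sSup A) < sSup A := by rw [← (hH h hh).lt, ap_ap_inv]; exact hlt
  obtain ⟨_, ⟨g, hg, rfl⟩, h5⟩ := exists_lt_of_lt_csSup hne h4
  have h6 : sSup A < ap (g * h) z := by
    rw [ap_mul, ← (hH _ (inv_mem hh)).lt, ap_inv_ap]; exact h5
  exact absurd (le_csSup hbd ⟨g * h, mul_mem hg hh, rfl⟩) (not_le.2 h6)

theorem zpow_fix {x : PermR} {a : ℝ} (h : ap x a = a) (n : ℤ) : ap (x ^ n) a = a := by
  let S : Subgroup PermR := { carrier := {y | ap y a = a}, one_mem' := rfl,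
                              mul_mem' := fun {u v} hu hv => by
                                show ap (u * v) a = a
                                rw [ap_mul, show ap u a = a from hu, show ap v a = a from hv],
                              inv_mem' := fun hu => ap_inv_fix hu }
  exact S.zpow_mem (show x ∈ S from h) n

variable {G : Subgroup PermR}

theorem orb_inf (hPL : ∀ g ∈ G, IsPL g) {x : PermR} (hx : x ∈ G) {a b z y : ℝ} (h : IsOrbital x a b) (h1 : a < z)
    (h2 : z < b) (hy : a < y) : ∃ n : ℤ, ap (x ^ n) z < y := by
  have hz : ∀ k ∈ Subgroup.zpowers x, IsPL k := by
    rintro _ ⟨n, rfl⟩; exact hPL _ (zpow_mem hx n)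
  obtain ⟨_, ⟨n, rfl⟩, hn⟩ := INF hz (a := a) (b := b) (z := z) (y := y)
    (fun t ht ht' => ⟨x, Subgroup.mem_zpowers x, h.ne ht ht'⟩) h2 (by
      rintro _ ⟨n, rfl⟩
      have := (hz _ ⟨n, rfl⟩).lt.2 h1
      rw [show ap ((fun n : ℤ => x ^ n) n) a = a from zpow_fix h.fixl n] at this
      exact this.le) hy
  exact ⟨n, hn⟩

theorem orb_sup (hPL : ∀ g ∈ G, IsPL g) {x : PermR} (hx : x ∈ G) {a b z y : ℝ} (h : IsOrbital x a b) (h1 : a < z)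
    (h2 : z < b) (hy : y < b) : ∃ n : ℤ, y < ap (x ^ n) z := by
  have hz : ∀ k ∈ Subgroup.zpowers x, IsPL k := by
    rintro _ ⟨n, rfl⟩; exact hPL _ (zpow_mem hx n)
  obtain ⟨_, ⟨n, rfl⟩, hn⟩ := SUP hz (a := a) (b := b) (z := z) (y := y)
    (fun t ht ht' => ⟨x, Subgroup.mem_zpowers x, h.ne ht ht'⟩) h1 (by
      rintro _ ⟨n, rfl⟩
      have := (hz _ ⟨n, rfl⟩).lt.2 h2
      rw [show ap ((fun n : ℤ => x ^ n) n) b = b from zpow_fix h.fixr n] at this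
      exact this.le) hy
  exact ⟨n, hn⟩

theorem break_mul (hPL : ∀ g ∈ G, IsPL g) {u v : PermR} {p : ℝ} (hu : u ∈ G) (hp : p ∈ Breakpoints (u * v)) :
    p ∈ Breakpoints u ∨ ap u p ∈ Breakpoints v := by
  by_contra! hc
  have hU := hPL u hu
  have hup : ap u p ∈ Ioo (0:ℝ) 1 := by
    constructor
    · have := hU.lt.2 hp.1.1; rwa [hU.fix_of_le le_rfl] at this
    · have := hU.lt.2 hp.1.2; rwa [hU.fix_of_ge le_rfl] at this
  have h1 : IsLocallyAffineAt u p := by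
    by_contra h; exact hc.1 ⟨hp.1, h⟩
  have h2 : IsLocallyAffineAt v (ap u p) := by
    by_contra h; exact hc.2 ⟨hup, h⟩
  apply hp.2
  obtain ⟨m, b, h1⟩ := h1
  obtain ⟨m', b', h2⟩ := h2
  refine ⟨m' * m, m' * b + b', ?_⟩
  filter_upwards [h1, hU.cont.continuousAt.eventually h2] with y e1 e2
  rw [ap_mul, e2, e1]; ring

theorem break_inv (hPL : ∀ g ∈ G, IsPL g) {u : PermR} {p : ℝ} (hu : u ∈ G) (hp : p ∈ Breakpoints u⁻¹) :
    ap u⁻¹ p ∈ Breakpoints u := by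
  by_contra! hc
  have hU := hPL _ (inv_mem hu)
  have hup : ap u⁻¹ p ∈ Ioo (0:ℝ) 1 := by
    constructor
    · have := hU.lt.2 hp.1.1; rwa [hU.fix_of_le le_rfl] at this
    · have := hU.lt.2 hp.1.2; rwa [hU.fix_of_ge le_rfl] at this
  have h1 : IsLocallyAffineAt u (ap u⁻¹ p) := by
    by_contra h; exact hc ⟨hup, h⟩
  apply hp.2
  obtain ⟨m, b, h1⟩ := h1
  have h2 := hU.cont.continuousAt.eventually h1
  simp only [ap_ap_inv] at h2
  have hm : m ≠ 0 := by
    rintro rfl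
    obtain ⟨ε, hε, hU⟩ := Metric.eventually_nhds_iff.1 h2
    have g1 := hU (y := p) (by simpa using hε)
    have g2 := hU (y := p + ε/2) (by rw [Real.dist_eq]; rw [add_sub_cancel_left, abs_of_pos (by linarith)]; linarith)
    linarith
  refine ⟨m⁻¹, - m⁻¹ * b, ?_⟩
  filter_upwards [h2] with y e
  field_simp
  linarith

theorem break_form (hPL : ∀ g ∈ G, IsPL g) {X : Set PermR} (hX : Subgroup.closure X = G) :
    ∀ x ∈ G, ∀ y ∈ Breakpoints x, ∃ p ∈ BreakSet X, ∃ g ∈ G, y = ap g p := by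
  intro x hx
  rw [← hX] at hx
  induction hx using Subgroup.closure_induction with
  | mem t ht => intro y hy; exact ⟨y, mem_biUnion ht hy, 1, one_mem _, rfl⟩
  | one => intro y hy; exact absurd ⟨1, 0, Filter.Eventually.of_forall fun z => by simp [ap_one]⟩ hy.2
  | mul u v hu hv ihu ihv =>
    rw [hX] at hu hv
    intro y hy
    rcases break_mul hPL hu hy with h | h
    · exact ihu y h
    · obtain ⟨p, hp, g, hg, e⟩ := ihv _ h
      exact ⟨p, hp, g * u⁻¹, mul_mem hg (inv_mem hu), by rw [ap_mul, ← e, ap_inv_ap]⟩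
  | inv u hu ihu =>
    rw [hX] at hu
    intro y hy
    obtain ⟨p, hp, g, hg, e⟩ := ihu _ (break_inv hPL hu hy)
    exact ⟨p, hp, g * u, mul_mem hg hu, by rw [ap_mul, ← e, ap_ap_inv]⟩

theorem BreakSet_finite {X : Set PermR} (hX : X.Finite) (h : ∀ x ∈ X, IsPL x) :
    (BreakSet X).Finite := hX.biUnion fun x hx => (h x hx).2.2

end groupbasics

end PLPaper

open Set
open scoped commutatorElement
namespace PLPaper

/-- `(a,b)` is not a block of `G`. -/
def NB (G : Subgroup PermR) (a b : ℝ) : Prop :=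
  ∃ h ∈ G, ap h a < b ∧ a < ap h b ∧ ¬ (ap h a = a ∧ ap h b = b)

/-- `x` has an orbital which is not a block. -/
def NBy (G : Subgroup PermR) (x : PermR) : Prop := ∃ a b, IsOrbital x a b ∧ NB G a b

/-- invariance -/
def Inv (G : Subgroup PermR) (E : Set ℝ) : Prop := ∀ g ∈ G, ∀ z ∈ E, ap g z ∈ E

section blocks
variable {G : Subgroup PermR}

theorem NB.conj (hPL : ∀ g ∈ G, IsPL g) {a b : ℝ} (h : NB G a b) {g : PermR} (hg : g ∈ G) : NB G (ap g a) (ap g b) := by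
  obtain ⟨k, hk, h1, h2, h3⟩ := h
  refine ⟨g⁻¹ * k * g, mul_mem (mul_mem (inv_mem hg) hk) hg, ?_, ?_, ?_⟩
  · rw [ap_conj, (hPL g hg).lt]; exact h1
  · rw [ap_conj, (hPL g hg).lt]; exact h2
  · rw [ap_conj, ap_conj]; exact fun h => h3 ⟨ap_inj g h.1, ap_inj g h.2⟩

theorem NB.conj_iff (hPL : ∀ g ∈ G, IsPL g) {a b : ℝ} {g : PermR} (hg : g ∈ G) :
    NB G (ap g a) (ap g b) ↔ NB G a b := by
  refine ⟨fun h => ?_, fun h => h.conj hPL hg⟩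
  have := h.conj hPL (inv_mem hg)
  rwa [ap_inv_ap, ap_inv_ap] at this

theorem NBy.conj (hPL : ∀ g ∈ G, IsPL g) {x : PermR} (h : NBy G x) {g : PermR} (hg : g ∈ G) : NBy G (g⁻¹ * x * g) := by
  obtain ⟨a, b, h1, h2⟩ := h
  exact ⟨_, _, h1.conj (hPL g hg), h2.conj hPL hg⟩

theorem block_fix {a b : ℝ} (hb : ¬ NB G a b) {h : PermR} (hh : h ∈ G) (h1 : ap h a < b)
    (h2 : a < ap h b) : ap h a = a ∧ ap h b = b := by
  by_contra hc; exact hb ⟨h, hh, h1, h2, hc⟩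

theorem NB_of_fixl (hPL : ∀ g ∈ G, IsPL g) {a b : ℝ} (hab : a < b) {h : PermR} (hh : h ∈ G) (h1 : ap h a = a)
    (h2 : ap h b ≠ b) : NB G a b := by
  refine ⟨h, hh, by rwa [h1], ?_, fun h' => h2 h'.2⟩
  have := (hPL h hh).lt.2 hab
  rwa [h1] at this

theorem NB_of_fixr (hPL : ∀ g ∈ G, IsPL g) {a b : ℝ} (hab : a < b) {h : PermR} (hh : h ∈ G) (h1 : ap h b = b)
    (h2 : ap h a ≠ a) : NB G a b := by
  refine ⟨h, hh, ?_, by rwa [h1], fun h' => h2 h'.1⟩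
  have := (hPL h hh).lt.2 hab
  rwa [h1] at this

theorem Inv.back (hPL : ∀ g ∈ G, IsPL g) {E : Set ℝ} (hE : Inv G E) {g : PermR} (hg : g ∈ G) {z : ℝ} (h : ap g z ∈ E) :
    z ∈ E := by
  have := hE g⁻¹ (inv_mem hg) _ h; rwa [ap_inv_ap] at this

theorem cover_left (hPL : ∀ g ∈ G, IsPL g) {E : Set ℝ} (hE : Inv G E) {x : PermR} (hx : x ∈ G) {a b e : ℝ}
    (h : IsOrbital x a b) (h1 : a < e) (h2 : e < b) (hs : Ioo a e ⊆ E) : Ioo a b ⊆ E := by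
  intro t ht
  obtain ⟨n, hn⟩ := orb_sup hPL hx h h1 h2 ht.2
  have hxn := zpow_mem hx (-n)
  have e1 : ap (x ^ (-n)) a = a := zpow_fix h.fixl _
  refine Inv.back hPL hE hxn (hs ⟨?_, ?_⟩)
  · rw [← e1]; exact (hPL _ hxn).lt.2 ht.1
  · have := (hPL _ hxn).lt.2 hn
    rwa [← ap_mul, ← zpow_add, add_neg_cancel, zpow_zero, ap_one] at this

theorem cover_right (hPL : ∀ g ∈ G, IsPL g) {E : Set ℝ} (hE : Inv G E) {x : PermR} (hx : x ∈ G) {a b e : ℝ}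
    (h : IsOrbital x a b) (h1 : a < e) (h2 : e < b) (hs : Ioo e b ⊆ E) : Ioo a b ⊆ E := by
  intro t ht
  obtain ⟨n, hn⟩ := orb_inf hPL hx h h1 h2 ht.1
  have hxn := zpow_mem hx (-n)
  have e1 : ap (x ^ (-n)) b = b := zpow_fix h.fixr _
  refine Inv.back hPL hE hxn (hs ⟨?_, ?_⟩)
  · have := (hPL _ hxn).lt.2 hn
    rwa [← ap_mul, ← zpow_add, add_neg_cancel, zpow_zero, ap_one] at this
  · rw [← e1]; exact (hPL _ hxn).lt.2 ht.2

theorem lemmaT (hPL : ∀ g ∈ G, IsPL g) {X : Set PermR} (hXf : X.Finite) (hX : Subgroup.closure X = G) {E : Set ℝ}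
    (hE : Inv G E) {R : Set PermR} (hR : ∀ x ∈ R, x ∈ G)
    (hblk : ∀ x ∈ R, ∀ a b, IsOrbital x a b → ¬ Ioo a b ⊆ E → ¬ NB G a b)
    (n : ℕ) (x : ℕ → PermR) (a b : ℕ → ℝ) (hxR : ∀ i ≤ n, x i ∈ R)
    (ho : ∀ i ≤ n, IsOrbital (x i) (a i) (b i)) (hnE : ∀ i ≤ n, ¬ Ioo (a i) (b i) ⊆ E)
    (hnest : ∀ i < n, a (i+1) < a i ∧ b i < b (i+1)) : n ≤ (BreakSet X).ncard := by
  have hnest' : ∀ k m, k < m → m ≤ n → a m < a k ∧ b k < b m := by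
    intro k m hkm
    induction m, hkm using Nat.le_induction with
    | base => intro h; exact hnest k (by omega)
    | succ m hm ih =>
      intro h
      have h1 := ih (by omega)
      have h2 := hnest m (by omega)
      exact ⟨by linarith, by linarith⟩
  have hxG : ∀ i ≤ n, x i ∈ G := fun i hi => hR _ (hxR i hi)
  have hL : ∀ k, ∃ L, k ≤ n → (0 ≤ L ∧ L ≤ a k ∧ LT (x k) L ∧ ¬ RT (x k) L ∧
      ∀ y, L < y → y ≤ a k → ¬ LT (x k) y) := by
    intro k
    by_cases hk : k ≤ n
    · have o := ho k hk
      obtain ⟨L, h1, h2, h3, h4, h5⟩ := (hPL _ (hxG k hk)).lastTriv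
        (o.ne (z := (a k + b k)/2) (by linarith [o.1]) (by linarith [o.1]))
      refine ⟨L, fun _ => ⟨h1, ?_, h3, h4, fun y hy hy' => h5 y hy (by linarith [o.1])⟩⟩
      by_contra hc
      exact o.ne (not_le.1 hc) (h2.trans (by linarith [o.1])) h3.fix
    · exact ⟨0, fun h => absurd h hk⟩
  choose L hL using hL
  have claim1 : ∀ k m, k < m → m ≤ n → a m < L k ∧ L k < b m := by
    intro k m hkm hm
    obtain ⟨n1, n2⟩ := hnest' k m hkm hm
    have hk : k ≤ n := by omega
    obtain ⟨l0, l1, l2, l3, l4⟩ := hL k hk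
    have ok := ho k hk
    have om := ho m hm
    refine ⟨?_, by linarith [ok.1]⟩
    by_contra hc
    rw [not_lt] at hc
    have hxk := hPL _ (hxG k hk)
    have hfix := block_fix (hblk _ (hxR m hm) _ _ om (hnE m hm)) (hxG k hk)
      (by have := hxk.lt.2 n1; rw [ok.fixl] at this; linarith [ok.1])
      (by have := hxk.lt.2 n2; rw [ok.fixr] at this; linarith [ok.1])
    have hnRT : ¬ RT (x k) (a m) := by
      rcases eq_or_lt_of_le hc with h | h
      · rw [← h]; exact l3
      · rintro ⟨e, he, H⟩
        have f : a m < min e (a k) := lt_min he n1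
        exact l4 (min e (a k)) (h.trans f) (min_le_right _ _)
          ⟨a m, f, fun t ht => H t ⟨ht.1, ht.2.trans (min_le_left _ _)⟩⟩
    obtain ⟨e, oe⟩ := hxk.right_orbital hfix.1 hnRT
    have hek : e ≤ a k := by
      by_contra h
      exact oe.ne n1 (not_le.1 h) ok.fixl
    have heb : e < b m := by linarith [ok.1]
    have hnb : NB G (a m) e := NB_of_fixl hPL oe.1 (hxG m hm) om.fixl (om.ne oe.1 heb)
    have hs : Ioo (a m) e ⊆ E := by
      by_contra h; exact hblk _ (hxR k hk) _ _ oe h hnb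
    exact hnE m hm (cover_left hPL hE (hxG m hm) om oe.1 heb hs)
  have claim2 : ∀ k m, k < m → m ≤ n → ∀ h ∈ G, ap h (L k) ≠ L m := by
    intro k m hkm hm h hh heq
    obtain ⟨c1, c2⟩ := claim1 k m hkm hm
    obtain ⟨l0, l1, l2, l3, l4⟩ := hL m hm
    have om := ho m hm
    have hH := hPL h hh
    have hxm := hPL _ (hxG m hm)
    have hb := hblk _ (hxR m hm) _ _ om (hnE m hm)
    have p1 : ap h (a m) < L m := by rw [← heq, hH.lt]; exact c1
    have p2 : L m < ap h (b m) := by rw [← heq, hH.lt]; exact c2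
    have hq : ap h (b m) ≤ a m := by
      by_contra hc
      rw [not_le] at hc
      have := block_fix hb hh (by linarith [om.1]) hc
      linarith [this.1]
    have hb' : ¬ NB G (ap h (a m)) (ap h (b m)) := fun h' => hb ((NB.conj_iff hPL hh).1 h')
    have fL := l2.fix
    have hf := block_fix hb' (hxG m hm)
      (by have := hxm.lt.2 p1; rw [fL] at this; linarith)
      (by have := hxm.lt.2 p2; rw [fL] at this; linarith)
    obtain ⟨e, oe⟩ := hxm.left_orbital hf.2 (l4 _ p2 hq)
    have heL : L m ≤ e := by
      by_contra hc
      exact oe.ne (not_le.1 hc) p2 fL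
    have oy := om.conj hH
    have hyG : h⁻¹ * x m * h ∈ G := mul_mem (mul_mem (inv_mem hh) (hxG m hm)) hh
    have hnb : NB G e (ap h (b m)) :=
      NB_of_fixr hPL oe.1 hyG oy.fixr (oy.ne (by linarith) oe.1)
    have hs : Ioo e (ap h (b m)) ⊆ E := by
      by_contra h; exact hblk _ (hxR m hm) _ _ oe h hnb
    have hs2 := cover_right hPL hE hyG oy (by linarith) oe.1 hs
    exact hnE m hm fun z hz => Inv.back hPL hE hh (hs2 ⟨hH.lt.2 hz.1, hH.lt.2 hz.2⟩)
  have hp : ∀ k, ∃ p, k < n → p ∈ BreakSet X ∧ ∃ g ∈ G, L k = ap g p := by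
    intro k
    by_cases hk : k < n
    · obtain ⟨c1, c2⟩ := claim1 k n hk le_rfl
      obtain ⟨l0, l1, l2, l3, l4⟩ := hL k hk.le
      have on := ho n le_rfl
      obtain ⟨q1, q2⟩ := (hPL _ (hxG n le_rfl)).moved (on.ne c1 c2)
      obtain ⟨p, hp, g, hg, e⟩ := break_form hPL hX _ (hxG k hk.le) _
        (break_of_LT_not_RT q1 q2 l2 l3)
      exact ⟨p, fun _ => ⟨hp, g, hg, e⟩⟩
    · exact ⟨0, fun h => absurd h hk⟩
  choose p hp using hp
  have hfin : (BreakSet X).Finite :=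
    BreakSet_finite hXf fun y hy => hPL y (hX ▸ Subgroup.subset_closure hy)
  have hinj : InjOn p (Finset.range n : Set ℕ) := by
    have key : ∀ k m, k < m → m < n → p k ≠ p m := by
      intro k m hkm hm h
      obtain ⟨_, g, hg, e⟩ := hp k (by omega)
      obtain ⟨_, g', hg', e'⟩ := hp m hm
      refine claim2 k m hkm hm.le (g⁻¹ * g') (mul_mem (inv_mem hg) hg') ?_
      rw [e, ap_mul, ap_inv_ap, h, e']
    intro k hk m hm h
    simp at hk hm
    rcases lt_trichotomy k m with h1 | h1 | h1
    · exact absurd h (key k m h1 hm)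
    · exact h1
    · exact absurd h.symm (key m k h1 hk)
  have := ncard_le_ncard_of_injOn (s := (Finset.range n : Set ℕ)) (t := BreakSet X) p
    (fun k hk => (hp k (by simpa using hk)).1) hinj hfin
  rw [ncard_coe_finset, Finset.card_range] at this
  exact this

theorem block_in_orbital (hPL : ∀ g ∈ G, IsPL g) {a b : ℝ} (hab : a < b) (hb : ¬ NB G a b) {h : PermR} (hh : h ∈ G)
    (hm : ap h a ≠ a) : ∃ c d, IsOrbital h c d ∧ c < a ∧ b < d := by
  obtain ⟨c, d, o, h1, h2⟩ := (hPL h hh).exists_orbital hm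
  refine ⟨c, d, o, h1, ?_⟩
  by_contra hc
  rw [not_lt] at hc
  apply hm
  have hH := hPL h hh
  refine (block_fix hb hh ?_ ?_).1
  · have := hH.lt.2 h2; rw [o.fixr] at this; linarith
  · have := hH.le.2 hc; rw [o.fixr] at this; linarith

theorem block_in_orbital' (hPL : ∀ g ∈ G, IsPL g) {a b : ℝ} (hab : a < b) (hb : ¬ NB G a b) {h : PermR} (hh : h ∈ G)
    (hm : ¬ (ap h a = a ∧ ap h b = b)) : ∃ c d, IsOrbital h c d ∧ c < a ∧ b < d := by
  by_cases h1 : ap h a = a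
  · exfalso
    refine hm (block_fix hb hh (by rwa [h1]) ?_)
    have := (hPL h hh).lt.2 hab; rwa [h1] at this
  · exact block_in_orbital hPL hab hb hh h1

theorem tow_chain (hPL : ∀ g ∈ G, IsPL g) {E : Set ℝ} {R : Subgroup PermR} (hR : R ≤ G)
    (hblk : ∀ x ∈ R, ∀ a b, IsOrbital x a b → ¬ Ioo a b ⊆ E → ¬ NB G a b) (n : ℕ) :
    ∀ y ∈ DS R n, ∀ a₀ b₀, IsOrbital y a₀ b₀ → ¬ Ioo a₀ b₀ ⊆ E →
    ∃ (x : ℕ → PermR) (a b : ℕ → ℝ), x 0 = y ∧ a 0 = a₀ ∧ b 0 = b₀ ∧ (∀ i ≤ n, x i ∈ R) ∧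
      (∀ i ≤ n, IsOrbital (x i) (a i) (b i)) ∧ (∀ i ≤ n, ¬ Ioo (a i) (b i) ⊆ E) ∧
      (∀ i < n, a (i+1) < a i ∧ b i < b (i+1)) := by
  induction n with
  | zero =>
    intro y hy a₀ b₀ ho hE
    refine ⟨fun _ => y, fun _ => a₀, fun _ => b₀, rfl, rfl, rfl, fun _ _ => hy, fun _ _ => ho,
      fun _ _ => hE, fun i hi => absurd hi (Nat.not_lt_zero _)⟩
  | succ n ih =>
    intro y hy a₀ b₀ ho hE
    have hyR : y ∈ R := DS_le_self R _ hy
    have hb := hblk y hyR _ _ ho hE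
    have : ∃ h ∈ DS R n, ap h a₀ ≠ a₀ := by
      by_contra! hc
      exact ho.not_RT (RT_of_comm (K := DS R n) (fun k hk => hPL k (hR (DS_le_self R _ hk))) hc hy)
    obtain ⟨h, hh, hm⟩ := this
    obtain ⟨c, d, o, h1, h2⟩ := block_in_orbital hPL ho.1 hb (hR (DS_le_self R _ hh)) hm
    obtain ⟨x, a, b, e1, e2, e3, q1, q2, q3, q4⟩ := ih h hh c d o
      (fun hs => hE ((Ioo_subset_Ioo h1.le h2.le).trans hs))
    refine ⟨fun i => Nat.casesOn i y x, fun i => Nat.casesOn i a₀ a, fun i => Nat.casesOn i b₀ b,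
      rfl, rfl, rfl, ?_, ?_, ?_, ?_⟩
    · rintro (_ | i) hi
      · exact hyR
      · exact q1 i (by omega)
    · rintro (_ | i) hi
      · exact ho
      · exact q2 i (by omega)
    · rintro (_ | i) hi
      · exact hE
      · exact q3 i (by omega)
    · rintro (_ | i) hi
      · show a 0 < a₀ ∧ b₀ < b 0
        rw [e2, e3]; exact ⟨h1, h2⟩
      · exact q4 i (by omega)

theorem Tow (hPL : ∀ g ∈ G, IsPL g) {X : Set PermR} (hXf : X.Finite) (hX : Subgroup.closure X = G) {E : Set ℝ}
    (hE : Inv G E) {R : Subgroup PermR} (hR : R ≤ G)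
    (hblk : ∀ x ∈ R, ∀ a b, IsOrbital x a b → ¬ Ioo a b ⊆ E → ¬ NB G a b) :
    ∀ y ∈ DS R ((BreakSet X).ncard + 1), ∀ a b, IsOrbital y a b → Ioo a b ⊆ E := by
  intro y hy a b ho
  by_contra hc
  obtain ⟨x, a, b, -, -, -, q1, q2, q3, q4⟩ := tow_chain hPL hR hblk _ y hy a b ho hc
  have := lemmaT hPL hXf hX hE (R := R) (fun x hx => hR hx) hblk _ x a b q1 q2 q3 q4
  omega

theorem eq_one_of_no_orbital (hPL : ∀ g ∈ G, IsPL g) {x : PermR} (hx : x ∈ G) (h : ∀ a b, ¬ IsOrbital x a b) : x = 1 := by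
  apply ap_ext
  intro z
  by_contra hc
  obtain ⟨a, b, o, _⟩ := (hPL x hx).exists_orbital hc
  exact h a b o

theorem Tow_bot (hPL : ∀ g ∈ G, IsPL g) {X : Set PermR} (hXf : X.Finite) (hX : Subgroup.closure X = G)
    {R : Subgroup PermR} (hR : R ≤ G) (hblk : ∀ x ∈ R, ¬ NBy G x) :
    DS R ((BreakSet X).ncard + 1) = ⊥ := by
  rw [eq_bot_iff]
  intro y hy
  refine eq_one_of_no_orbital hPL (hR (DS_le_self R _ hy)) fun a b o => ?_
  have := Tow hPL hXf hX (E := ∅) (fun _ _ _ h => h.elim) hR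
    (fun x hx a b o _ hn => hblk x hx ⟨a, b, o, hn⟩) y hy a b o
  exact this (⟨by linarith [o.1], by linarith [o.1]⟩ : (a+b)/2 ∈ Ioo a b)

end blocks
end PLPaper

open Set
open scoped commutatorElement
namespace PLPaper

section CHsec
variable {G : Subgroup PermR}

theorem comm_mem' (hPL : ∀ g ∈ G, IsPL g) {K : Subgroup PermR} {u v : PermR} (hu : u ∈ K) (hv : v ∈ K) :
    u * v * u⁻¹ * v⁻¹ ∈ (⁅K, K⁆ : Subgroup PermR) := Subgroup.commutator_mem_commutator hu hv

theorem comm_fix_iff (hPL : ∀ g ∈ G, IsPL g) (u v : PermR) (c : ℝ) :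
    ap (u * v * u⁻¹ * v⁻¹) c = c ↔ ap v (ap u c) = ap u (ap v c) := by
  rw [ap_mul, ap_mul, ap_mul, ap_inv_eq, ap_inv_eq]

theorem CH_core (hPL : ∀ g ∈ G, IsPL g) {U v : PermR} (hU : U ∈ G) (hv : v ∈ G) {c p q : ℝ} (o : IsOrbital v p q)
    (hc : c = p ∨ c = q) (h1 : p < ap U c) (h2 : ap U c < q) :
    NBy G (U * v * U⁻¹ * v⁻¹) := by
  have hfc : ap v c = c := by
    rcases hc with rfl | rfl
    · exact o.fixl
    · exact o.fixr
  have heG : U * v * U⁻¹ * v⁻¹ ∈ G := mul_mem (mul_mem (mul_mem hU hv) (inv_mem hU)) (inv_mem hv)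
  have hm : ap (U * v * U⁻¹ * v⁻¹) c ≠ c := by
    rw [Ne, comm_fix_iff hPL, hfc]; exact o.ne h1 h2
  obtain ⟨r, s, oD, hr, hs⟩ := (hPL _ heG).exists_orbital hm
  refine ⟨r, s, oD, ?_⟩
  by_contra hb
  have hV := hPL v hv
  have hUU := hPL U hU
  have fv := block_fix hb hv (by have := hV.lt.2 hr; rw [hfc] at this; linarith)
    (by have := hV.lt.2 hs; rw [hfc] at this; linarith)
  have hrp : r ≤ p := by
    by_contra hcon
    rw [not_le] at hcon
    rcases hc with rfl | rfl
    · linarith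
    · exact o.ne hcon hr fv.1
  have hqs : q ≤ s := by
    by_contra hcon
    rw [not_le] at hcon
    rcases hc with rfl | rfl
    · exact o.ne hs hcon fv.2
    · linarith
  have fu := block_fix hb hU (by have := hUU.lt.2 hr; linarith) (by have := hUU.lt.2 hs; linarith)
  exact oD.not_RT (RT_comm hUU hV fu.1 fv.1)

theorem CH_a (hPL : ∀ g ∈ G, IsPL g) {K : Subgroup PermR} (hK : K ≤ G) {u v : PermR} (hu : u ∈ K) (hv : v ∈ K)
    {a b c d : ℝ} (o : IsOrbital u a b) (o' : IsOrbital v c d) (h1 : a < c) (h2 : c < b)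
    (h3 : b ≤ d) : ∃ e ∈ (⁅K, K⁆ : Subgroup PermR), NBy G e := by
  obtain ⟨n, hn⟩ := orb_sup hPL (hK hu) o h1 h2 h2
  have hun := zpow_mem hu n
  refine ⟨_, comm_mem' hPL hun hv, CH_core hPL (hK hun) (hK hv) o' (Or.inl rfl) hn ?_⟩
  have := (hPL _ (hK hun)).lt.2 h2
  rw [zpow_fix o.fixr] at this
  linarith

theorem CH_b (hPL : ∀ g ∈ G, IsPL g) {K : Subgroup PermR} (hK : K ≤ G) {u v : PermR} (hu : u ∈ K) (hv : v ∈ K)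
    {a b d : ℝ} (o : IsOrbital u a b) (o' : IsOrbital v a d) (h3 : b < d) :
    ∃ e ∈ (⁅K, K⁆ : Subgroup PermR), NBy G e := by
  obtain ⟨n, hn⟩ := orb_inf hPL (hK hv) o' o.1 h3 o.1
  have hvn := zpow_mem hv n
  refine ⟨_, comm_mem' hPL hvn hu, CH_core hPL (hK hvn) (hK hu) o (Or.inr rfl) ?_ hn⟩
  have := (hPL _ (hK hvn)).lt.2 o.1
  rw [zpow_fix o'.fixl] at this
  exact this

theorem CH (hPL : ∀ g ∈ G, IsPL g) {K : Subgroup PermR} (hK : K ≤ G) {u v : PermR} (hu : u ∈ K) (hv : v ∈ K)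
    {a b c d : ℝ} (o : IsOrbital u a b) (o' : IsOrbital v c d) (h1 : a < d) (h2 : c < b)
    (hne : ¬ (a = c ∧ b = d)) (hn1 : ¬ (a < c ∧ d < b)) (hn2 : ¬ (c < a ∧ b < d)) :
    ∃ e ∈ (⁅K, K⁆ : Subgroup PermR), NBy G e := by
  rcases lt_trichotomy a c with h | h | h
  · exact CH_a hPL hK hu hv o o' h h2 (not_lt.1 fun h' => hn1 ⟨h, h'⟩)
  · subst h
    rcases lt_trichotomy b d with h' | h' | h'
    · exact CH_b hPL hK hu hv o o' h'
    · exact absurd ⟨rfl, h'⟩ hne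
    · exact CH_b hPL hK hv hu o' o h'
  · exact CH_a hPL hK hv hu o' o h h1 (not_lt.1 fun h' => hn2 ⟨h, h'⟩)

theorem NE (hPL : ∀ g ∈ G, IsPL g) {K : Subgroup PermR} (hK : K ≤ G) {u v : PermR} (hu : u ∈ K) (hv : v ∈ K)
    {a b c d : ℝ} (o : IsOrbital u a b) (o' : IsOrbital v c d) (h1 : c < a) (h2 : b < d) :
    (∃ e ∈ (⁅K, K⁆ : Subgroup PermR), NBy G e) ∨
      ∃ e ∈ (⁅K, K⁆ : Subgroup PermR), IsOrbital e a b := by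
  by_cases hno : ∃ e ∈ (⁅K, K⁆ : Subgroup PermR), NBy G e
  · exact Or.inl hno
  right
  have hU := hPL u (hK hu)
  have hfd : ap u d = d := by
    by_contra hm
    obtain ⟨p, q, op, hp, hq⟩ := hU.exists_orbital hm
    have hpb : b ≤ p := by
      by_contra hc
      exact op.ne (not_le.1 hc) (h2.trans hq) o.fixr
    have hab := o.1
    exact hno (CH hPL hK hu hv op o' hp (by linarith) (fun h => by linarith [h.2])
      (fun h => by linarith [h.1]) (fun h => by linarith [h.2]))
  have hLT : LT u d := by
    by_contra hm
    obtain ⟨e, oe⟩ := hU.left_orbital hfd hm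
    have hpb : b ≤ e := by
      by_contra hc
      exact oe.ne (not_le.1 hc) h2 o.fixr
    have hab := o.1
    exact hno (CH hPL hK hu hv oe o' oe.1 (by linarith) (fun h => by linarith [h.1])
      (fun h => by linarith [h.1]) (fun h => by linarith [h.2]))
  obtain ⟨f, hf, hid⟩ := hLT
  have had : a < d := o.1.trans h2
  obtain ⟨n, hn⟩ := orb_sup hPL (hK hv) o' h1 had hf
  have hvn := zpow_mem hv n
  have hV := hPL _ (hK hvn)
  have hag : ∀ z ∈ Icc a b, ap (u * v ^ n * u⁻¹ * (v ^ n)⁻¹) z = ap u z := by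
    intro z hz
    have hz1 : a ≤ ap u z := by have := hU.le.2 hz.1; rwa [o.fixl] at this
    have hz2 : ap u z ≤ b := by have := hU.le.2 hz.2; rwa [o.fixr] at this
    have e1 : ap u⁻¹ (ap (v ^ n) (ap u z)) = ap (v ^ n) (ap u z) := by
      apply ap_inv_fix
      apply hid
      constructor
      · have := hV.le.2 hz1; linarith
      · have := hV.lt.2 (hz2.trans_lt h2); rw [zpow_fix o'.fixr] at this; exact this.le
    rw [ap_mul, ap_mul, ap_mul, e1, ap_inv_ap]
  refine ⟨_, comm_mem' hPL hu hvn, o.1, ?_, ?_, ?_⟩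
  · intro z hz
    show ap _ z ≠ z
    rw [hag z ⟨hz.1.le, hz.2.le⟩]; exact o.ne hz.1 hz.2
  · rw [nSupp, hag a ⟨le_rfl, o.1.le⟩, o.fixl]
  · rw [nSupp, hag b ⟨o.1.le, le_rfl⟩, o.fixr]

theorem pairNB (hPL : ∀ g ∈ G, IsPL g) {K : Subgroup PermR} (hK : K ≤ G) {u v : PermR} (hu : u ∈ K) (hv : v ∈ K)
    {a b c d : ℝ} (o : IsOrbital u a b) (o' : IsOrbital v c d) (nb : NB G a b) (nb' : NB G c d)
    (h1 : a < d) (h2 : c < b) (hne : ¬ (a = c ∧ b = d)) :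
    ∃ e ∈ (⁅K, K⁆ : Subgroup PermR), NBy G e := by
  by_cases hn1 : a < c ∧ d < b
  · rcases NE hPL hK hv hu o' o hn1.1 hn1.2 with h | ⟨e, he, oe⟩
    · exact h
    · exact ⟨e, he, c, d, oe, nb'⟩
  by_cases hn2 : c < a ∧ b < d
  · rcases NE hPL hK hu hv o o' hn2.1 hn2.2 with h | ⟨e, he, oe⟩
    · exact h
    · exact ⟨e, he, a, b, oe, nb⟩
  exact CH hPL hK hu hv o o' h1 h2 hne hn1 hn2

theorem NBlem (hPL : ∀ g ∈ G, IsPL g) {K : Subgroup PermR} (hK : K ≤ G) {x h : PermR} {a b : ℝ} (o : IsOrbital x a b)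
    (hh : h ∈ G) (h1 : ap h a < b) (h2 : a < ap h b) (h3 : ¬ (ap h a = a ∧ ap h b = b))
    (hx : x ∈ K) (hxh : h⁻¹ * x * h ∈ K) : ∃ e ∈ (⁅K, K⁆ : Subgroup PermR), NBy G e := by
  have nb : NB G a b := ⟨h, hh, h1, h2, h3⟩
  exact pairNB hPL hK hx hxh o (o.conj (hPL h hh)) nb (nb.conj hPL hh) h2 h1
    (fun e => h3 ⟨e.1.symm, e.2.symm⟩)

end CHsec
end PLPaper

open Set
open scoped commutatorElement
namespace PLPaper

/-- component of `E` -/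
def IsComp (E : Set ℝ) (α β : ℝ) : Prop := α < β ∧ Ioo α β ⊆ E ∧ α ∉ E ∧ β ∉ E

/-- `E` is an invariant union of non-block orbitals. -/
def Fam (G : Subgroup PermR) (E : Set ℝ) : Prop :=
  Inv G E ∧ ∀ z ∈ E, ∃ x ∈ G, ∃ a b, IsOrbital x a b ∧ NB G a b ∧ a < z ∧ z < b ∧ Ioo a b ⊆ E

/-- stabilizer of the interval -/
def GZ (G : Subgroup PermR) (α β : ℝ) : Subgroup PermR where
  carrier := {g | g ∈ G ∧ ap g α = α ∧ ap g β = β}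
  one_mem' := ⟨one_mem _, rfl, rfl⟩
  mul_mem' := fun {x y} hx hy => ⟨mul_mem hx.1 hy.1, by rw [ap_mul, hx.2.1, hy.2.1],
    by rw [ap_mul, hx.2.2, hy.2.2]⟩
  inv_mem' := fun {x} hx => ⟨inv_mem hx.1, ap_inv_fix hx.2.1, ap_inv_fix hx.2.2⟩

theorem mem_GZ {G : Subgroup PermR} {α β : ℝ} {g : PermR} :
    g ∈ GZ G α β ↔ g ∈ G ∧ ap g α = α ∧ ap g β = β := Iff.rfl

theorem comp_le {E E' : Set ℝ} {a b α β z : ℝ} (h' : Ioo a b ⊆ E') (hs : E' ⊆ E)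
    (h : IsComp E α β) (h1 : a < z) (h2 : z < b) (h3 : α < z) (h4 : z < β) : α ≤ a ∧ b ≤ β := by
  constructor
  · by_contra hc
    exact h.2.2.1 (hs (h' ⟨not_le.1 hc, h3.trans h2⟩))
  · by_contra hc
    exact h.2.2.2 (hs (h' ⟨h1.trans h4, not_le.1 hc⟩))

theorem comp_unique {E : Set ℝ} {a b α β z : ℝ} (h' : IsComp E a b)
    (h : IsComp E α β) (h1 : a < z) (h2 : z < b) (h3 : α < z) (h4 : z < β) : a = α ∧ b = β := by
  have q1 := comp_le h'.2.1 subset_rfl h h1 h2 h3 h4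
  have q2 := comp_le h.2.1 subset_rfl h' h3 h4 h1 h2
  exact ⟨le_antisymm q2.1 q1.1, le_antisymm q1.2 q2.2⟩

section comps
variable {G : Subgroup PermR}

theorem Fam.ioo (hPL : ∀ g ∈ G, IsPL g) {E : Set ℝ} (hE : Fam G E) {z : ℝ} (hz : z ∈ E) : 0 < z ∧ z < 1 := by
  obtain ⟨x, hx, a, b, o, -, h1, h2, -⟩ := hE.2 z hz
  exact (hPL x hx).moved (o.ne h1 h2)

theorem Fam.exists_comp (hPL : ∀ g ∈ G, IsPL g) {E : Set ℝ} (hE : Fam G E) {z : ℝ} (hz : z ∈ E) :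
    ∃ α β, IsComp E α β ∧ α < z ∧ z < β := by
  have hz01 := hE.ioo hPL hz
  set A := {t | t ∉ E ∧ t ≤ z} with hAdef
  set B := {t | t ∉ E ∧ z ≤ t} with hBdef
  have hA0 : (0:ℝ) ∈ A := ⟨fun h => lt_irrefl _ (hE.ioo hPL h).1, hz01.1.le⟩
  have hB0 : (1:ℝ) ∈ B := ⟨fun h => lt_irrefl _ (hE.ioo hPL h).2, hz01.2.le⟩
  have hAb : BddAbove A := ⟨z, fun t ht => ht.2⟩
  have hBb : BddBelow B := ⟨z, fun t ht => ht.2⟩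
  have hA : sSup A ∉ E := by
    intro h
    obtain ⟨x, hx, a, b, o, -, h1, h2, h3⟩ := hE.2 _ h
    obtain ⟨t, ht, hlt⟩ := exists_lt_of_lt_csSup ⟨_, hA0⟩ h1
    exact ht.1 (h3 ⟨hlt, (le_csSup hAb ht).trans_lt h2⟩)
  have hB : sInf B ∉ E := by
    intro h
    obtain ⟨x, hx, a, b, o, -, h1, h2, h3⟩ := hE.2 _ h
    obtain ⟨t, ht, hlt⟩ := exists_lt_of_csInf_lt ⟨_, hB0⟩ h2
    exact ht.1 (h3 ⟨h1.trans_le (csInf_le hBb ht), hlt⟩)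
  have ha : sSup A < z := lt_of_le_of_ne (csSup_le ⟨_, hA0⟩ fun t ht => ht.2)
    (fun h => hA (h ▸ hz))
  have hb : z < sInf B := lt_of_le_of_ne (le_csInf ⟨_, hB0⟩ fun t ht => ht.2)
    (fun h => hB (h ▸ hz))
  refine ⟨sSup A, sInf B, ⟨ha.trans hb, ?_, hA, hB⟩, ha, hb⟩
  intro t ht
  by_contra htt
  rcases le_total t z with h | h
  · exact absurd (le_csSup hAb (⟨htt, h⟩ : t ∈ A)) (not_le.2 ht.1)
  · exact absurd (csInf_le hBb (⟨htt, h⟩ : t ∈ B)) (not_le.2 ht.2)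

theorem IsComp.conj (hPL : ∀ g ∈ G, IsPL g) {E : Set ℝ} (hE : Inv G E) {α β : ℝ} (h : IsComp E α β) {g : PermR}
    (hg : g ∈ G) : IsComp E (ap g α) (ap g β) := by
  have hG := hPL g hg
  refine ⟨hG.lt.2 h.1, ?_, fun h' => h.2.2.1 (hE.back hPL hg h'),
    fun h' => h.2.2.2 (hE.back hPL hg h')⟩
  intro t ht
  have : ap g⁻¹ t ∈ E := by
    apply h.2.1
    constructor
    · rw [← hG.lt, ap_ap_inv]; exact ht.1
    · rw [← hG.lt, ap_ap_inv]; exact ht.2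
  have := hE g hg _ this
  rwa [ap_ap_inv] at this

theorem IsComp.map_fix (hPL : ∀ g ∈ G, IsPL g) {E : Set ℝ} (hE : Inv G E) {α β : ℝ} (h : IsComp E α β) {g : PermR}
    (hg : g ∈ G) {z : ℝ} (h1 : α < z) (h2 : z < β) (h3 : α < ap g z) (h4 : ap g z < β) :
    g ∈ GZ G α β := by
  have hG := hPL g hg
  have := comp_unique (h.conj hPL hE hg) h (hG.lt.2 h1) (hG.lt.2 h2) h3 h4
  exact ⟨hg, this.1, this.2⟩

theorem IsComp.fix_of_fix (hPL : ∀ g ∈ G, IsPL g) {E : Set ℝ} (hE : Inv G E) {α β : ℝ} (h : IsComp E α β) {g : PermR}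
    (hg : g ∈ G) {z : ℝ} (h1 : α < z) (h2 : z < β) (h3 : ap g z = z) : g ∈ GZ G α β :=
  h.map_fix hPL hE hg h1 h2 (by rwa [h3]) (by rwa [h3])

theorem IsComp.fix_of_fixl (hPL : ∀ g ∈ G, IsPL g) {E : Set ℝ} (hE : Inv G E) {α β : ℝ} (h : IsComp E α β) {g : PermR}
    (hg : g ∈ G) (h3 : ap g α = α) : g ∈ GZ G α β := by
  have c := h.conj hPL hE hg
  rw [h3] at c
  have := h.1
  have := c.1
  have m1 : α < min β (ap g β) := lt_min h.1 c.1
  have q := comp_unique c h (z := (α + min β (ap g β))/2) (by linarith)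
    (by have := min_le_right β (ap g β); linarith) (by linarith)
    (by have := min_le_left β (ap g β); linarith)
  exact ⟨hg, h3, q.2⟩

theorem IsComp.fix_of_fixr (hPL : ∀ g ∈ G, IsPL g) {E : Set ℝ} (hE : Inv G E) {α β : ℝ} (h : IsComp E α β) {g : PermR}
    (hg : g ∈ G) (h3 : ap g β = β) : g ∈ GZ G α β := by
  have c := h.conj hPL hE hg
  rw [h3] at c
  have := h.1
  have := c.1
  have m1 : max α (ap g α) < β := max_lt h.1 c.1
  have q := comp_unique c h (z := (β + max α (ap g α))/2) 
    (by have := le_max_right α (ap g α); linarith) (by linarith) 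
    (by have := le_max_left α (ap g α); linarith) (by linarith) 
  exact ⟨hg, q.1, h3⟩

theorem abel_orb_l (hPL : ∀ g ∈ G, IsPL g) {x h : PermR} (hx : x ∈ G) (hh : h ∈ G) {a b z : ℝ} (o : IsOrbital x a b)
    (h1 : a < z) (h2 : z < b) (hc : ∀ n : ℤ, ap (x ^ n) (ap h z) = ap h (ap (x ^ n) z))
    (h3 : a < ap h a) (h4 : ap h a < b) : False := by
  have hH := hPL h hh
  have hz : ap h a < ap h z := hH.lt.2 h1
  rcases lt_or_ge (ap h z) b with h' | h'
  · obtain ⟨n, hn⟩ := orb_inf hPL hx o (h3.trans hz) h' h3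
    rw [hc, hH.lt] at hn
    have := (hPL _ (zpow_mem hx n)).lt.2 h1
    rw [zpow_fix o.fixl] at this
    linarith
  · have hb : a < ap h⁻¹ b := by rw [← hH.lt, ap_ap_inv]; exact h4
    obtain ⟨n, hn⟩ := orb_inf hPL hx o h1 h2 hb
    rw [← hH.lt, ap_ap_inv, ← hc] at hn
    have := (hPL _ (zpow_mem hx n)).le.2 h'
    rw [zpow_fix o.fixr] at this
    linarith

theorem abel_orb_r (hPL : ∀ g ∈ G, IsPL g) {x h : PermR} (hx : x ∈ G) (hh : h ∈ G) {a b z : ℝ} (o : IsOrbital x a b)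
    (h1 : a < z) (h2 : z < b) (hc : ∀ n : ℤ, ap (x ^ n) (ap h z) = ap h (ap (x ^ n) z))
    (h3 : a < ap h b) (h4 : ap h b < b) : False := by
  have hH := hPL h hh
  have hz : ap h z < ap h b := hH.lt.2 h2
  rcases lt_or_ge a (ap h z) with h' | h'
  · obtain ⟨n, hn⟩ := orb_sup hPL hx o h' (hz.trans h4) h4
    rw [hc, hH.lt] at hn
    have := (hPL _ (zpow_mem hx n)).lt.2 h2
    rw [zpow_fix o.fixr] at this
    linarith
  · have hb : ap h⁻¹ a < b := by rw [← hH.lt, ap_ap_inv]; exact h3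
    obtain ⟨n, hn⟩ := orb_sup hPL hx o h1 h2 hb
    rw [← hH.lt, ap_ap_inv, ← hc] at hn
    have := (hPL _ (zpow_mem hx n)).le.2 h'
    rw [zpow_fix o.fixl] at this
    linarith

theorem DM (hPL : ∀ g ∈ G, IsPL g) {E : Set ℝ} (hE : Fam G E) {α β z : ℝ} (hZ : IsComp E α β) (hz1 : α < z)
    (hz2 : z < β) : ∃ x ∈ (⁅GZ G α β, GZ G α β⁆ : Subgroup PermR), ap x z ≠ z := by
  by_contra! hcon
  obtain ⟨x, hx, a, b, o, ⟨h, hh, n1, n2, n3⟩, h1, h2, hs⟩ := hE.2 z (hZ.2.1 ⟨hz1, hz2⟩)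
  have hX := hPL x hx
  have hH := hPL h hh
  have hab := comp_le hs subset_rfl hZ h1 h2 hz1 hz2
  have hxZ : x ∈ GZ G α β := by
    apply hZ.map_fix hPL hE.1 hx hz1 hz2
    · have := hX.lt.2 h1; rw [o.fixl] at this; linarith
    · have := hX.lt.2 h2; rw [o.fixr] at this; linarith
  have hhZ : h ∈ GZ G α β := by
    set m1 := max a (ap h a)
    set m2 := min b (ap h b)
    have hm : m1 < m2 := max_lt (lt_min o.1 n2) (lt_min n1 (hH.lt.2 o.1))
    have e1 : a ≤ m1 := le_max_left _ _
    have e2 : ap h a ≤ m1 := le_max_right _ _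
    have e3 : m2 ≤ b := min_le_left _ _
    have e4 : m2 ≤ ap h b := min_le_right _ _
    have q1 : a < ap h⁻¹ ((m1+m2)/2) := by rw [← hH.lt, ap_ap_inv]; linarith
    have q2 : ap h⁻¹ ((m1+m2)/2) < b := by rw [← hH.lt, ap_ap_inv]; linarith
    apply hZ.map_fix hPL hE.1 hh (z := ap h⁻¹ ((m1+m2)/2))
    · linarith
    · linarith
    · rw [ap_ap_inv]; linarith
    · rw [ap_ap_inv]; linarith
  have key : ∀ k ∈ GZ G α β, ∀ n : ℤ, ap (x ^ n) (ap k z) = ap k (ap (x ^ n) z) := by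
    intro k hk n
    have := hcon _ (comm_mem' hPL hk (zpow_mem hxZ n))
    rwa [comm_fix_iff hPL] at this
  have hd : ∀ k ∈ GZ G α β, ¬ (a < ap k a ∧ ap k a < b) := fun k hk hh =>
    abel_orb_l hPL hx hk.1 o h1 h2 (key k hk) hh.1 hh.2
  have hd' : ∀ k ∈ GZ G α β, ¬ (a < ap k b ∧ ap k b < b) := fun k hk hh =>
    abel_orb_r hPL hx hk.1 o h1 h2 (key k hk) hh.1 hh.2
  have c1 : ap h a ≤ a := not_lt.1 fun hc => hd h hhZ ⟨hc, n1⟩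
  have c2 : b ≤ ap h b := not_lt.1 fun hc => hd' h hhZ ⟨n2, hc⟩
  have hab' := o.1
  have d1 : a ≤ ap h⁻¹ a := by rw [← hH.le, ap_ap_inv]; exact c1
  have d1' : ap h⁻¹ a < b := by rw [← hH.lt, ap_ap_inv]; linarith
  have d2 : ap h⁻¹ b ≤ b := by rw [← hH.le, ap_ap_inv]; exact c2
  have d2' : a < ap h⁻¹ b := by rw [← hH.lt, ap_ap_inv]; linarith
  apply n3
  constructor
  · have : ap h⁻¹ a = a := le_antisymm (not_lt.1 fun hc => hd _ (inv_mem hhZ) ⟨hc, d1'⟩) d1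
    rw [ap_inv_eq] at this; exact this.symm
  · have : ap h⁻¹ b = b := le_antisymm d2 (not_lt.1 fun hc => hd' _ (inv_mem hhZ) ⟨d2', hc⟩)
    rw [ap_inv_eq] at this; exact this.symm

theorem GZ_comm_RT (hPL : ∀ g ∈ G, IsPL g) {α β : ℝ} {x : PermR} (hx : x ∈ (⁅GZ G α β, GZ G α β⁆ : Subgroup PermR)) :
    RT x α ∧ LT x β :=
  ⟨RT_of_comm (K := GZ G α β) (fun k hk => hPL k hk.1) (fun k hk => hk.2.1) hx,
    LT_of_comm (K := GZ G α β) (fun k hk => hPL k hk.1) (fun k hk => hk.2.2) hx⟩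

theorem GZ_comm_mem (hPL : ∀ g ∈ G, IsPL g) {α β : ℝ} {x : PermR} (hx : x ∈ (⁅GZ G α β, GZ G α β⁆ : Subgroup PermR)) :
    x ∈ GZ G α β := by
  have : (⁅GZ G α β, GZ G α β⁆ : Subgroup PermR) ≤ GZ G α β := by
    rw [Subgroup.commutator_le]
    intro u hu v hv
    exact mul_mem (mul_mem (mul_mem hu hv) (inv_mem hu)) (inv_mem hv)
  exact this hx

/-- A breakpoint inside the component. -/
theorem DM_break (hPL : ∀ g ∈ G, IsPL g) {E : Set ℝ} (hE : Fam G E) {X : Set PermR} (hX : Subgroup.closure X = G)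
    {α β z : ℝ} (hZ : IsComp E α β) (hz1 : α < z) (hz2 : z < β) :
    ∃ x ∈ GZ G α β, ∃ L, α < L ∧ L < z ∧ LT x L ∧ ¬ RT x L ∧ (∀ y, L < y → y ≤ z → ¬ LT x y) ∧
      ∃ p ∈ BreakSet X, ∃ g ∈ G, L = ap g p := by
  obtain ⟨x, hx, hm⟩ := DM hPL hE hZ hz1 hz2
  have hxZ := GZ_comm_mem hPL hx
  have hPx := hPL x hxZ.1
  obtain ⟨L, l0, l1, l2, l3, l4⟩ := hPx.lastTriv hm
  obtain ⟨⟨e, he, H⟩, -⟩ := GZ_comm_RT hPL hx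
  have hL : α < L := by
    by_contra hc
    rw [not_lt] at hc
    have f : α < min e z := lt_min he hz1
    exact l4 (min e z) (by linarith) (min_le_right _ _)
      ⟨α, f, fun t ht => H t ⟨ht.1, ht.2.trans (min_le_left _ _)⟩⟩
  have h01 := hE.ioo hPL (hZ.2.1 ⟨hL, l1.trans hz2⟩)
  have hb := break_of_LT_not_RT h01.1 h01.2 l2 l3
  exact ⟨x, hxZ, L, hL, l1, l2, l3, l4, break_form hPL hX x hxZ.1 L hb⟩

theorem nested_comp (hPL : ∀ g ∈ G, IsPL g) {E E' : Set ℝ} (hE : Fam G E) (hE' : Fam G E') (hs : E' ⊆ E) {a b α β p : ℝ}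
    (hV : IsComp E' a b) (hZ : IsComp E α β) (h1 : a < p) (h2 : p < b) (h3 : α < p) (h4 : p < β) :
    (a = α ∧ b = β) ∨ (α < a ∧ b < β) := by
  obtain ⟨q1, q2⟩ := comp_le hV.2.1 hs hZ h1 h2 h3 h4
  rcases eq_or_lt_of_le q1 with e1 | e1
  · rcases eq_or_lt_of_le q2 with e2 | e2
    · exact Or.inl ⟨e1.symm, e2⟩
    · exfalso
      obtain ⟨x, hx, hm⟩ := DM hPL hE hZ (z := b) (by linarith [hV.1]) e2
      have hxZ := GZ_comm_mem hPL hx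
      exact hm (hV.fix_of_fixl hPL hE'.1 hxZ.1 (by rw [← e1]; exact hxZ.2.1)).2.2
  · rcases eq_or_lt_of_le q2 with e2 | e2
    · exfalso
      obtain ⟨x, hx, hm⟩ := DM hPL hE hZ (z := a) e1 (by linarith [hV.1])
      have hxZ := GZ_comm_mem hPL hx
      exact hm (hV.fix_of_fixr hPL hE'.1 hxZ.1 (by rw [e2]; exact hxZ.2.2)).2.1
    · exact Or.inr ⟨e1, e2⟩

theorem DCC (hPL : ∀ g ∈ G, IsPL g) {X : Set PermR} (hXf : X.Finite) (hX : Subgroup.closure X = G) (E : ℕ → Set ℝ)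
    (hE : ∀ i, Fam G (E i)) (hant : ∀ i j, i ≤ j → E j ⊆ E i) : ∃ i, ∀ j ≥ i, E j = E i := by
  have hfin : (BreakSet X).Finite := BreakSet_finite hXf
    (fun x hx => hPL x (hX ▸ Subgroup.subset_closure hx))
  by_cases hA : ∀ p ∈ BreakSet X, (∃ i, p ∉ E i) ∨
      ∃ i α β, α < p ∧ p < β ∧ ∀ j ≥ i, IsComp (E j) α β
  · -- stabilisation
    have : ∀ p, ∃ i, p ∈ BreakSet X → (p ∉ E i ∨ ∃ α β, α < p ∧ p < β ∧ ∀ j ≥ i, IsComp (E j) α β) := by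
      intro p
      by_cases hp : p ∈ BreakSet X
      · rcases hA p hp with ⟨i, h⟩ | ⟨i, α, β, h⟩
        · exact ⟨i, fun _ => Or.inl h⟩
        · exact ⟨i, fun _ => Or.inr ⟨α, β, h⟩⟩
      · exact ⟨0, fun h => absurd h hp⟩
    choose f hf using this
    obtain ⟨N, hN⟩ := (hfin.image f).bddAbove
    refine ⟨N, fun j hj => Subset.antisymm (hant _ _ hj) fun z hz => ?_⟩
    obtain ⟨α, β, hZ, h1, h2⟩ := (hE N).exists_comp hPL hz
    obtain ⟨x, hx, L, l1, l2, -, -, -, p, hp, g, hg, rfl⟩ := DM_break hPL (hE N) hX hZ h1 h2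
    have hpN : p ∈ E N := (hE N).1.back hPL hg (hZ.2.1 ⟨l1, l2.trans h2⟩)
    have hfN : f p ≤ N := hN ⟨p, hp, rfl⟩
    rcases hf p hp with h | ⟨γ, δ, g1, g2, h⟩
    · exact absurd (hant _ _ hfN hpN) h
    · have c1 := (h N hfN).conj hPL (hE N).1 hg
      have c2 := (h j (hfN.trans hj)).conj hPL (hE j).1 hg
      have hG := hPL g hg
      obtain ⟨e1, e2⟩ := comp_unique c1 hZ (hG.lt.2 g1) (hG.lt.2 g2) l1 (l2.trans h2)
      rw [e1, e2] at c2
      exact c2.2.1 ⟨h1, h2⟩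
  · exfalso
    push Not at hA
    obtain ⟨p, hpB, hpE, hns⟩ := hA
    -- T
    set T : ℕ → Set ℝ := fun i => {p' ∈ BreakSet X | ∃ g ∈ G, ∃ α β, IsComp (E i) α β ∧
      α < p ∧ p < β ∧ α < ap g p' ∧ ap g p' < β} with hT
    have hTfin : ∀ i, (T i).Finite := fun i => hfin.subset fun _ h => h.1
    have hTant : ∀ i j, i ≤ j → T j ⊆ T i := by
      rintro i j hij p' ⟨hp', g, hg, α, β, hc, h1, h2, h3, h4⟩
      obtain ⟨γ, δ, hc', h1', h2'⟩ := (hE i).exists_comp hPL (hpE i)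
      obtain ⟨q1, q2⟩ := comp_le hc.2.1 (hant _ _ hij) hc' h1 h2 h1' h2'
      exact ⟨hp', g, hg, γ, δ, hc', h1', h2', by linarith, by linarith⟩
    obtain ⟨i0, hi0⟩ : ∃ i0, ∀ j ≥ i0, T j = T i0 := by
      have hne : (Set.range fun i => (T i).ncard).Nonempty := ⟨_, 0, rfl⟩
      obtain ⟨i0, h0⟩ : sInf (Set.range fun i => (T i).ncard) ∈ _ := Nat.sInf_mem hne
      refine ⟨i0, fun j hj => eq_of_subset_of_ncard_le (hTant _ _ hj) ?_ (hTfin i0)⟩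
      have : sInf (Set.range fun i => (T i).ncard) ≤ (T j).ncard := Nat.sInf_le ⟨j, rfl⟩
      rw [← h0] at this
      exact this
    obtain ⟨α, β, hZ, hα, hβ⟩ := (hE i0).exists_comp hPL (hpE i0)
    obtain ⟨i1, hi1, hn1⟩ := hns i0 α β hα hβ
    obtain ⟨α1, β1, hV, hα1, hβ1⟩ := (hE i1).exists_comp hPL (hpE i1)
    have hne : α < α1 ∧ β1 < β := by
      rcases nested_comp hPL (hE i0) (hE i1) (hant _ _ hi1) hV hZ hα1 hβ1 hα hβ with h | h
      · rw [h.1, h.2] at hV; exact absurd hV hn1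
      · exact h
    obtain ⟨x, hx, L, l1, l2, l3, l4, l5, p', hp', g, hg, hLg⟩ :=
      DM_break hPL (hE i0) hX hZ (z := β1) (by linarith) hne.2
    have hpT : p' ∈ T i0 := ⟨hp', g, hg, α, β, hZ, hα, hβ, by rw [← hLg]; exact l1,
      by rw [← hLg]; linarith [hne.2]⟩
    have hpT' : ∀ i ≥ i0, ∃ g ∈ G, ∃ α β, IsComp (E i) α β ∧
        α < p ∧ p < β ∧ α < ap g p' ∧ ap g p' < β := by
      intro i hi
      rw [← hi0 i hi] at hpT
      exact hpT.2
    have hLE : ∀ i ≥ i0, L ∈ E i := by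
      intro i hi
      obtain ⟨g', hg', a, b, hc, -, -, h3, h4⟩ := hpT' i hi
      have := (hE i).1.back hPL hg' (hc.2.1 ⟨h3, h4⟩)
      rw [hLg]; exact (hE i).1 g hg _ this
    have hcomp : ∀ i, ∃ a b, i ≥ i0 → (IsComp (E i) a b ∧ a < L ∧ L < b) := by
      intro i
      by_cases hi : i ≥ i0
      · obtain ⟨a, b, h⟩ := (hE i).exists_comp hPL (hLE i hi)
        exact ⟨a, b, fun _ => h⟩
      · exact ⟨0, 0, fun h => absurd h hi⟩
    choose a b hab using hcomp
    have hxG := hx.1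
    have hbfix : ∀ i ≥ i1, ap x (b i) = b i ∧ ¬ LT x (b i) := by
      intro i hi
      obtain ⟨c1, c2, c3⟩ := hab i (hi1.trans hi)
      refine ⟨(c1.fix_of_fix hPL (hE i).1 hxG c2 c3 l3.fix).2.2, l5 _ c3 ?_⟩
      by_contra hc
      exact hV.2.2.2 (hant _ _ hi (c1.2.1 ⟨by linarith, not_le.1 hc⟩))
    have hbfin : (b '' Ici i1).Finite := by
      refine ((hPL x hxG).finite_bd).subset ?_
      rintro _ ⟨i, hi, rfl⟩
      exact ⟨(hbfix i hi).1, Or.inr (hbfix i hi).2⟩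
    obtain ⟨_, ⟨i2, hi2, rfl⟩, hmin⟩ := Set.exists_min_image _ id hbfin ⟨_, i1, le_refl i1, rfl⟩
    have hi2 : i1 ≤ i2 := hi2
    have hconst : ∀ i ≥ i2, a i = a i2 ∧ b i = b i2 := by
      intro i hi
      have q1 := hab i (hi1.trans (hi2.trans hi))
      have q2 := hab i2 (hi1.trans hi2)
      rcases nested_comp hPL (hE i2) (hE i) (hant _ _ hi) q1.1 q2.1 q1.2.1 q1.2.2 q2.2.1 q2.2.2
        with h | h
      · exact h
      · have : b i2 ≤ b i := hmin (b i) ⟨i, hi2.trans hi, rfl⟩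
        linarith [h.2]
    obtain ⟨γ, δ, hW, hγ, hδ⟩ := (hE i2).exists_comp hPL (hpE i2)
    obtain ⟨j, hj, hnj⟩ := hns i2 γ δ hγ hδ
    apply hnj
    obtain ⟨g', hg', γ', δ', hc, c1, c2, c3, c4⟩ := hpT' j (hi1.trans (hi2.trans hj))
    obtain ⟨k1, k2⟩ := comp_le hc.2.1 (hant _ _ hj) hW c1 c2 hγ hδ
    have q1 := hab j (hi1.trans (hi2.trans hj))
    have q2 := hab i2 (hi1.trans hi2)
    rw [(hconst j hj).1, (hconst j hj).2] at q1
    set k := g⁻¹ * g' with hk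
    have hkG : k ∈ G := mul_mem (inv_mem hg) hg'
    have hkL : ap k L = ap g' p' := by rw [hk, ap_mul, hLg, ap_inv_ap]
    have hK := hPL k hkG
    have r1 := q1.1.conj hPL (hE j).1 hkG
    have r2 := q2.1.conj hPL (hE i2).1 hkG
    have s1 := hK.lt.2 q1.2.1
    have s2 := hK.lt.2 q1.2.2
    obtain ⟨e1, e2⟩ := comp_unique r2 hW s1 s2 (by rw [hkL]; linarith) (by rw [hkL]; linarith)
    rw [e1, e2] at r1
    exact r1

end comps
end PLPaper

open Set
open scoped commutatorElement
namespace PLPaper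

/-- elements supported in `A` -/
def FixOut (A : Set ℝ) : Subgroup PermR where
  carrier := {x | ∀ z ∉ A, ap x z = z}
  one_mem' := fun _ _ => rfl
  mul_mem' := fun {x y} hx hy z hz => by rw [ap_mul, hx z hz, hy z hz]
  inv_mem' := fun {x} hx z hz => ap_inv_fix (hx z hz)

/-- elements fixing `A` pointwise -/
def FixIn (A : Set ℝ) : Subgroup PermR where
  carrier := {x | ∀ z ∈ A, ap x z = z}
  one_mem' := fun _ _ => rfl
  mul_mem' := fun {x y} hx hy z hz => by rw [ap_mul, hx z hz, hy z hz]
  inv_mem' := fun {x} hx z hz => ap_inv_fix (hx z hz)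

/-- elements preserving `I` and commuting with `b` there -/
def CentOn (I : Set ℝ) (b : PermR) : Subgroup PermR where
  carrier := {k | (∀ z, ap k z ∈ I ↔ z ∈ I) ∧ ∀ z ∈ I, ap b (ap k z) = ap k (ap b z)}
  one_mem' := ⟨fun _ => Iff.rfl, fun _ _ => rfl⟩
  mul_mem' := fun {x y} hx hy => ⟨fun z => by rw [ap_mul, hy.1, hx.1], fun z hz => by
    rw [ap_mul, hy.2 _ ((hx.1 z).2 hz), hx.2 z hz, ap_mul]⟩
  inv_mem' := fun {x} hx => by
    have h1 : ∀ z, ap x⁻¹ z ∈ I ↔ z ∈ I := fun z => by rw [← hx.1, ap_ap_inv]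
    refine ⟨h1, fun z hz => ?_⟩
    have := hx.2 _ ((h1 z).2 hz)
    rw [ap_ap_inv] at this
    rw [this, ap_inv_ap]

theorem CentOn.symm {I : Set ℝ} {b k : PermR} (hb : ∀ z, ap b z ∈ I ↔ z ∈ I) (h : k ∈ CentOn I b) :
    b ∈ CentOn I k := ⟨hb, fun z hz => (h.2 z hz).symm⟩

theorem comm_fix_iff' (u v : PermR) (c : ℝ) :
    ap (u * v * u⁻¹ * v⁻¹) c = c ↔ ap v (ap u c) = ap u (ap v c) := by
  rw [ap_mul, ap_mul, ap_mul, ap_inv_eq, ap_inv_eq]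

/-- groups generated by sets commuting on `I` -/
theorem cent_closure {I : Set ℝ} {A B : Set PermR} (hA : ∀ a ∈ A, ∀ z, ap a z ∈ I ↔ z ∈ I)
    (hB : ∀ a ∈ B, ∀ z, ap a z ∈ I ↔ z ∈ I)
    (hc : ∀ a ∈ A, ∀ b ∈ B, ∀ z ∈ I, ap b (ap a z) = ap a (ap b z)) :
    ∀ k ∈ Subgroup.closure A, ∀ l ∈ Subgroup.closure B, l ∈ CentOn I k := by
  have h1 : ∀ b ∈ B, Subgroup.closure A ≤ CentOn I b := fun b hb =>
    (Subgroup.closure_le _).2 fun a ha => ⟨hA a ha, hc a ha b hb⟩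
  intro k hk
  have : Subgroup.closure B ≤ CentOn I k := (Subgroup.closure_le _).2 fun b hb =>
    CentOn.symm (hB b hb) (h1 b hb hk)
  exact fun l hl => this hl

theorem AB {I : Set ℝ} {u v : PermR} (hu : ∀ z ∈ I, ap u z = z) (hu' : ∀ z, ap u z ∈ I ↔ z ∈ I)
    (hv : ∀ z, ap v z ∈ I ↔ z ∈ I) :
    (⁅Subgroup.closure {u, v}, Subgroup.closure {u, v}⁆ : Subgroup PermR) ≤ FixIn I := by
  rw [Subgroup.commutator_le]
  intro k hk l hl z hz
  have hp : ∀ a ∈ ({u, v} : Set PermR), ∀ z, ap a z ∈ I ↔ z ∈ I := by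
    rintro a (rfl | rfl)
    · exact hu'
    · exact hv
  have := cent_closure (I := I) hp hp (by
    rintro a (rfl | rfl) b (rfl | rfl) z hz
    · rfl
    · rw [hu z hz, hu _ ((hv z).2 hz)]
    · rw [hu z hz, hu _ ((hv z).2 hz)]
    · rfl) k hk l hl
  rw [commutatorElement_def, comm_fix_iff']
  exact (this.2 z hz).symm

/-- group supported in `E` -/
def QE (G : Subgroup PermR) (E : Set ℝ) : Subgroup PermR := G ⊓ FixOut E
/-- its derived group -/
def DE (G : Subgroup PermR) (E : Set ℝ) : Subgroup PermR := DS (QE G E) 1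

/-- admissible sets -/
def Adm (G : Subgroup PermR) (E : Set ℝ) : Prop := Fam G E ∧ ∃ x ∈ DE G E, NBy G x

/-- active components (left ends) -/
def act (E : Set ℝ) (w : PermR) : Set ℝ :=
  {α | ∃ β, IsComp E α β ∧ ∃ z, α < z ∧ z < β ∧ ap w z ≠ z}

theorem mem_FixOut_of_orb {G : Subgroup PermR} (hPL : ∀ g ∈ G, IsPL g) {E : Set ℝ} {x : PermR}
    (hx : x ∈ G) (h : ∀ a b, IsOrbital x a b → Ioo a b ⊆ E) : x ∈ FixOut E := by
  intro z hz
  by_contra hc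
  obtain ⟨a, b, o, h1, h2⟩ := (hPL x hx).exists_orbital hc
  exact hz (h a b o ⟨h1, h2⟩)

section adm
variable {G : Subgroup PermR}

theorem fam_union (hPL : ∀ g ∈ G, IsPL g) (P : PermR → Prop) (hP : ∀ g ∈ G, ∀ x, P x → P (g⁻¹ * x * g)) :
    Fam G {z | ∃ x ∈ G, P x ∧ ∃ a b, IsOrbital x a b ∧ NB G a b ∧ a < z ∧ z < b} := by
  constructor
  · rintro g hg z ⟨x, hx, px, a, b, o, nb, h1, h2⟩
    have hG := hPL g hg
    exact ⟨_, mul_mem (mul_mem (inv_mem hg) hx) hg, hP g hg x px, _, _, o.conj hG,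
      nb.conj hPL hg, hG.lt.2 h1, hG.lt.2 h2⟩
  · rintro z ⟨x, hx, px, a, b, o, nb, h1, h2⟩
    exact ⟨x, hx, a, b, o, nb, h1, h2, fun t ht => ⟨x, hx, px, a, b, o, nb, ht.1, ht.2⟩⟩

theorem exists_adm (hPL : ∀ g ∈ G, IsPL g) {X : Set PermR} (hXf : X.Finite) (hX : Subgroup.closure X = G)
    (hns : ¬ IsSolvable ↥G) : ∃ E, Adm G E := by
  have hF := fam_union hPL (fun _ => True) (fun _ _ _ _ => trivial)
  set E := {z | ∃ x ∈ G, True ∧ ∃ a b, IsOrbital x a b ∧ NB G a b ∧ a < z ∧ z < b} with hE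
  refine ⟨E, hF, ?_⟩
  by_contra! hc
  have h1 := Tow hPL hXf hX hF.1 le_rfl (fun x hx a b o hs nb => hs
    (fun z hz => ⟨x, hx, trivial, a, b, o, nb, hz.1, hz.2⟩))
  have h2 : DS G ((BreakSet X).ncard + 1) ≤ QE G E := fun y hy =>
    ⟨DS_le_self _ _ hy, mem_FixOut_of_orb hPL (DS_le_self _ _ hy) (h1 y hy)⟩
  have h3 : DS G ((BreakSet X).ncard + 1 + 1) ≤ DE G E := by
    rw [← DS_add]; exact DS_mono h2 1
  have h4 := Tow_bot hPL hXf hX (R := DE G E) ((DS_le_self _ _).trans inf_le_left) hc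
  have h5 := DS_mono h3 ((BreakSet X).ncard + 1)
  rw [h4, DS_add] at h5
  exact hns (solvable_of_DS G _ (le_bot_iff.1 h5))

theorem exists_min_adm (hPL : ∀ g ∈ G, IsPL g) {X : Set PermR} (hXf : X.Finite) (hX : Subgroup.closure X = G)
    (hns : ¬ IsSolvable ↥G) : ∃ E, Adm G E ∧ ∀ E', Adm G E' → E' ⊆ E → E' = E := by
  by_contra! hc
  obtain ⟨E0, hE0⟩ := exists_adm hPL hXf hX hns
  choose! f hf1 hf2 hf3 using hc
  set s : ℕ → Set ℝ := fun n => f^[n] E0 with hs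
  have hs1 : ∀ n, s (n+1) = f (s n) := fun n => by rw [hs]; exact Function.iterate_succ_apply' _ _ _
  have hadm : ∀ n, Adm G (s n) := by
    intro n
    induction n with
    | zero => exact hE0
    | succ n ih => rw [hs1]; exact hf1 _ ih
  have hant : Antitone s := antitone_nat_of_succ_le fun n => by rw [hs1]; exact hf2 _ (hadm n)
  obtain ⟨i, hi⟩ := DCC hPL hXf hX s (fun i => (hadm i).1) (fun i j h => hant h)
  have := hi (i+1) (by omega)
  rw [hs1] at this
  exact hf3 _ (hadm i) this

theorem QE_conj {E : Set ℝ} (hE : Inv G E) {g : PermR} (hg : g ∈ G) :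
    ∀ x ∈ QE G E, g⁻¹ * x * g ∈ QE G E := by
  rintro x ⟨hx, hx'⟩
  have hx : x ∈ G := hx
  refine ⟨(mul_mem (mul_mem (inv_mem hg) hx) hg : g⁻¹ * x * g ∈ G), fun z hz => ?_⟩
  have : ap g⁻¹ z ∉ E := fun h => hz (by have := hE g hg _ h; rwa [ap_ap_inv] at this)
  rw [ap_mul, ap_mul, hx' _ this, ap_ap_inv]

theorem DE_conj {E : Set ℝ} (hE : Inv G E) {g : PermR} (hg : g ∈ G) :
    ∀ x ∈ DE G E, g⁻¹ * x * g ∈ DE G E := DS_conj (QE_conj hE hg) 1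

theorem DE_le_G {E : Set ℝ} : DE G E ≤ G := fun x hx => (DS_le_self _ _ hx).1

theorem DE_fix {E : Set ℝ} {x : PermR} (hx : x ∈ DE G E) {z : ℝ} (hz : z ∉ E) : ap x z = z :=
  (DS_le_self _ _ hx).2 z hz

theorem DE_GZ {E : Set ℝ} {α β : ℝ} (hZ : IsComp E α β) {x : PermR} (hx : x ∈ DE G E) :
    x ∈ GZ G α β := ⟨DE_le_G hx, DE_fix hx hZ.2.2.1, DE_fix hx hZ.2.2.2⟩

theorem GZ_pres (hPL : ∀ g ∈ G, IsPL g) {α β : ℝ} {x : PermR} (hx : x ∈ GZ G α β) (z : ℝ) :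
    ap x z ∈ Ioo α β ↔ z ∈ Ioo α β := by
  have hX := hPL x hx.1
  constructor
  · rintro ⟨h1, h2⟩
    exact ⟨hX.lt.1 (by rwa [hx.2.1]), hX.lt.1 (by rwa [hx.2.2])⟩
  · rintro ⟨h1, h2⟩
    exact ⟨by have := hX.lt.2 h1; rwa [hx.2.1] at this, by have := hX.lt.2 h2; rwa [hx.2.2] at this⟩

theorem act_finite (hPL : ∀ g ∈ G, IsPL g) {E : Set ℝ} {x : PermR} (hx : x ∈ DE G E) : (act E x).Finite := by
  have hX := hPL x (DE_le_G hx)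
  have : ∀ α, ∃ a, α ∈ act E x → ((ap x a = a ∧ (¬ RT x a ∨ ¬ LT x a)) ∧ ∃ β, IsComp E α β ∧ α ≤ a ∧ a < β) := by
    intro α
    by_cases h : α ∈ act E x
    · obtain ⟨β, hc, z, h1, h2, h3⟩ := id h
      obtain ⟨a, b, o, h4, h5⟩ := hX.exists_orbital h3
      refine ⟨a, fun _ => ⟨⟨o.fixl, Or.inl o.not_RT⟩, β, hc, ?_, h4.trans h2⟩⟩
      by_contra hcon
      exact o.ne (not_le.1 hcon) (h1.trans h5) (DE_fix hx hc.2.2.1)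
    · exact ⟨0, fun h' => absurd h' h⟩
  choose f hf using this
  refine Set.Finite.of_injOn (f := f) (fun α hα => (hf α hα).1) ?_ hX.finite_bd
  intro α hα α' hα' heq
  obtain ⟨-, β, hc, h1, h2⟩ := hf α hα
  obtain ⟨-, β', hc', h1', h2'⟩ := hf α' hα'
  rw [← heq] at h1' h2'
  rcases lt_trichotomy α α' with h | h | h
  · exact absurd (hc.2.1 ⟨h, by linarith⟩) hc'.2.2.1
  · exact h
  · exact absurd (hc'.2.1 ⟨h, by linarith⟩) hc.2.2.1

theorem act_conj (hPL : ∀ g ∈ G, IsPL g) {E : Set ℝ} (hE : Inv G E) {g x : PermR} (hg : g ∈ G) :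
    act E (g⁻¹ * x * g) = ap g '' act E x := by
  have main : ∀ g ∈ G, ∀ x, ap g '' act E x ⊆ act E (g⁻¹ * x * g) := by
    rintro g hg x _ ⟨α, ⟨β, hc, z, h1, h2, h3⟩, rfl⟩
    have hG := hPL g hg
    refine ⟨ap g β, hc.conj hPL hE hg, ap g z, hG.lt.2 h1, hG.lt.2 h2, ?_⟩
    rw [ap_conj]; exact fun h => h3 (ap_inj g h)
  refine Subset.antisymm ?_ (main g hg x)
  intro α hα
  have := main g⁻¹ (inv_mem hg) _ ⟨α, hα, rfl⟩
  have e : g⁻¹⁻¹ * (g⁻¹ * x * g) * g⁻¹ = x := by group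
  rw [e] at this
  exact ⟨_, this, ap_ap_inv g α⟩

theorem act_comm (hPL : ∀ g ∈ G, IsPL g) {E : Set ℝ} {u v e : PermR} (hu : u ∈ DE G E) (hv : v ∈ DE G E)
    (he : e ∈ (⁅Subgroup.closure {u, v}, Subgroup.closure {u, v}⁆ : Subgroup PermR)) :
    e ∈ DE G E ∧ act E e ⊆ act E u ∩ act E v := by
  constructor
  · have h : Subgroup.closure {u, v} ≤ DE G E := (Subgroup.closure_le _).2 (by
      rintro a (rfl | rfl)
      · exact hu
      · exact hv)
    exact DS_le_self (DE G E) 1 (Subgroup.commutator_mono h h he)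
  · have key : ∀ u v, u ∈ DE G E → v ∈ DE G E →
        e ∈ (⁅Subgroup.closure {u, v}, Subgroup.closure {u, v}⁆ : Subgroup PermR) →
        act E e ⊆ act E u := by
      rintro u v hu hv he α ⟨β, hc, z, h1, h2, h3⟩
      by_contra hcon
      apply h3
      have hu0 : ∀ z ∈ Ioo α β, ap u z = z := by
        intro z hz
        by_contra h
        exact hcon ⟨β, hc, z, hz.1, hz.2, h⟩
      exact AB hu0 (GZ_pres hPL (DE_GZ hc hu)) (GZ_pres hPL (DE_GZ hc hv)) he z ⟨h1, h2⟩
    exact subset_inter (key u v hu hv he) (key v u hv hu (by rwa [Set.pair_comm]))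

/-- The key local structure. -/
structure Core (G R : Subgroup PermR) (E : Set ℝ) (α β : ℝ) : Prop where
  fam : Fam G E
  comp : IsComp E α β
  le : R ≤ GZ G α β
  rt : ∀ x ∈ R, RT x α
  lt : ∀ x ∈ R, LT x β
  conj : ∀ g ∈ GZ G α β, ∀ x ∈ R, g⁻¹ * x * g ∈ R
  mov : ∀ z, α < z → z < β → ∃ x ∈ R, ap x z ≠ z
  blk : ∀ x ∈ R, (∀ z ∈ Ioo α β, ap x z = z) → ¬ NBy G x

theorem exists_core (hPL : ∀ g ∈ G, IsPL g) {X : Set PermR} (hXf : X.Finite) (hX : Subgroup.closure X = G)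
    (hns : ¬ IsSolvable ↥G) : ∃ R E α β, Core G R E α β := by
  obtain ⟨E, ⟨hF, w0, hw0, nbw0⟩, hmin⟩ := exists_min_adm hPL hXf hX hns
  -- minimal number of active comps
  set P : Set ℕ := {n | ∃ x ∈ DE G E, NBy G x ∧ (act E x).ncard = n} with hP
  have hPne : P.Nonempty := ⟨_, w0, hw0, nbw0, rfl⟩
  set n := sInf P with hn
  obtain ⟨w, hw, nbw, hwn⟩ : n ∈ P := Nat.sInf_mem hPne
  have hmn : ∀ x ∈ DE G E, NBy G x → n ≤ (act E x).ncard := fun x hx h => Nat.sInf_le ⟨x, hx, h, rfl⟩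
  set M : PermR → Prop := fun x => x ∈ DE G E ∧ (act E x).ncard = n with hM
  have heq : ∀ u v e : PermR, M u → M v →
      e ∈ (⁅Subgroup.closure {u, v}, Subgroup.closure {u, v}⁆ : Subgroup PermR) → NBy G e →
      act E u = act E v := by
    intro u v e hu hv he nbe
    obtain ⟨q1, q2⟩ := act_comm hPL hu.1 hv.1 he
    have hc := hmn e q1 nbe
    have e1 : act E e = act E u := eq_of_subset_of_ncard_le (q2.trans inter_subset_left)
      (by rw [hu.2]; exact hc) (act_finite hPL hu.1)
    have e2 : act E e = act E v := eq_of_subset_of_ncard_le (q2.trans inter_subset_right)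
      (by rw [hv.2]; exact hc) (act_finite hPL hv.1)
    rw [← e1, e2]
  have hMconj : ∀ g ∈ G, ∀ x, M x → M (g⁻¹ * x * g) := by
    intro g hg x hx
    refine ⟨DE_conj hF.1 hg x hx.1, ?_⟩
    rw [act_conj hPL hF.1 hg, ncard_image_of_injective _ (fun a b h => ap_inj g h), hx.2]
  have hcl : ∀ u v : PermR, M u → M v → Subgroup.closure {u, v} ≤ G := fun u v hu hv =>
    (Subgroup.closure_le _).2 (by
      rintro a (rfl | rfl)
      · exact DE_le_G hu.1
      · exact DE_le_G hv.1)
  have m1 : ∀ u v : PermR, u ∈ Subgroup.closure {u, v} := fun u v =>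
    Subgroup.subset_closure (Or.inl rfl)
  have m2 : ∀ u v : PermR, v ∈ Subgroup.closure {u, v} := fun u v =>
    Subgroup.subset_closure (Or.inr rfl)
  -- case a
  have h4a : ∀ x, M x → ∀ a b, IsOrbital x a b → ∀ h ∈ G, ap h a < b → a < ap h b →
      ¬ (ap h a = a ∧ ap h b = b) → ap h '' act E x = act E x := by
    intro x hx a b o h hh h1 h2 h3
    have hx' := hMconj h hh x hx
    obtain ⟨e, he, nbe⟩ := NBlem hPL (hcl _ _ hx hx') o hh h1 h2 h3 (m1 _ _) (m2 _ _)
    rw [← act_conj hPL hF.1 hh]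
    exact (heq _ _ e hx hx' he nbe).symm
  -- case b
  have h4b : ∀ u v, M u → M v → ∀ a b c d z, IsOrbital u a b → NB G a b → IsOrbital v c d →
      NB G c d → a < z → z < b → c < z → z < d → act E u = act E v := by
    intro u v hu hv a b c d z o nb o' nb' h1 h2 h3 h4
    by_cases hne : a = c ∧ b = d
    · obtain ⟨rfl, rfl⟩ := hne
      obtain ⟨h, hh, k1, k2, k3⟩ := nb
      have hv' := hMconj h hh v hv
      obtain ⟨e, he, nbe⟩ := pairNB hPL (hcl _ _ hu hv') (m1 _ _) (m2 _ _) o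
        (o'.conj (hPL h hh)) nb' (nb'.conj hPL hh) k2 k1 (fun q => k3 ⟨q.1.symm, q.2.symm⟩)
      rw [heq _ _ e hu hv' he nbe, act_conj hPL hF.1 hh]
      exact h4a v hv a b o' h hh k1 k2 k3
    · obtain ⟨e, he, nbe⟩ := pairNB hPL (hcl _ _ hu hv) (m1 _ _) (m2 _ _) o o' nb nb'
        (by linarith) (by linarith) hne
      exact heq _ _ e hu hv he nbe
  -- the groups R S
  set S := act E w with hS
  have hRfin := act_finite hPL hw
  let R : Subgroup PermR := DE G E ⊓ FixOut {z | ∃ α ∈ S, ∃ β, IsComp E α β ∧ α < z ∧ z < β}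
  have memR : ∀ x, x ∈ R ↔ x ∈ DE G E ∧ act E x ⊆ S := by
    intro x
    constructor
    · rintro ⟨h1, h2⟩
      refine ⟨h1, ?_⟩
      rintro α ⟨β, hc, z, z1, z2, z3⟩
      by_contra hcon
      apply z3
      apply h2
      rintro ⟨α', hα', β', hc', y1, y2⟩
      rw [(comp_unique hc' hc y1 y2 z1 z2).1] at hα'
      exact hcon hα'
    · rintro ⟨h1, h2⟩
      refine ⟨h1, fun z hz => ?_⟩
      by_contra hm
      have hzE : z ∈ E := by
        by_contra h; exact hm (DE_fix h1 h)
      obtain ⟨α, β, hc, z1, z2⟩ := hF.exists_comp hPL hzE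
      exact hz ⟨α, h2 ⟨β, hc, z, z1, z2, hm⟩, β, hc, z1, z2⟩
  have hRconj : ∀ g ∈ G, ap g '' S = S → ∀ x ∈ R, g⁻¹ * x * g ∈ R := by
    intro g hg hgS x hx
    rw [memR] at hx ⊢
    refine ⟨DE_conj hF.1 hg x hx.1, ?_⟩
    rw [act_conj hPL hF.1 hg, ← hgS]
    exact image_mono hx.2
  have hRM : ∀ x ∈ R, NBy G x → M x ∧ act E x = S := by
    intro x hx nb
    rw [memR] at hx
    have : act E x = S := eq_of_subset_of_ncard_le hx.2 (by rw [hwn]; exact hmn x hx.1 nb) hRfin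
    exact ⟨⟨hx.1, by rw [this, hwn]⟩, this⟩
  have hRle : R ≤ G := fun x hx => DE_le_G hx.1
  -- case c
  have hF0 := fam_union hPL M hMconj
  set F0 := {z | ∃ x ∈ G, M x ∧ ∃ a b, IsOrbital x a b ∧ NB G a b ∧ a < z ∧ z < b} with hF0def
  have hF0E : F0 = E := by
    apply hmin
    · refine ⟨hF0, ?_⟩
      have hnb : ∀ k, ∃ x ∈ DS R k, NBy G x := by
        intro k
        induction k with
        | zero => exact ⟨w, (memR w).2 ⟨hw, subset_rfl⟩, nbw⟩
        | succ k ih =>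
          obtain ⟨x, hx, nbx⟩ := ih
          obtain ⟨hMx, hSx⟩ := hRM x (DS_le_self _ _ hx) nbx
          obtain ⟨a, b, o, h, hh, k1, k2, k3⟩ := nbx
          have q := h4a x hMx a b o h hh k1 k2 k3
          rw [hSx] at q
          have hx' := DS_conj (hRconj h hh q) k x hx
          obtain ⟨e, he, nbe⟩ := NBlem hPL ((DS_le_self _ _).trans hRle) o hh k1 k2 k3 hx hx'
          exact ⟨e, he, nbe⟩
      have h1 := Tow hPL hXf hX hF0.1 hRle (fun x hx a b o hs nb => hs
        (fun z hz => ⟨x, hRle hx, (hRM x hx ⟨a, b, o, nb⟩).1, a, b, o, nb, hz.1, hz.2⟩))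
      have h2 : DS R ((BreakSet X).ncard + 1) ≤ QE G F0 := fun y hy =>
        ⟨hRle (DS_le_self _ _ hy), mem_FixOut_of_orb hPL (hRle (DS_le_self _ _ hy)) (h1 y hy)⟩
      have h3 : DS R ((BreakSet X).ncard + 1 + 1) ≤ DE G F0 := by
        rw [← DS_add]; exact DS_mono h2 1
      obtain ⟨x, hx, nbx⟩ := hnb ((BreakSet X).ncard + 1 + 1)
      exact ⟨x, h3 hx, nbx⟩
    · rintro z ⟨x, hx, hMx, a, b, o, -, h1, h2⟩
      by_contra h
      exact o.ne h1 h2 (DE_fix hMx.1 h)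
  -- case d
  obtain ⟨a0, b0, o0, nb0⟩ := id nbw
  have hab0 := o0.1
  set z0 := (a0 + b0)/2 with hz0
  have hz0E : z0 ∈ E := by
    by_contra h; exact o0.ne (by linarith) (by linarith) (DE_fix hw h)
  obtain ⟨α, β, hZ, hα, hβ⟩ := hF.exists_comp hPL hz0E
  have hαS : α ∈ S := ⟨β, hZ, z0, hα, hβ, o0.ne (by linarith) (by linarith)⟩
  have hMw : M w := ⟨hw, hwn⟩
  let O1 : Set ℝ := ⋃ p ∈ {p : ℝ × ℝ | ∃ x, M x ∧ act E x = S ∧ IsOrbital x p.1 p.2 ∧ NB G p.1 p.2}, Ioo p.1 p.2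
  let O2 : Set ℝ := ⋃ p ∈ {p : ℝ × ℝ | ∃ x, M x ∧ act E x ≠ S ∧ IsOrbital x p.1 p.2 ∧ NB G p.1 p.2}, Ioo p.1 p.2
  have hO1 : IsOpen O1 := isOpen_biUnion fun p _ => isOpen_Ioo
  have hO2 : IsOpen O2 := isOpen_biUnion fun p _ => isOpen_Ioo
  have hmO1 : ∀ z, z ∈ O1 ↔ ∃ x a b, M x ∧ act E x = S ∧ IsOrbital x a b ∧ NB G a b ∧ a < z ∧ z < b := by
    intro z
    simp only [O1, mem_iUnion, mem_setOf_eq, exists_prop, mem_Ioo]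
    constructor
    · rintro ⟨p, ⟨x, q1, q2, q3, q4⟩, q5, q6⟩; exact ⟨x, p.1, p.2, q1, q2, q3, q4, q5, q6⟩
    · rintro ⟨x, a, b, q1, q2, q3, q4, q5, q6⟩; exact ⟨(a, b), ⟨x, q1, q2, q3, q4⟩, q5, q6⟩
  have hmO2 : ∀ z, z ∈ O2 ↔ ∃ x a b, M x ∧ act E x ≠ S ∧ IsOrbital x a b ∧ NB G a b ∧ a < z ∧ z < b := by
    intro z
    simp only [O2, mem_iUnion, mem_setOf_eq, exists_prop, mem_Ioo]
    constructor
    · rintro ⟨p, ⟨x, q1, q2, q3, q4⟩, q5, q6⟩; exact ⟨x, p.1, p.2, q1, q2, q3, q4, q5, q6⟩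
    · rintro ⟨x, a, b, q1, q2, q3, q4, q5, q6⟩; exact ⟨(a, b), ⟨x, q1, q2, q3, q4⟩, q5, q6⟩
  have hdis : Disjoint O1 O2 := by
    rw [Set.disjoint_left]
    intro z hz1 hz2
    obtain ⟨x, a, b, q1, q2, q3, q4, q5, q6⟩ := (hmO1 z).1 hz1
    obtain ⟨x', a', b', q1', q2', q3', q4', q5', q6'⟩ := (hmO2 z).1 hz2
    exact q2' ((h4b x x' q1 q1' a b a' b' z q3 q4 q3' q4' q5 q6 q5' q6') ▸ q2)
  have hcov : Ioo α β ⊆ O1 ∪ O2 := by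
    intro z hz
    have : z ∈ F0 := by rw [hF0E]; exact hZ.2.1 hz
    obtain ⟨x, -, hMx, a, b, o, nb, h1, h2⟩ := this
    by_cases h : act E x = S
    · exact Or.inl ((hmO1 z).2 ⟨x, a, b, hMx, h, o, nb, h1, h2⟩)
    · exact Or.inr ((hmO2 z).2 ⟨x, a, b, hMx, h, o, nb, h1, h2⟩)
  have hsub : Ioo α β ⊆ O1 := isPreconnected_Ioo.subset_left_of_subset_union hO1 hO2 hdis hcov
    ⟨z0, ⟨hα, hβ⟩, (hmO1 z0).2 ⟨w, a0, b0, hMw, rfl, o0, nb0, by linarith, by linarith⟩⟩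
  have hRGZ : R ≤ GZ G α β := fun x hx => DE_GZ hZ hx.1
  have hQGZ : QE G E ≤ GZ G α β := fun x hx => ⟨hx.1, hx.2 _ hZ.2.2.1, hx.2 _ hZ.2.2.2⟩
  have hDc : ∀ x ∈ R, x ∈ (⁅GZ G α β, GZ G α β⁆ : Subgroup PermR) := fun x hx =>
    Subgroup.commutator_mono hQGZ hQGZ hx.1
  refine ⟨R, E, α, β, hF, hZ, hRGZ, fun x hx => (GZ_comm_RT hPL (hDc x hx)).1,
    fun x hx => (GZ_comm_RT hPL (hDc x hx)).2, ?_, ?_, ?_⟩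
  · intro g hg
    apply hRconj g hg.1
    obtain ⟨x, a, b, q1, q2, q3, q4, q5, q6⟩ := (hmO1 _).1 (hsub ⟨hα, hβ⟩)
    have hG := hPL g hg.1
    obtain ⟨x', a', b', q1', q2', q3', q4', q5', q6'⟩ :=
      (hmO1 _).1 (hsub ((GZ_pres hPL hg z0).2 ⟨hα, hβ⟩))
    have := h4b _ x' (hMconj g hg.1 x q1) q1' _ _ a' b' _ (q3.conj hG) (q4.conj hPL hg.1) q3' q4'
      (hG.lt.2 q5) (hG.lt.2 q6) q5' q6'
    rw [act_conj hPL hF.1 hg.1, q2, q2'] at this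
    exact this
  · intro z h1 h2
    obtain ⟨x, a, b, q1, q2, q3, q4, q5, q6⟩ := (hmO1 z).1 (hsub ⟨h1, h2⟩)
    exact ⟨x, (memR x).2 ⟨q1.1, q2.le⟩, q3.ne q5 q6⟩
  · intro x hx hfix nbx
    have := (hRM x hx nbx).2
    rw [← this] at hαS
    obtain ⟨β', hc, z, z1, z2, z3⟩ := hαS
    apply z3
    apply hfix
    refine ⟨z1, ?_⟩
    have hb := hZ.1
    have hb' := hc.1
    have : β' ≤ β := by
      by_contra h; exact hZ.2.2.2 (hc.2.1 ⟨hb, not_le.1 h⟩)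
    linarith

end adm
end PLPaper

open Set
open scoped commutatorElement
namespace PLPaper

section acc
variable {G : Subgroup PermR}

theorem acc_aff (hPL : ∀ g ∈ G, IsPL g) {E : Set ℝ} {α β : ℝ} {X : Set PermR} (hXf : X.Finite)
    (hX : Subgroup.closure X = G) (hE : Fam G E) (hc : IsComp E α β)
    (hRT : ∀ g ∈ GZ G α β, RT g α) :
    ∃ ε > 0, ∀ g ∈ G, ∃ m > 0, ∀ z ∈ Icc α (α + ε), ap g z = ap g α + m * (z - α) := by
  have hXG : ∀ x ∈ X, x ∈ G := fun x hx => hX ▸ Subgroup.subset_closure hx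
  set Y : Set PermR := X ∪ (fun x => x⁻¹) '' X with hY
  have hYG : ∀ x ∈ Y, x ∈ G := by
    rintro x (h | ⟨y, hy, rfl⟩)
    · exact hXG x h
    · exact inv_mem (hXG y hy)
  have hYf : Y.Finite := hXf.union (hXf.image _)
  have hB : (BreakSet Y).Finite := BreakSet_finite hYf fun x hx => hPL x (hYG x hx)
  have key : ∀ p ∈ BreakSet Y, ∀ᶠ ε in nhdsWithin (0:ℝ) (Ioi 0), ∀ h ∈ G, ap h α < p → p < ap h β →
      ∀ m > 0, ∀ e > α, (∀ z ∈ Icc α e, ap h z = ap h α + m * (z - α)) →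
        m * ε ≤ p - ap h α := by
    intro p hp
    by_cases hex : ∃ h ∈ G, ap h α < p ∧ p < ap h β
    · obtain ⟨h0, hh0, h1, h2⟩ := hex
      obtain ⟨e0, he0, m0, hm0, H0⟩ := (hPL h0 hh0).rightAff α
      have hd : 0 < (p - ap h0 α) / m0 := div_pos (by linarith) hm0
      filter_upwards [Ioo_mem_nhdsGT hd] with ε hε h hh h3 h4 m hm e he H
      have hu := comp_unique (hc.conj hPL hE.1 hh) (hc.conj hPL hE.1 hh0) h3 h4 h1 h2
      have hz : h * h0⁻¹ ∈ GZ G α β := by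
        apply hc.fix_of_fixl hPL hE.1 (mul_mem hh (inv_mem hh0))
        rw [ap_mul, hu.1, ap_inv_ap]
      obtain ⟨e1, he1, H1⟩ := hRT _ hz
      set z := min e (min e0 e1) with hzdef
      have hz1 : α < z := lt_min he (lt_min he0 he1)
      have q := H1 z ⟨hz1.le, (min_le_right _ _).trans (min_le_right _ _)⟩
      rw [ap_mul, ap_inv_eq, H z ⟨hz1.le, min_le_left _ _⟩,
        H0 z ⟨hz1.le, (min_le_right _ _).trans (min_le_left _ _)⟩, hu.1] at q
      have hmm : m = m0 := by
        have : (m - m0) * (z - α) = 0 := by linarith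
        rcases mul_eq_zero.1 this with h | h <;> linarith
      rw [hmm, hu.1]
      have := (lt_div_iff₀ hm0).1 hε.2
      linarith
    · refine Filter.Eventually.of_forall fun ε h hh h3 h4 => absurd ⟨h, hh, h3, h4⟩ hex
  have key2 := (Filter.eventually_all_finite hB).2 key
  obtain ⟨ε, hε, hε0⟩ := (key2.and (Ioo_mem_nhdsGT (sub_pos.2 hc.1))).exists
  refine ⟨ε, hε0.1, ?_⟩
  have step : ∀ x ∈ Y, ∀ g ∈ G, (∃ m > 0, ∀ z ∈ Icc α (α + ε), ap g z = ap g α + m * (z - α)) →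
      ∃ m > 0, ∀ z ∈ Icc α (α + ε), ap (g * x) z = ap (g * x) α + m * (z - α) := by
    rintro x hx g hg ⟨m, hm, H⟩
    have he : ap g (α + ε) = ap g α + m * ε := by
      rw [H _ ⟨by linarith [hε0.1], le_rfl⟩]; ring
    have hlt : ap g α < ap g (α + ε) := (hPL g hg).lt.2 (by linarith [hε0.1])
    have hgc := hc.conj hPL hE.1 hg
    have hlt2 : ap g (α + ε) < ap g β := (hPL g hg).lt.2 (by linarith [hε0.2])
    have hla : ∀ y ∈ Ioo (ap g α) (ap g (α + ε)), IsLocallyAffineAt x y := by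
      intro y hy
      by_contra hna
      have hyE : y ∈ E := hgc.2.1 ⟨hy.1, hy.2.trans hlt2⟩
      have hyb : y ∈ BreakSet Y := mem_biUnion hx ⟨hE.ioo hPL hyE, hna⟩
      have := hε y hyb g hg hy.1 (hy.2.trans hlt2) m hm (α + ε) (by linarith [hε0.1]) H
      have := hy.2
      linarith
    obtain ⟨m', hm', c, H'⟩ := (hPL x (hYG x hx)).affOn hlt hla
    refine ⟨m' * m, mul_pos hm' hm, fun z hz => ?_⟩
    rw [ap_mul, ap_mul, H' _ ⟨(hPL g hg).le.2 hz.1, (hPL g hg).le.2 hz.2⟩, H' _ ⟨le_rfl, hlt.le⟩,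
      H z hz]
    ring
  intro g hg
  rw [← hX] at hg
  induction hg using Subgroup.closure_induction_right with
  | one => exact ⟨1, one_pos, fun z hz => by rw [ap_one, ap_one]; ring⟩
  | mul_right x hx y hy ih => exact step y (Or.inl hy) x (hX ▸ hx) ih
  | mul_inv_cancel x hx y hy ih => exact step y⁻¹ (Or.inr ⟨y, hy, rfl⟩) x (hX ▸ hx) ih

theorem Core.not_RT (hPL : ∀ g ∈ G, IsPL g) {R : Subgroup PermR} {E : Set ℝ} {α β : ℝ} {X : Set PermR} (hXf : X.Finite)
    (hX : Subgroup.closure X = G) (hC : Core G R E α β) : ∃ g ∈ GZ G α β, ¬ RT g α := by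
  by_contra! hRT
  obtain ⟨ε, hε, H⟩ := acc_aff hPL hXf hX hC.fam hC.comp hRT
  have hab := hC.comp.1
  set z := min (α + ε) ((α + β)/2) with hz
  have h1 : α < z := lt_min (by linarith) (by linarith)
  have h2 : z < β := (min_le_right _ _).trans_lt (by linarith)
  obtain ⟨x, hx, hne⟩ := hC.mov z h1 h2
  obtain ⟨m, hm, Hm⟩ := H x (hC.le hx).1
  obtain ⟨e, he, He⟩ := hC.rt x hx
  have h3 : α < min e z := lt_min he h1
  have q := Hm (min e z) ⟨h3.le, (min_le_right _ _).trans (min_le_left _ _)⟩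
  have hfa := (hC.le hx).2.1
  rw [He _ ⟨h3.le, min_le_left _ _⟩, hfa] at q
  have hm1 : m = 1 := by
    have : (m - 1) * (min e z - α) = 0 := by linarith
    rcases mul_eq_zero.1 this with h | h <;> linarith
  apply hne
  rw [Hm z ⟨h1.le, min_le_left _ _⟩, hfa, hm1]; ring

end acc
end PLPaper

open Set
open scoped commutatorElement
namespace PLPaper

/-- local configuration producing Brin's group on one component -/
structure Loc (G : Subgroup PermR) (α β : ℝ) (w t : PermR) (m1 m2 d q : ℝ) : Prop where
  ht : t ∈ GZ G α β
  hw : w ∈ GZ G α β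
  a1 : α < m1
  md : m1 ≤ d
  dq : d < q
  qm : q ≤ m2
  mb : m2 < β
  wo : ∀ z, α < z → z < β → ap w z ≠ z → z ∈ Icc m1 m2
  t1 : d < ap t m1
  t2 : ap t m2 < q
  disp : ∀ m : ℤ, m ≠ 0 → ∀ z ∈ Ioo d q, ap (w ^ m) z ∉ Ioo d q

/-- conjugates -/
def CW (t w : PermR) (i : ℤ) : PermR := t ^ i * w * (t ^ i)⁻¹

theorem CW_zpow (t w : PermR) (i m : ℤ) : CW t w i ^ m = t ^ i * w ^ m * (t ^ i)⁻¹ := by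
  unfold CW; rw [conj_zpow]

theorem CW_shift (t w : PermR) (i : ℤ) : (t⁻¹)⁻¹ * CW t w i * t⁻¹ = CW t w (i + 1) := by
  unfold CW; rw [add_comm, zpow_add, zpow_one]; group

theorem CW_moved {t w : PermR} {i : ℤ} {z : ℝ} (h : ap (CW t w i) z ≠ z) :
    ap w (ap (t ^ i) z) ≠ ap (t ^ i) z := by
  intro h'
  apply h
  unfold CW
  rw [ap_mul, ap_mul, h', ap_inv_ap]

theorem ap_zpow_add (t : PermR) (i j : ℤ) (z : ℝ) : ap (t ^ (i + j)) z = ap (t ^ j) (ap (t ^ i) z) := by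
  rw [zpow_add, ap_mul]

theorem disj_comm {Z : Set ℝ} {u v : PermR} (hu : ∀ z, ap u z ∈ Z ↔ z ∈ Z)
    (hv : ∀ z, ap v z ∈ Z ↔ z ∈ Z) (h : ∀ z ∈ Z, ap u z = z ∨ ap v z = z) :
    ∀ z ∈ Z, ap v (ap u z) = ap u (ap v z) := by
  intro z hz
  by_cases h1 : ap u z = z
  · by_cases h2 : ap v z = z
    · rw [h1, h2, h1]
    · have := h (ap v z) ((hv z).2 hz)
      have h3 : ap u (ap v z) = ap v z := this.resolve_right fun h' => h2 (ap_inj v h')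
      rw [h1, h3]
  · have h2 : ap v z = z := (h z hz).resolve_left h1
    have h3 : ap v (ap u z) = ap u z :=
      (h (ap u z) ((hu z).2 hz)).resolve_left fun h' => h1 (ap_inj u h')
    rw [h2, h3]

theorem agree_zpow {S : Set ℝ} {a b : PermR} (h : ∀ z ∈ S, ap a z = ap b z)
    (hS : ∀ z, ap b z ∈ S ↔ z ∈ S) (m : ℤ) : ∀ z ∈ S, ap (a ^ m) z = ap (b ^ m) z := by
  have hSi : ∀ z ∈ S, ap b⁻¹ z ∈ S := fun z hz => by rw [← hS, ap_ap_inv]; exact hz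
  have hi : ∀ z ∈ S, ap a⁻¹ z = ap b⁻¹ z := by
    intro z hz
    rw [ap_inv_eq, h _ (hSi z hz), ap_ap_inv]
  induction m using Int.induction_on with
  | zero => intro z hz; simp [ap_one]
  | succ n ih =>
    intro z hz
    rw [add_comm, zpow_add, zpow_one, zpow_add, zpow_one, ap_mul, ap_mul, h z hz,
      ih _ ((hS z).2 hz)]
  | pred n ih =>
    intro z hz
    rw [sub_eq_add_neg, add_comm, zpow_add, zpow_neg_one, zpow_add, zpow_neg_one, ap_mul, ap_mul,
      hi z hz, ih _ (hSi z hz)]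

section loc
variable {G : Subgroup PermR}

theorem disp_of (hPL : ∀ g ∈ G, IsPL g) {w : PermR} (hw : w ∈ G) {q : ℝ} (h : ap w q < q) :
    ∀ m : ℤ, m ≠ 0 → ∀ z ∈ Ioo (ap w q) q, ap (w ^ m) z ∉ Ioo (ap w q) q := by
  have hn : ∀ n : ℕ, ap (w ^ n) q ≤ q := by
    intro n
    induction n with
    | zero => simp [ap_one]
    | succ n ih =>
      rw [pow_succ', ap_mul]
      exact ((hPL _ (pow_mem hw n)).le.2 h.le).trans ih
  have hpos : ∀ n : ℕ, ∀ z ∈ Ioo (ap w q) q, ap (w ^ (n + 1)) z ∉ Ioo (ap w q) q := by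
    intro n z hz hz'
    have h1 : ap (w ^ (n+1)) z < ap (w ^ (n+1)) q := (hPL _ (pow_mem hw _)).lt.2 hz.2
    rw [pow_succ] at h1
    have h2 : ap (w ^ n * w) q ≤ ap w q := by
      rw [ap_mul]; exact (hPL w hw).le.2 (hn n)
    rw [pow_succ] at hz'
    exact absurd hz'.1 (not_lt.2 (h1.le.trans h2))
  intro m hm z hz hz'
  rcases lt_or_gt_of_ne hm with h | h
  · obtain ⟨n, rfl⟩ : ∃ n : ℕ, m = -((n : ℤ) + 1) := ⟨(-m - 1).toNat, by omega⟩
    apply hpos n _ hz'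
    rw [zpow_neg]
    have : w ^ ((n:ℤ) + 1) = w ^ (n+1) := by exact_mod_cast zpow_natCast w (n+1)
    rw [this, ap_ap_inv]; exact hz
  · obtain ⟨n, rfl⟩ : ∃ n : ℕ, m = (n : ℤ) + 1 := ⟨(m - 1).toNat, by omega⟩
    have : w ^ ((n:ℤ) + 1) = w ^ (n+1) := by exact_mod_cast zpow_natCast w (n+1)
    rw [this] at hz'
    exact hpos n z hz hz'

theorem Core.exists_f (hPL : ∀ g ∈ G, IsPL g) {R : Subgroup PermR} {E : Set ℝ} {α β : ℝ} {X : Set PermR} (hXf : X.Finite)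
    (hX : Subgroup.closure X = G) (hC : Core G R E α β) :
    ∃ f ∈ GZ G α β, ∃ q, IsOrbital f α q ∧ q < β := by
  obtain ⟨g, hg, hnRT⟩ := hC.not_RT hPL hXf hX
  have hab := hC.comp.1
  set z0 := (α + β)/2 with hz0
  have ha0 : α < z0 := by linarith
  have hb0 : z0 < β := by linarith
  have hRPL : ∀ k ∈ R, IsPL k := fun k hk => hPL k (hC.le hk).1
  have hRz : ∀ k ∈ R, ∀ z, z ∈ Ioo α β → ap k z ∈ Ioo α β :=
    fun k hk z hz => (GZ_pres hPL (hC.le hk) z).2 hz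
  -- orbital bounded
  have main : ∀ g ∈ GZ G α β, ¬ RT g α → z0 < ap g z0 →
      ∃ f ∈ GZ G α β, ∃ q, IsOrbital f α q ∧ q < β := by
    intro g hg hnRT hgz
    obtain ⟨e, he⟩ := (hPL g hg.1).right_orbital hg.2.1 hnRT
    rcases lt_or_ge e β with heb | heb
    · exact ⟨g, hg, e, he, heb⟩
    obtain ⟨y, hy, hyz⟩ := INF hRPL hC.mov hb0 (fun h hh => (hRz h hh z0 ⟨ha0, hb0⟩).1.le)
      (y := ap g⁻¹ z0) ((GZ_pres hPL (inv_mem hg) z0).2 ⟨ha0, hb0⟩).1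
    obtain ⟨e', he', H'⟩ := hC.rt y hy
    obtain ⟨n, hn⟩ := orb_inf hPL hg.1 he ha0 (hb0.trans_le heb) he'
    set t := ap (g ^ n) z0 with ht
    have htz : t ∈ Ioo α β := (GZ_pres hPL (zpow_mem hg n) z0).2 ⟨ha0, hb0⟩
    have hgt : t < ap g t := by
      have : ap g t = ap (g ^ n) (ap g z0) := by
        rw [ht, ← ap_mul, ← ap_mul, mul_zpow_self, mul_self_zpow]
      rw [this]; exact (hPL _ (zpow_mem hg.1 n)).lt.2 hgz
    have hfG : y * g ∈ GZ G α β := mul_mem (hC.le hy) hg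
    have hf1 : t < ap (y * g) t := by rw [ap_mul, H' t ⟨htz.1.le, hn.le⟩]; exact hgt
    have hf2 : ap (y * g) z0 < z0 := by
      rw [ap_mul]
      have := (hPL g hg.1).lt.2 hyz
      rwa [ap_ap_inv] at this
    have hfc := (hPL _ hfG.1).cont
    have hfp : ∃ c ∈ Ioo α β, ap (y * g) c = c := by
      have hcont : ContinuousOn (fun z => ap (y*g) z - z) (uIcc t z0) := (hfc.sub continuous_id).continuousOn
      have := intermediate_value_uIcc hcont
      have h0 : (0:ℝ) ∈ uIcc (ap (y*g) t - t) (ap (y*g) z0 - z0) := by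
        rw [uIcc_comm]
        exact Icc_subset_uIcc ⟨by linarith, by linarith⟩
      obtain ⟨c, hc, hc'⟩ := this h0
      refine ⟨c, ?_, by simpa [sub_eq_zero] using hc'⟩
      exact (ordConnected_Ioo.uIcc_subset htz ⟨ha0, hb0⟩) hc
    obtain ⟨c, hc, hcf⟩ := hfp
    have hfn : ¬ RT (y * g) α := by
      intro h
      have := (hC.rt y hy).inv.mul h
      rw [inv_mul_cancel_left] at this
      exact hnRT this
    obtain ⟨q, hq⟩ := (hPL _ hfG.1).right_orbital hfG.2.1 hfn
    refine ⟨_, hfG, q, hq, ?_⟩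
    by_contra hqb
    exact hq.ne hc.1 (hc.2.trans_le (not_lt.1 hqb)) hcf
  rcases lt_trichotomy z0 (ap g z0) with h | h | h
  · exact main g hg hnRT h
  · obtain ⟨e, he⟩ := (hPL g hg.1).right_orbital hg.2.1 hnRT
    refine ⟨g, hg, e, he, ?_⟩
    by_contra hqb
    exact he.ne ha0 (hb0.trans_le (not_lt.1 hqb)) h.symm
  · refine main g⁻¹ (inv_mem hg) (fun h' => hnRT (by simpa using h'.inv)) ?_
    rw [← (hPL g hg.1).lt, ap_ap_inv]; exact h

theorem Core.exists_loc (hPL : ∀ g ∈ G, IsPL g) {R : Subgroup PermR} {E : Set ℝ} {α β : ℝ} {X : Set PermR} (hXf : X.Finite)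
    (hX : Subgroup.closure X = G) (hC : Core G R E α β) :
    ∃ w ∈ R, ∃ t m1 m2 d q, Loc G α β w t m1 m2 d q := by
  obtain ⟨f, hf, q, ho, hqb⟩ := hC.exists_f hPL hXf hX
  have hRPL : ∀ k ∈ R, IsPL k := fun k hk => hPL k (hC.le hk).1
  have haq := ho.1
  have hw : ∃ w ∈ R, ap w q < q := by
    obtain ⟨x, hx, hne⟩ := hC.mov q ho.1 hqb
    rcases lt_or_gt_of_ne hne with h | h
    · exact ⟨x, hx, h⟩
    · refine ⟨x⁻¹, inv_mem hx, ?_⟩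
      rw [← (hRPL x hx).lt, ap_ap_inv]; exact h
  obtain ⟨w, hw, hwq⟩ := hw
  have hwZ := hC.le hw
  obtain ⟨e1, he1, H1⟩ := hC.rt w hw
  obtain ⟨e2, he2, H2⟩ := hC.lt w hw
  have hd : α < ap w q := ((GZ_pres hPL hwZ q).2 ⟨haq, hqb⟩).1
  set m1 := min e1 (ap w q) with hm1
  set m2 := max e2 q with hm2
  have ham1 : α < m1 := lt_min he1 hd
  have hm2b : m2 < β := max_lt he2 hqb
  have hm12 : m1 < m2 := ((min_le_right _ _).trans_lt hwq).trans_le (le_max_right _ _)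
  have hRz : ∀ k ∈ R, ∀ z, z ∈ Ioo α β → ap k z ∈ Ioo α β :=
    fun k hk z hz => (GZ_pres hPL (hC.le hk) z).2 hz
  obtain ⟨k, hk, hkq⟩ := INF hRPL hC.mov hm2b
    (fun h hh => (hRz h hh m2 ⟨ham1.trans hm12, hm2b⟩).1.le) haq
  obtain ⟨n, hn⟩ := orb_sup hPL hf.1 ho (z := ap k m1) (hRz k hk m1 ⟨ham1, hm12.trans hm2b⟩).1
    (((hRPL k hk).lt.2 hm12).trans hkq) hwq
  refine ⟨w, hw, k * f ^ n, m1, m2, ap w q, q, mul_mem (hC.le hk) (zpow_mem hf n), hwZ, ham1,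
    min_le_right _ _, hwq, le_max_right _ _, hm2b, ?_, ?_, ?_, disp_of hPL hwZ.1 hwq⟩
  · intro z h1 h2 h3
    constructor
    · by_contra h
      exact h3 (H1 z ⟨h1.le, (not_le.1 h).le.trans (min_le_left _ _)⟩)
    · by_contra h
      exact h3 (H2 z ⟨(le_max_left _ _).trans (not_le.1 h).le, h2.le⟩)
  · rw [ap_mul]; exact hn
  · rw [ap_mul]
    have := (hPL _ (zpow_mem hf.1 n)).lt.2 hkq
    rwa [zpow_fix ho.fixr n] at this

variable {α β : ℝ} {w t : PermR} {m1 m2 d q : ℝ}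

theorem Loc.tpow (hPL : ∀ g ∈ G, IsPL g) (hL : Loc G α β w t m1 m2 d q) {n : ℤ} (hn : 0 < n) {z : ℝ}
    (hz : z ∈ Icc m1 m2) : ap (t ^ n) z ∈ Ioo d q := by
  have hT := hPL t hL.ht.1
  have h1 : ∀ z ∈ Icc m1 m2, ap t z ∈ Ioo d q := fun z hz =>
    ⟨hL.t1.trans_le (hT.le.2 hz.1), (hT.le.2 hz.2).trans_lt hL.t2⟩
  obtain ⟨k, rfl⟩ : ∃ k : ℕ, n = (k : ℤ) + 1 := ⟨(n - 1).toNat, by omega⟩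
  have : t ^ ((k:ℤ) + 1) = t ^ (k+1) := by exact_mod_cast zpow_natCast t (k+1)
  rw [this]
  clear this hn
  induction k with
  | zero => simpa using h1 z hz
  | succ k ih =>
    rw [pow_succ, ap_mul]
    exact h1 _ ⟨hL.md.trans ih.1.le, ih.2.le.trans hL.qm⟩

theorem Loc.CW_mem (hPL : ∀ g ∈ G, IsPL g) (hL : Loc G α β w t m1 m2 d q) {u : PermR} (hu : u ∈ GZ G α β) (i : ℤ) :
    CW t u i ∈ GZ G α β :=
  mul_mem (mul_mem (zpow_mem hL.ht i) hu) (inv_mem (zpow_mem hL.ht i))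

/-- displacement lemma -/
theorem Loc.displ (hPL : ∀ g ∈ G, IsPL g) (hL : Loc G α β w t m1 m2 d q) {u v : PermR} (hu : u ∈ GZ G α β)
    (hv : v ∈ GZ G α β) (uo : ∀ z, α < z → z < β → ap u z ≠ z → z ∈ Icc m1 m2)
    (vo : ∀ z, α < z → z < β → ap v z ≠ z → z ∈ Icc m1 m2) {i j k m : ℤ} (hi : i < k)
    (hj : j < k) (hm : m ≠ 0) : ∀ z ∈ Ioo α β,
      ap (CW t v j) (ap ((CW t w k ^ m)⁻¹ * CW t u i * CW t w k ^ m) z) =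
      ap ((CW t w k ^ m)⁻¹ * CW t u i * CW t w k ^ m) (ap (CW t v j) z) := by
  have pT : ∀ (n : ℤ) z, ap (t ^ n) z ∈ Ioo α β ↔ z ∈ Ioo α β := fun n z =>
    GZ_pres hPL (zpow_mem hL.ht n) z
  have hWk := zpow_mem (hL.CW_mem hPL hL.hw k) m
  apply disj_comm (GZ_pres hPL (mul_mem (mul_mem (inv_mem hWk) (hL.CW_mem hPL hu i)) hWk))
    (GZ_pres hPL (hL.CW_mem hPL hv j))
  intro z hz
  by_contra! hc
  obtain ⟨h1, h2⟩ := hc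
  have hvj := CW_moved h2
  have hz1 := vo _ ((pT j z).2 hz).1 ((pT j z).2 hz).2 hvj
  have hx : ap (t ^ k) z ∈ Ioo d q := by
    have := hL.tpow hPL (n := k - j) (by omega) hz1
    rwa [← ap_zpow_add, add_sub_cancel] at this
  -- u side
  set y := ap (CW t w k ^ m)⁻¹ z with hy
  have hyz : y ∈ Ioo α β := (GZ_pres hPL (inv_mem hWk) z).2 hz
  have h3 : ap (CW t u i) y ≠ y := by
    intro h
    apply h1
    rw [ap_mul, ap_mul, ← hy, h, hy, ap_ap_inv]
  have hui := CW_moved h3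
  have hz2 := uo _ ((pT i y).2 hyz).1 ((pT i y).2 hyz).2 hui
  have hx2 : ap (t ^ k) y ∈ Ioo d q := by
    have := hL.tpow hPL (n := k - i) (by omega) hz2
    rwa [← ap_zpow_add, add_sub_cancel] at this
  have : ap (t ^ k) y = ap (w ^ (-m)) (ap (t ^ k) z) := by
    rw [hy, ← zpow_neg, CW_zpow, ap_mul, ap_mul, ap_ap_inv]
  rw [this] at hx2
  exact hL.disp (-m) (by omega) _ hx hx2

theorem Loc.noncomm (hPL : ∀ g ∈ G, IsPL g) (hL : Loc G α β w t m1 m2 d q) : ¬ Commute (CW t w 0) (CW t w 1) := by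
  intro hc
  have h0 : CW t w 0 = w := by simp [CW]
  have hZ := GZ_pres hPL hL.ht
  have hWZ := GZ_pres hPL (hL.CW_mem hPL hL.hw 1)
  set z := (d + q)/2 with hz
  have hdq := hL.dq
  have hzD : z ∈ Ioo d q := ⟨by linarith, by linarith⟩
  have hzC : z ∈ Icc m1 m2 := ⟨hL.md.trans hzD.1.le, hzD.2.le.trans hL.qm⟩
  have hzZ : z ∈ Ioo α β := ⟨hL.a1.trans_le hzC.1, hzC.2.trans_lt hL.mb⟩
  have hmv : ap w z ≠ z := by
    intro h
    have := hL.disp 1 one_ne_zero z hzD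
    rw [zpow_one, h] at this
    exact this hzD
  have e1 : ap (t ^ (1:ℤ)) (ap (CW t w 1) z) = ap w (ap (t ^ (1:ℤ)) z) := by
    unfold CW; rw [ap_mul, ap_mul, ap_ap_inv]
  have h1 : ap (CW t w 1) z ∉ Icc m1 m2 := by
    intro h
    have h2 := hL.tpow hPL one_pos h
    rw [e1] at h2
    have := hL.disp 1 one_ne_zero _ (hL.tpow hPL one_pos hzC)
    rw [zpow_one w] at this
    exact this h2
  have h2 : ap w (ap (CW t w 1) z) = ap (CW t w 1) z := by
    by_contra h
    exact h1 (hL.wo _ ((hWZ z).2 hzZ).1 ((hWZ z).2 hzZ).2 h)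
  have h3 := congrArg (fun x => ap x z) hc.eq
  simp only [ap_mul, h0] at h3
  rw [h2] at h3
  exact hmv (ap_inj _ h3)

end loc
end PLPaper

open Set
open scoped commutatorElement
namespace PLPaper

/-- subgroup generated by the conjugates with nonpositive index -/
def TT (t w : PermR) : Subgroup PermR := Subgroup.closure {x | ∃ i : ℤ, i ≤ 0 ∧ x = CW t w i}

section deep
variable {G : Subgroup PermR}

variable {α β : ℝ} {w t : PermR} {m1 m2 d q : ℝ}

theorem Loc.TT_le (hPL : ∀ g ∈ G, IsPL g) {R : Subgroup PermR} {E : Set ℝ} (hC : Core G R E α β) (hw : w ∈ R)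
    (hL : Loc G α β w t m1 m2 d q) : TT t w ≤ R := by
  refine (Subgroup.closure_le _).2 ?_
  rintro x ⟨i, -, rfl⟩
  have := hC.conj _ (zpow_mem hL.ht (-i)) w hw
  simpa [CW] using this

theorem Loc.TT_supp (hPL : ∀ g ∈ G, IsPL g) (hL : Loc G α β w t m1 m2 d q) {x : PermR} (hx : x ∈ TT t w) :
    ∀ z, α < z → z < β → ap x z ≠ z → z ∈ Icc m1 m2 := by
  have : TT t w ≤ FixIn (Ioo α β \ Icc m1 m2) := by
    refine (Subgroup.closure_le _).2 ?_
    rintro x ⟨i, hi, rfl⟩ z ⟨hz, hz'⟩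
    by_contra hne
    have h1 := CW_moved hne
    have h2 := (GZ_pres hPL (zpow_mem hL.ht i) z).2 hz
    have h3 := hL.wo _ h2.1 h2.2 h1
    rcases hi.lt_or_eq with h | rfl
    · have := hL.tpow hPL (n := -i) (by omega) h3
      rw [← ap_zpow_add, add_neg_cancel, zpow_zero, ap_one] at this
      exact hz' ⟨hL.md.trans this.1.le, this.2.le.trans hL.qm⟩
    · rw [zpow_zero, ap_one] at h3; exact hz' h3
  intro z h1 h2 h3
  by_contra h
  exact h3 (this hx z ⟨⟨h1, h2⟩, h⟩)

theorem Loc.exists_deep_agree (hPL : ∀ g ∈ G, IsPL g) (hL : Loc G α β w t m1 m2 d q) (n : ℕ) :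
    ∃ c ∈ DS (TT t w) n, c ∈ GZ G α β ∧ ∀ z ∈ Ioo α β, ap c z =
      ap ((CW t w (-2 * n - 1))⁻¹ * ((CW t w (-2 * n))⁻¹ * CW t w (-2 * n - 1) * CW t w (-2 * n))) z := by
  set K : Subgroup (GZ G α β) := (FixIn (Ioo α β)).subgroupOf (GZ G α β) with hK
  have hKn : K.Normal := by
    constructor
    rintro x hx g z hz
    have hx' : ∀ z ∈ Ioo α β, ap (x : PermR) z = z := hx
    show ap ((g : PermR) * x * (g : PermR)⁻¹) z = z
    rw [ap_mul, ap_mul, hx' _ ((GZ_pres hPL g.2 z).2 hz), ap_inv_ap]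
  have heq : ∀ a b : GZ G α β, (QuotientGroup.mk' K a = QuotientGroup.mk' K b) ↔
      ∀ z ∈ Ioo α β, ap (a : PermR) z = ap (b : PermR) z := by
    intro a b
    rw [QuotientGroup.mk'_apply, QuotientGroup.mk'_apply, QuotientGroup.eq]
    have h0 : a⁻¹ * b ∈ K ↔ ∀ z ∈ Ioo α β, ap ((a : PermR)⁻¹ * b) z = z := Iff.rfl
    rw [h0]
    constructor
    · intro h z hz
      have := h (ap (a : PermR) z) ((GZ_pres hPL a.2 z).2 hz)
      rw [ap_mul, ap_inv_ap] at this
      exact this.symm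
    · intro h z hz
      rw [ap_mul, ← h _ ((GZ_pres hPL (inv_mem a.2) z).2 hz), ap_ap_inv]
  let W : ℤ → GZ G α β := fun i => ⟨CW t w i, hL.CW_mem hPL hL.hw i⟩
  have hB : BRel (fun i => QuotientGroup.mk' K (W i)) := by
    intro i j k m hi hj hm
    show _ * _ = _ * _
    rw [← map_zpow, ← map_inv, ← map_mul, ← map_mul, ← map_mul, ← map_mul, heq]
    intro z hz
    exact hL.displ hPL hL.hw hL.hw hL.wo hL.wo hi hj hm z hz
  let T : Subgroup (GZ G α β) := Subgroup.closure {x | ∃ i : ℤ, i ≤ 0 ∧ x = W i}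
  have hx := BRel_x_mem hB (T.map (QuotientGroup.mk' K))
    (fun i hi => ⟨W i, Subgroup.subset_closure ⟨i, hi, rfl⟩, rfl⟩) n (-2 * n) le_rfl
  rw [← DS_map] at hx
  obtain ⟨c, hc, hcx⟩ := hx
  have hT : T.map (GZ G α β).subtype = TT t w := by
    show (Subgroup.closure _).map _ = Subgroup.closure _
    rw [MonoidHom.map_closure]
    congr 1
    ext x
    constructor
    · rintro ⟨_, ⟨i, hi, rfl⟩, rfl⟩; exact ⟨i, hi, rfl⟩
    · rintro ⟨i, hi, rfl⟩; exact ⟨W i, ⟨i, hi, rfl⟩, rfl⟩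
  refine ⟨c, ?_, c.2, ?_⟩
  · rw [← hT, ← DS_map]
    exact ⟨c, hc, rfl⟩
  · rw [← map_inv, ← map_inv, ← map_mul, ← map_mul, ← map_mul, heq] at hcx
    exact hcx

theorem Loc.deep (hPL : ∀ g ∈ G, IsPL g) (hL : Loc G α β w t m1 m2 d q) (n : ℕ) :
    ∃ c ∈ DS (TT t w) n, ∃ t' d' q', Loc G α β c t' m1 m2 d' q' := by
  obtain ⟨c, hc, hcZ, hcx⟩ := hL.exists_deep_agree hPL n
  obtain ⟨j, hj, hj0⟩ : ∃ j : ℤ, j = -2 * n ∧ j ≤ 0 := ⟨_, rfl, by omega⟩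
  rw [← hj] at hcx
  have pT : ∀ (n : ℤ) z, ap (t ^ n) z ∈ Ioo α β ↔ z ∈ Ioo α β := fun n z =>
    GZ_pres hPL (zpow_mem hL.ht n) z
  have hTP : ∀ n : ℤ, IsPL (t ^ n) := fun n => hPL _ (zpow_mem hL.ht.1 n)
  have hm12 : m1 ≤ m2 := hL.md.trans (hL.dq.le.trans hL.qm)
  have hCZ : ∀ y ∈ Icc m1 m2, y ∈ Ioo α β := fun y hy => ⟨hL.a1.trans_le hy.1, hy.2.trans_lt hL.mb⟩
  have hwC : ∀ y, ap w y ∈ Icc m1 m2 ↔ y ∈ Icc m1 m2 := by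
    intro y
    by_cases h : ap w y = y
    · rw [h]
    · constructor
      · intro h1
        have := (GZ_pres hPL hL.hw y).1 (hCZ _ h1)
        exact hL.wo y this.1 this.2 h
      · intro h1
        have := (GZ_pres hPL hL.hw y).2 (hCZ _ h1)
        exact hL.wo _ this.1 this.2 (fun h' => h (ap_inj w h'))
  have hwiC : ∀ y, ap w⁻¹ y ∈ Icc m1 m2 ↔ y ∈ Icc m1 m2 := by
    intro y
    rw [← hwC, ap_ap_inv]
  set S : Set ℝ := {z | ap (t ^ (j-1)) z ∈ Icc m1 m2} with hS
  set b := (CW t w (j-1))⁻¹ with hb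
  have hbt : ∀ z, ap (t ^ (j-1)) (ap b z) = ap w⁻¹ (ap (t ^ (j-1)) z) := by
    intro z
    have : b = t ^ (j-1) * w⁻¹ * (t ^ (j-1))⁻¹ := by rw [hb]; unfold CW; group
    rw [this, ap_mul, ap_mul, ap_ap_inv]
  have hbm : ∀ (m : ℤ) z, ap (t ^ (j-1)) (ap (b ^ m) z) = ap (w ^ (-m)) (ap (t ^ (j-1)) z) := by
    intro m z
    have : b ^ m = t ^ (j-1) * w ^ (-m) * (t ^ (j-1))⁻¹ := by rw [hb, inv_zpow', CW_zpow]
    rw [this, ap_mul, ap_mul, ap_ap_inv]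
  have hbS : ∀ z, ap b z ∈ S ↔ z ∈ S := by
    intro z
    show ap (t ^ (j-1)) (ap b z) ∈ Icc m1 m2 ↔ _
    rw [hbt, hwiC]; rfl
  have hSZ : ∀ z ∈ S, z ∈ Ioo α β := fun z hz => (pT (j-1) z).1 (hCZ _ hz)
  have hSD : ∀ z ∈ S, ap (t ^ j) z ∈ Ioo d q := by
    intro z hz
    have := hL.tpow hPL one_pos hz
    rwa [← ap_zpow_add, sub_add_cancel] at this
  have hV : ∀ y ∈ S, ap ((CW t w j)⁻¹ * CW t w (j-1) * CW t w j) y = y := by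
    intro y hy
    by_contra hne
    set x := ap (CW t w j)⁻¹ y with hx
    have hxZ : x ∈ Ioo α β := (GZ_pres hPL (inv_mem (hL.CW_mem hPL hL.hw j)) y).2 (hSZ y hy)
    have h1 : ap (CW t w (j-1)) x ≠ x := by
      intro h
      apply hne
      rw [ap_mul, ap_mul, ← hx, h, hx, ap_ap_inv]
    have h2 := CW_moved h1
    have h3 : x ∈ S := hL.wo _ ((pT _ x).2 hxZ).1 ((pT _ x).2 hxZ).2 h2
    have h4 : ap (t ^ j) x = ap (w ^ (-1:ℤ)) (ap (t ^ j) y) := by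
      have : (CW t w j)⁻¹ = t ^ j * w ^ (-1:ℤ) * (t ^ j)⁻¹ := by unfold CW; group
      rw [hx, this, ap_mul, ap_mul, ap_ap_inv]
    have h5 := hSD x h3
    rw [h4] at h5
    exact hL.disp (-1) (by norm_num) _ (hSD y hy) h5
  have hcS : ∀ z ∈ S, ap c z = ap b z := by
    intro z hz
    rw [hcx z (hSZ z hz), ap_mul, hV _ ((hbS z).2 hz)]
  have hcm := fun m => agree_zpow hcS hbS m
  have hD : ∀ z, z ∈ Ioo (ap (t ^ (1-j)) d) (ap (t ^ (1-j)) q) ↔ ap (t ^ (j-1)) z ∈ Ioo d q := by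
    intro z
    have : z = ap (t ^ (1-j)) (ap (t ^ (j-1)) z) := by
      rw [← ap_zpow_add]; simp [ap_one]
    conv_lhs => rw [this]
    constructor
    · rintro ⟨h1, h2⟩; exact ⟨(hTP _).lt.1 h1, (hTP _).lt.1 h2⟩
    · rintro ⟨h1, h2⟩; exact ⟨(hTP _).lt.2 h1, (hTP _).lt.2 h2⟩
  have hDC : ∀ y ∈ Ioo d q, y ∈ Icc m1 m2 := fun y hy =>
    ⟨hL.md.trans hy.1.le, hy.2.le.trans hL.qm⟩
  refine ⟨c, hc, t ^ (2 - j), ap (t ^ (1-j)) d, ap (t ^ (1-j)) q, zpow_mem hL.ht _, hcZ, hL.a1,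
    ?_, (hTP _).lt.2 hL.dq, ?_, hL.mb, ?_, ?_, ?_, ?_⟩
  · exact hL.md.trans (hL.tpow hPL (n := 1 - j) (by omega) ⟨hL.md, hL.dq.le.trans hL.qm⟩).1.le
  · exact (hL.tpow hPL (n := 1 - j) (by omega) ⟨hL.md.trans hL.dq.le, hL.qm⟩).2.le.trans hL.qm
  · exact hL.TT_supp hPL (DS_le_self _ _ hc)
  · rw [show (2 - j : ℤ) = 1 + (1 - j) by ring, ap_zpow_add, (hTP _).lt, zpow_one]; exact hL.t1
  · rw [show (2 - j : ℤ) = 1 + (1 - j) by ring, ap_zpow_add, (hTP _).lt, zpow_one]; exact hL.t2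
  · intro m hm z hz hz'
    rw [hD] at hz hz'
    rw [hcm m z (hDC _ hz), hbm] at hz'
    exact hL.disp (-m) (by omega) _ hz hz'

end deep
end PLPaper

open Set
open scoped commutatorElement
namespace PLPaper

/-- depth filtration -/
def Nn (N : Subgroup PermR) : ℕ → Set PermR
  | 0 => N
  | j+1 => {x | x ∈ Nn N j ∧ ∀ a b, IsOrbital x a b →
      ∃ n ∈ Nn N j, ∃ c d, IsOrbital n c d ∧ c < a ∧ b < d}

theorem Nn_le (N : Subgroup PermR) (j : ℕ) : ∀ x ∈ Nn N j, x ∈ N := by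
  induction j with
  | zero => exact fun x hx => hx
  | succ j ih => exact fun x hx => ih x hx.1

/-- commutators of two elements modulo a normalized subgroup -/
theorem KN {N : Subgroup PermR} {u v : PermR} (hu : ∀ x, u⁻¹ * x * u ∈ N ↔ x ∈ N)
    (hv : ∀ x, v⁻¹ * x * v ∈ N ↔ x ∈ N) (h : u * v * u⁻¹ * v⁻¹ ∈ N) :
    (⁅Subgroup.closure {u, v}, Subgroup.closure {u, v}⁆ : Subgroup PermR) ≤ N := by
  let M : Subgroup PermR :=
    { carrier := {g | ∀ x, g⁻¹ * x * g ∈ N ↔ x ∈ N}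
      one_mem' := fun x => by simp
      mul_mem' := fun {a b} ha hb x => by
        rw [← ha x, ← hb (a⁻¹ * x * a)]; simp [mul_assoc]
      inv_mem' := fun {a} ha x => by
        rw [← ha]; simp [mul_assoc] }
  have hM : ∀ {g}, g ∈ M → ∀ x, g⁻¹ * x * g ∈ N ↔ x ∈ N := fun hg => hg
  let Cn : PermR → Subgroup PermR := fun l =>
    { carrier := {g | g ∈ M ∧ g * l * g⁻¹ * l⁻¹ ∈ N}
      one_mem' := ⟨one_mem M, by simp⟩
      mul_mem' := fun {a b} ha hb => ⟨mul_mem ha.1 hb.1, by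
        have h1 := (hM (inv_mem ha.1) _).2 hb.2
        have h2 := mul_mem h1 ha.2
        have : a * b * l * (a * b)⁻¹ * l⁻¹ =
          a⁻¹⁻¹ * (b * l * b⁻¹ * l⁻¹) * a⁻¹ * (a * l * a⁻¹ * l⁻¹) := by group
        rw [this]; exact h2⟩
      inv_mem' := fun {a} ha => ⟨inv_mem ha.1, by
        have h1 := (hM ha.1 _).2 (inv_mem ha.2)
        have : a⁻¹ * l * a⁻¹⁻¹ * l⁻¹ = a⁻¹ * (a * l * a⁻¹ * l⁻¹)⁻¹ * a := by group
        rw [this]; exact h1⟩ }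
  have hC : ∀ {l g}, g ∈ Cn l ↔ g ∈ M ∧ g * l * g⁻¹ * l⁻¹ ∈ N := Iff.rfl
  have hsw : ∀ {l g}, l ∈ M → g ∈ Cn l → l ∈ Cn g := by
    intro l g hl hg
    refine ⟨hl, ?_⟩
    have := inv_mem hg.2
    have e : l * g * l⁻¹ * g⁻¹ = (g * l * g⁻¹ * l⁻¹)⁻¹ := by group
    rw [e]; exact this
  have huM : u ∈ M := hu
  have hvM : v ∈ M := hv
  have huv : u ∈ Cn v := ⟨hu, h⟩
  have hself : ∀ g ∈ M, g ∈ Cn g := fun g hg => ⟨hg, by simp⟩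
  have h1 : Subgroup.closure {u, v} ≤ Cn v := (Subgroup.closure_le _).2 (by
    rintro x (rfl | rfl)
    · exact huv
    · exact hself _ hvM)
  have h2 : Subgroup.closure {u, v} ≤ Cn u := (Subgroup.closure_le _).2 (by
    rintro x (rfl | rfl)
    · exact hself _ huM
    · exact hsw hvM huv)
  rw [Subgroup.commutator_le]
  intro k hk l hl
  have h3 : Subgroup.closure {u, v} ≤ Cn k := (Subgroup.closure_le _).2 (by
    rintro x (rfl | rfl)
    · exact hsw huM (h2 hk)
    · exact hsw hvM (h1 hk))
  exact (hsw (h1 hk).1 (h3 hl)).2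

section F
variable {G : Subgroup PermR}

theorem F1a (hPL : ∀ g ∈ G, IsPL g) {u v : PermR} (hu : u ∈ G) (hv : v ∈ G)
    (hn : ∀ e ∈ (⁅Subgroup.closure {u, v}, Subgroup.closure {u, v}⁆ : Subgroup PermR), ¬ NBy G e)
    {a c d p r : ℝ} (o : IsOrbital u c d) (o' : IsOrbital v p r) (hp : p < a)
    (hr : a < r) (hmv : ∀ m : ℤ, ap u (ap (v ^ m) a) ≠ ap (v ^ m) a) : ¬ (p < c ∧ d < r) := by
  rintro ⟨h1, h2⟩
  have hK : Subgroup.closure {u, v} ≤ G := (Subgroup.closure_le _).2 (by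
    rintro x (rfl | rfl) <;> assumption)
  have huK : u ∈ Subgroup.closure {u, v} := Subgroup.subset_closure (by simp)
  have hvK : v ∈ Subgroup.closure {u, v} := Subgroup.subset_closure (by simp)
  have hcd := o.1
  have bad : ∀ e e', IsOrbital u e e' → e < r → r ≤ e' → False := by
    intro e e' oe h3 h4
    have hde : d ≤ e := by
      by_contra hlt
      exact oe.ne (not_le.1 hlt) (h2.trans_le h4) o.fixr
    obtain ⟨x, hx, hx'⟩ := CH hPL hK huK hvK oe o' h3 (by linarith) (by intro h; linarith [h.1])
      (by intro h; linarith [h.1]) (by intro h; linarith [h.2])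
    exact hn x hx hx'
  have hfr : ap u r = r := by
    by_contra hne
    obtain ⟨e, e', oe, h3, h4⟩ := (hPL u hu).exists_orbital hne
    exact bad e e' oe h3 h4.le
  have hLT : LT u r := by
    by_contra hne
    obtain ⟨e, oe⟩ := (hPL u hu).left_orbital hfr hne
    exact bad e r oe oe.1 le_rfl
  obtain ⟨e, he, H⟩ := hLT
  obtain ⟨m, hm⟩ := orb_sup hPL hv o' hp hr he
  refine hmv m (H _ ⟨hm.le, ?_⟩)
  have := (hPL _ (zpow_mem hv m)).lt.2 hr
  rw [zpow_fix o'.fixr] at this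
  exact this.le

theorem F1 (hPL : ∀ g ∈ G, IsPL g) {u v : PermR} (hu : u ∈ G) (hv : v ∈ G)
    (hn : ∀ e ∈ (⁅Subgroup.closure {u, v}, Subgroup.closure {u, v}⁆ : Subgroup PermR), ¬ NBy G e)
    {a c d p r : ℝ} (o : IsOrbital u c d) (o' : IsOrbital v p r) (hp : p < a)
    (hr : a < r) (hca : c < a) (had : a < d)
    (hc1 : ∀ m : ℤ, ap (v ^ m) (ap u a) = ap u (ap (v ^ m) a))
    (hc2 : ∀ m : ℤ, ap v (ap (u ^ m) a) = ap (u ^ m) (ap v a)) : c = p ∧ d = r := by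
  by_contra hne
  have hK : Subgroup.closure {u, v} ≤ G := (Subgroup.closure_le _).2 (by
    rintro x (rfl | rfl) <;> assumption)
  have huK : u ∈ Subgroup.closure {u, v} := Subgroup.subset_closure (by simp)
  have hvK : v ∈ Subgroup.closure {u, v} := Subgroup.subset_closure (by simp)
  obtain ⟨x, hx, hx'⟩ := CH hPL hK huK hvK o o' (by linarith) (by linarith) hne
    (F1a hPL hv hu (by rwa [Set.pair_comm]) o' o hca had (fun m h => by
      rw [hc2 m] at h
      exact o'.ne hp hr (ap_inj _ h)))
    (F1a hPL hu hv hn o o' hp hr (fun m h => by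
      rw [← hc1 m] at h
      exact o.ne hca had (ap_inj _ h)))
  exact hn x hx hx'

theorem F2 (hPL : ∀ g ∈ G, IsPL g) {P Q : Subgroup PermR} (hP : P ≤ G) (hQ : Q ≤ G)
    (hn : ∀ u ∈ P, ∀ v ∈ Q, ∀ e ∈ (⁅Subgroup.closure {u, v}, Subgroup.closure {u, v}⁆ :
      Subgroup PermR), ¬ NBy G e) {a : ℝ}
    (hc : ∀ u ∈ P, ∀ v ∈ Q, ap v (ap u a) = ap u (ap v a)) {u v : PermR}
    (hu : u ∈ (⁅P, P⁆ : Subgroup PermR)) (hua : ap u a ≠ a) (hv : v ∈ Q) : ap v a = a := by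
  by_contra hva
  have huP : u ∈ P := DS_succ_le P 0 hu
  obtain ⟨c, d, o, hca, had⟩ := (hPL u (hP huP)).exists_orbital hua
  obtain ⟨p, r, o', hp, hr⟩ := (hPL v (hQ hv)).exists_orbital hva
  have h1 := F1 hPL (hP huP) (hQ hv) (hn u huP v hv) o o' hp hr hca had
    (fun m => hc u huP _ (zpow_mem hv m)) (fun m => hc _ (zpow_mem huP m) v hv)
  obtain ⟨rfl, rfl⟩ := h1
  have : ∃ u' ∈ P, ap u' c ≠ c := by
    by_contra! h
    exact o.not_RT (RT_of_comm (K := P) (fun k hk => hPL k (hP hk)) h hu)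
  obtain ⟨u', hu', hne⟩ := this
  obtain ⟨e, e', oe, h3, h4⟩ := (hPL u' (hP hu')).exists_orbital hne
  have hcd := o.1
  have hde : d < e' := by
    by_contra hle
    have hK : Subgroup.closure {u', v} ≤ G := (Subgroup.closure_le _).2 (by
      rintro x (rfl | rfl)
      · exact hP hu'
      · exact hQ hv)
    obtain ⟨x, hx, hx'⟩ := CH hPL hK (Subgroup.subset_closure (by simp))
      (Subgroup.subset_closure (by simp)) oe o' (by linarith) h4 (fun h => by linarith [h.1])
      (fun h => hle h.2) (fun h => by linarith [h.1])
    exact hn u' hu' v hv x hx hx'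
  have h1 := F1 hPL (hP hu') (hQ hv) (hn u' hu' v hv) oe o' hp hr (h3.trans hca) (had.trans hde)
    (fun m => hc u' hu' _ (zpow_mem hv m)) (fun m => hc _ (zpow_mem hu' m) v hv)
  linarith [h1.1]

theorem RT_conj {x u : PermR} (hu : IsPL u) {a : ℝ} (h : RT x (ap u a)) : RT (u * x * u⁻¹) a := by
  obtain ⟨e, he, H⟩ := h
  refine ⟨ap u⁻¹ e, by rw [gt_iff_lt, ← hu.lt, ap_ap_inv]; exact he, fun z hz => ?_⟩
  rw [ap_mul, ap_mul, H _ ⟨hu.le.2 hz.1, by have := hu.le.2 hz.2; rwa [ap_ap_inv] at this⟩,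
    ap_inv_ap]

theorem F3 (hPL : ∀ g ∈ G, IsPL g) {P Q : Subgroup PermR} (hP : P ≤ G) (hQ : Q ≤ G)
    (hn : ∀ u ∈ P, ∀ v ∈ Q, ∀ e ∈ (⁅Subgroup.closure {u, v}, Subgroup.closure {u, v}⁆ :
      Subgroup PermR), ¬ NBy G e) {a : ℝ}
    (hc : ∀ u ∈ P, ∀ v ∈ Q, ap v (ap u a) = ap u (ap v a)) {u v : PermR}
    (hu : u ∈ (⁅P, P⁆ : Subgroup PermR)) (hv : v ∈ (⁅Q, Q⁆ : Subgroup PermR)) :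
    RT (u * v * u⁻¹ * v⁻¹) a := by
  have huP : u ∈ P := DS_succ_le P 0 hu
  have hvQ : v ∈ Q := DS_succ_le Q 0 hv
  by_cases hua : ap u a = a
  · by_cases hva : ap v a = a
    · exact RT_comm (hPL u (hP huP)) (hPL v (hQ hvQ)) hua hva
    · have hall : ∀ u' ∈ P, ap u' a = a := fun u' hu' =>
        F2 hPL hQ hP (fun x hx y hy => by rw [Set.pair_comm]; exact hn y hy x hx)
          (fun x hx y hy => (hc y hy x hx).symm) hv hva hu'
      have h1 : RT u a := RT_of_comm (K := P) (fun k hk => hPL k (hP hk)) hall hu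
      have h2 : RT u (ap v a) := RT_of_comm (K := P) (fun k hk => hPL k (hP hk))
        (fun k hk => by rw [← hc k hk v hvQ, hall k hk]) hu
      have := h1.mul (RT_conj (hPL v (hQ hvQ)) h2.inv)
      simpa [mul_assoc] using this
  · have hall : ∀ v' ∈ Q, ap v' a = a := fun v' hv' => F2 hPL hP hQ hn hc hu hua hv'
    have h1 : RT v a := RT_of_comm (K := Q) (fun k hk => hPL k (hQ hk)) hall hv
    have h2 : RT v (ap u a) := RT_of_comm (K := Q) (fun k hk => hPL k (hQ hk))
        (fun k hk => by rw [hc u huP k hk, hall k hk]) hv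
    exact (RT_conj (hPL u (hP huP)) h2).mul h1.inv

theorem F_main (hPL : ∀ g ∈ G, IsPL g) {N U V : Subgroup PermR} (hN : N ≤ G) (hU : U ≤ G) (hV : V ≤ G)
    (hNB : ∀ x ∈ N, ¬ NBy G x) (hUN : ∀ u ∈ U, ∀ x ∈ N, u⁻¹ * x * u ∈ N)
    (hVN : ∀ u ∈ V, ∀ x ∈ N, u⁻¹ * x * u ∈ N)
    (hUV : ∀ u ∈ U, ∀ v ∈ V, u * v * u⁻¹ * v⁻¹ ∈ N) (j : ℕ) :
    ∀ u ∈ DS U j, ∀ v ∈ DS V j, u * v * u⁻¹ * v⁻¹ ∈ Nn N j := by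
  have iff_of : ∀ W : Subgroup PermR, (∀ u ∈ W, ∀ x ∈ N, u⁻¹ * x * u ∈ N) →
      ∀ u ∈ W, ∀ x, u⁻¹ * x * u ∈ N ↔ x ∈ N := by
    intro W hW u hu x
    refine ⟨fun h => ?_, hW u hu x⟩
    have := hW _ (inv_mem hu) _ h
    simpa [mul_assoc] using this
  have hn : ∀ u ∈ U, ∀ v ∈ V, ∀ e ∈ (⁅Subgroup.closure {u, v}, Subgroup.closure {u, v}⁆ :
      Subgroup PermR), ¬ NBy G e := fun u hu v hv e he =>
    hNB e (KN (iff_of U hUN u hu) (iff_of V hVN v hv) (hUV u hu v hv) he)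
  induction j with
  | zero => exact hUV
  | succ j ih =>
    intro u hu v hv
    have hy := ih u (DS_succ_le U j hu) v (DS_succ_le V j hv)
    refine ⟨hy, fun a b o => ?_⟩
    by_contra! hmax
    have hyN := Nn_le N j _ hy
    have hblk : ¬ NB G a b := fun h => hNB _ hyN ⟨a, b, o, h⟩
    have hfix : ∀ n ∈ Nn N j, ap n a = a := by
      intro n hnn
      by_contra hne
      obtain ⟨c, d, oc, h1, h2⟩ := block_in_orbital hPL o.1 hblk (hN (Nn_le N j n hnn)) hne
      exact absurd h2 (not_lt.2 (hmax n hnn c d oc h1))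
    refine o.not_RT (F3 hPL (P := DS U j) (Q := DS V j) ((DS_le_self U j).trans hU)
      ((DS_le_self V j).trans hV) (fun u hu v hv => hn u (DS_le_self U j hu) v (DS_le_self V j hv))
      (fun u hu v hv => ?_) hu hv)
    rw [← comm_fix_iff']
    exact hfix _ (ih u hu v hv)

theorem Nn_chain (hPL : ∀ g ∈ G, IsPL g) {N : Subgroup PermR} (hN : N ≤ G) (n : ℕ) :
    ∀ y ∈ Nn N n, ∀ a₀ b₀, IsOrbital y a₀ b₀ →
    ∃ (x : ℕ → PermR) (a b : ℕ → ℝ), x 0 = y ∧ a 0 = a₀ ∧ b 0 = b₀ ∧ (∀ i ≤ n, x i ∈ N) ∧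
      (∀ i ≤ n, IsOrbital (x i) (a i) (b i)) ∧
      (∀ i < n, a (i+1) < a i ∧ b i < b (i+1)) := by
  induction n with
  | zero =>
    intro y hy a₀ b₀ ho
    exact ⟨fun _ => y, fun _ => a₀, fun _ => b₀, rfl, rfl, rfl, fun _ _ => hy, fun _ _ => ho,
      fun i hi => absurd hi (Nat.not_lt_zero _)⟩
  | succ n ih =>
    intro y hy a₀ b₀ ho
    obtain ⟨h, hh, c, d, o, h1, h2⟩ := hy.2 a₀ b₀ ho
    obtain ⟨x, a, b, e1, e2, e3, q1, q2, q4⟩ := ih h hh c d o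
    refine ⟨fun i => Nat.casesOn i y x, fun i => Nat.casesOn i a₀ a, fun i => Nat.casesOn i b₀ b,
      rfl, rfl, rfl, ?_, ?_, ?_⟩
    · rintro (_ | i) hi
      · exact Nn_le N _ y hy
      · exact q1 i (by omega)
    · rintro (_ | i) hi
      · exact ho
      · exact q2 i (by omega)
    · rintro (_ | i) hi
      · show a 0 < a₀ ∧ b₀ < b 0
        rw [e2, e3]; exact ⟨h1, h2⟩
      · exact q4 i (by omega)

theorem F_comm (hPL : ∀ g ∈ G, IsPL g) {X : Set PermR} (hXf : X.Finite) (hX : Subgroup.closure X = G)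
    {N U V : Subgroup PermR} (hN : N ≤ G) (hU : U ≤ G) (hV : V ≤ G)
    (hNB : ∀ x ∈ N, ¬ NBy G x) (hUN : ∀ u ∈ U, ∀ x ∈ N, u⁻¹ * x * u ∈ N)
    (hVN : ∀ u ∈ V, ∀ x ∈ N, u⁻¹ * x * u ∈ N)
    (hUV : ∀ u ∈ U, ∀ v ∈ V, u * v * u⁻¹ * v⁻¹ ∈ N) {u v : PermR}
    (hu : u ∈ DS U ((BreakSet X).ncard + 1)) (hv : v ∈ DS V ((BreakSet X).ncard + 1)) :
    Commute u v := by
  have hy := F_main hPL hN hU hV hNB hUN hVN hUV _ u hu v hv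
  have : u * v * u⁻¹ * v⁻¹ = 1 := by
    refine eq_one_of_no_orbital hPL (hN (Nn_le N _ _ hy)) fun a b o => ?_
    obtain ⟨x, a, b, -, -, -, q1, q2, q4⟩ := Nn_chain hPL hN _ _ hy a b o
    have := lemmaT hPL hXf hX (E := ∅) (fun _ _ _ h => h.elim) (R := N) (fun x hx => hN hx)
      (fun x hx a b o _ h => hNB x hx ⟨a, b, o, h⟩) _ x a b q1 q2
      (fun i hi h => h (⟨by linarith [(q2 i hi).1], by linarith [(q2 i hi).1]⟩ :
        (a i + b i)/2 ∈ Ioo (a i) (b i))) q4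
    omega
  have h2 : u * v = v * u := by
    have := congrArg (fun x => x * v * u) this
    simpa [mul_assoc] using this
  exact h2

end F
end PLPaper

open Set
open scoped commutatorElement
namespace PLPaper

section fin
variable {G : Subgroup PermR}

theorem Core.embed (hPL : ∀ g ∈ G, IsPL g) {R : Subgroup PermR} {E : Set ℝ} {α β : ℝ} {X : Set PermR} (hXf : X.Finite)
    (hX : Subgroup.closure X = G) (hC : Core G R E α β) :
    ∃ φ : BrinB →* ↥G, Function.Injective φ := by
  obtain ⟨w, hw, t, m1, m2, d, q, hL⟩ := hC.exists_loc hPL hXf hX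
  obtain ⟨c, hc, t', d', q', hL'⟩ := hL.deep hPL ((BreakSet X).ncard + 1)
  have hTR := hL.TT_le hPL hC hw
  have hRG : R ≤ G := fun x hx => (hC.le hx).1
  set N : Subgroup PermR := R ⊓ FixIn (Ioo α β) with hN
  have hNR : ∀ u ∈ R, ∀ x ∈ N, u⁻¹ * x * u ∈ N := by
    rintro u hu x ⟨hx1, hx2⟩
    have hR : u⁻¹ * x * u ∈ R := mul_mem (mul_mem (inv_mem hu) hx1) hu
    refine ⟨hR, fun z hz => ?_⟩
    rw [ap_mul, ap_mul, hx2 _ ((GZ_pres hPL (inv_mem (hC.le hu)) z).2 hz), ap_ap_inv]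
  have hB : BRel (CW t' c) := by
    intro i j k m hi hj hm
    set Y := CW t' c k ^ m with hY
    have hYZ : Y ∈ GZ G α β := zpow_mem (hL'.CW_mem hPL hL'.hw k) m
    set h := (t' ^ i)⁻¹ * Y with hh
    have hhZ : h ∈ GZ G α β := mul_mem (inv_mem (zpow_mem hL'.ht i)) hYZ
    have hform : ∀ x, h⁻¹ * x * h = Y⁻¹ * CW t' x i * Y := by
      intro x; rw [hh]; unfold CW; group
    set U := (TT t w).map (MulAut.conj h⁻¹).toMonoidHom with hU
    set V := (TT t w).map (MulAut.conj (t' ^ j)).toMonoidHom with hV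
    have hUf : ∀ x : PermR, (MulAut.conj h⁻¹).toMonoidHom x = Y⁻¹ * CW t' x i * Y := by
      intro x
      rw [← hform]
      show h⁻¹ * x * h⁻¹⁻¹ = _
      rw [inv_inv]
    have hVf : ∀ x : PermR, (MulAut.conj (t' ^ j)).toMonoidHom x = CW t' x j := by
      intro x
      rfl
    have hUR : U ≤ R := by
      rintro _ ⟨x, hx, rfl⟩
      rw [hUf, ← hform]
      exact hC.conj h hhZ x (hTR hx)
    have hVR : V ≤ R := by
      rintro _ ⟨x, hx, rfl⟩
      rw [hVf]
      have := hC.conj _ (inv_mem (zpow_mem hL'.ht j)) x (hTR hx)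
      simpa [CW] using this
    apply F_comm hPL hXf hX (N := N) (U := U) (V := V) (fun x hx => hRG hx.1) (hUR.trans hRG)
      (hVR.trans hRG) (fun x hx => hC.blk x hx.1 hx.2) (fun u hu => hNR u (hUR hu))
      (fun u hu => hNR u (hVR hu))
    · intro u hu v hv
      have hR : u * v * u⁻¹ * v⁻¹ ∈ R :=
        mul_mem (mul_mem (mul_mem (hUR hu) (hVR hv)) (inv_mem (hUR hu))) (inv_mem (hVR hv))
      refine ⟨hR, fun z hz => ?_⟩
      rw [comm_fix_iff']
      obtain ⟨x, hx, rfl⟩ := hu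
      obtain ⟨y, hy, rfl⟩ := hv
      rw [hUf, hVf]
      exact hL'.displ hPL (hC.le (hTR hx)) (hC.le (hTR hy)) (hL.TT_supp hPL hx)
        (hL.TT_supp hPL hy) hi hj hm z hz
    · rw [hU, ← DS_map]
      exact ⟨c, hc, hUf c⟩
    · rw [hV, ← DS_map]
      exact ⟨c, hc, hVf c⟩
  have hWG : ∀ i, CW t' c i ∈ G := fun i => (hL'.CW_mem hPL hL'.hw i).1
  refine exists_embed (Γ := G) (w := fun i => ⟨CW t' c i, hWG i⟩)
    (s := ⟨t'⁻¹, inv_mem hL'.ht.1⟩) ?_ ?_ ?_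
  · intro i
    exact Subtype.ext (CW_shift t' c i)
  · intro i j k m hi hj hm
    exact Subtype.ext (hB i j k m hi hj hm).eq
  · intro hcm
    exact hL'.noncomm hPL (congrArg Subtype.val hcm.eq)

end fin
end PLPaper

namespace PLPaper

theorem statement3 (G : Subgroup PermR) (hPL : ∀ g ∈ G, IsPL g) (hfg : Group.FG ↥G) :
    ¬ IsSolvable ↥G ↔ ∃ φ : BrinB →* ↥G, Function.Injective φ := by
  constructor
  · intro hns
    obtain ⟨X, hX⟩ := (Group.fg_iff_subgroup_fg G).1 hfg
    obtain ⟨R, E, α, β, hC⟩ := exists_core hPL X.finite_toSet hX hns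
    exact hC.embed hPL X.finite_toSet hX
  · rintro ⟨φ, hφ⟩ hs
    have hs' : IsSolvable ↥G := hs
    haveI : Group.IsSolvable ↥G := hs'
    exact Brin_not_solvable (solvable_of_solvable_injective hφ)

end PLPaper
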